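/- arXiv:1904.03818 — 3 statements merged into one kernel-verified Lean document; each statement's English description precedes it below -/
import Mathlib

section
/- Let k be a positive integer and let G be a 3-connected non-bipartite (finite simple) graph. If the minimum degree of G is at least k + 1, then G contains k cycles which have consecutive lengths or satisfy the length condition. -/
/-!
The cycles come from a statement about paths. Call a pair of roots `x`, `y` in a vertex set `U`
*rooted 2-connected* (`Rt`) if every nonempty set of non-roots has edges to at least two vertices
outside it. The path theorem `t0` says: if `k ≥ 1`, there is a vertex besides the roots, and every
vertex besides the roots has degree at least `k + 1`, then there are `k` paths from `x` to `y` whose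
lengths form an arithmetic progression with difference `1` or `2` and first term at least `2`
(`Adm`). In a 3-connected graph any two distinct vertices are such roots, so for an edge `xy` the
theorem applies to `G - xy`, and the edge `xy` closes the `k` paths to `k` cycles.

The path theorem is proved by induction on the number of vertices.

* *Separators.* If a set of non-roots has only the outside neighbours `p` and `q`, induction applies
  to it with roots `p` and `q`, and the paths found extend to the roots (`ML`).
* *Contraction.* Let `S` be a set around `x` and `E ⊆ S` such that `x` reaches every vertex of `E`
  inside `S` by `m` paths with a common progression of lengths. Replace `S` by the single vertex
  `x` with the neighbourhood of `E` (`contr`), and keep only the vertices `D` that reach some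
  vertex `q` outside `S`. If every vertex of `D` loses at most `m - 1` from its degree, induction
  gives `k + 1 - m` paths from `x` to `q`. Since progressions with differences in `{1, 2}` add up to
  one with `m + k - 1` terms from `m` and `k` terms (`ap_sum`), this gives `k` paths in `G`
  (`CL.use0`). A path from `q` to `y` finishes them. So in a minimal counterexample no vertex of `D`
  exists, and no vertex outside `S` is adjacent to `q` (`St.main`).

Pieces with many path lengths inside are cliques (difference `1`) and complete bipartite graphs
(difference `2`). In a minimal counterexample with `k ≥ 3`, contracting maximal cliques shows that
neither a root nor a neighbour of a root lies in a triangle (`C0.no_tri`, `C0.no_tri_nb`).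
Contracting a complete bipartite graph between a maximal set `A` around `x` with at least `|A|`
common neighbours, and the set of these common neighbours, shows that the two roots have the same
neighbours (`C0.twins`). A last contraction, around one root towards a neighbour `u` of the other
(`C0.twin_core`), leaves only a complete bipartite graph, which contains the paths wanted
(`C0.false`).

The case `k = 2` is the induction basis and is proved in a stronger form `t2`, which allows an
exceptional vertex of arbitrary degree. There a triangle or 4-cycle through a root yields two paths
directly, and otherwise contracting the neighbourhood of a root costs no degree.
-/

open SimpleGraph

/-- A finite simple graph is 3-connected if it has at least 4 vertices and remains
connected after deleting any set of at most 2 vertices. -/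
def ThreeConnected {V : Type*} [Fintype V] (G : SimpleGraph V) : Prop :=
  4 ≤ Fintype.card V ∧
    ∀ s : Set V, s.ncard ≤ 2 → (G.induce sᶜ).Connected

/-- A set of vertices is independent if it spans no edge. -/
def IndepSet {V : Type*} (G : SimpleGraph V) (A : Set V) : Prop :=
  ∀ a ∈ A, ∀ b ∈ A, ¬ G.Adj a b

/-- A graph is non-bipartite if its vertex set cannot be partitioned into two
independent sets. -/
def NonBipartite {V : Type*} (G : SimpleGraph V) : Prop :=
  ¬ ∃ A B : Set V, A ∪ B = Set.univ ∧ A ∩ B = ∅ ∧ IndepSet G A ∧ IndepSet G B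

/-- The sequence of lengths `f 1, …, f k` satisfies the length condition:
`f 1 ≥ 2` and consecutive lengths differ by exactly `2`. -/
def LengthSeq (k : ℕ) (f : ℕ → ℕ) : Prop :=
  2 ≤ f 1 ∧ ∀ i, 1 ≤ i → i ≤ k - 1 → f (i + 1) = f i + 2

/-- The sequence of lengths `f 1, …, f k` has consecutive lengths:
`f 1 ≥ 2` and consecutive lengths differ by exactly `1`. -/
def ConsecSeq (k : ℕ) (f : ℕ → ℕ) : Prop :=
  2 ≤ f 1 ∧ ∀ i, 1 ≤ i → i ≤ k - 1 → f (i + 1) = f i + 1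

namespace CyclePf
variable {V : Type*} [DecidableEq V]

/-! ### Paths inside a vertex set and rooted 2-connectivity -/

open Classical in
/-- The neighbours of `v` inside `U`. -/
noncomputable def nb (G : SimpleGraph V) (U : Finset V) (v : V) : Finset V :=
  U.filter (fun w => G.Adj v w)

lemma mem_nb {G : SimpleGraph V} {U : Finset V} {v w : V} :
    w ∈ nb G U v ↔ w ∈ U ∧ G.Adj v w := by
  simp [nb]

/-- `HP G n U x y`: there is a path of length `n` from `x` to `y` in `G` all of whose vertices lie
in `U`. The first vertex is removed from the allowed set at each step, so no vertex repeats. -/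
def HP (G : SimpleGraph V) : ℕ → Finset V → V → V → Prop
  | 0, U, x, y => x ∈ U ∧ x = y
  | n + 1, U, x, y => x ∈ U ∧ ∃ z, G.Adj x z ∧ HP G n (U.erase x) z y

lemma HP.mono {G : SimpleGraph V} {n : ℕ} {U U' : Finset V} {x y : V}
    (h : HP G n U x y) (hU : U ⊆ U') : HP G n U' x y := by
  induction n generalizing U U' x with
  | zero => exact ⟨hU h.1, h.2⟩
  | succ n ih =>
    obtain ⟨hx, z, hz, h⟩ := h
    exact ⟨hU hx, z, hz, ih h (Finset.erase_subset_erase x hU)⟩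

lemma HP.monoG {G G' : SimpleGraph V} {n : ℕ} {U : Finset V} {x y : V}
    (h : HP G n U x y) (hG : ∀ u ∈ U, ∀ v ∈ U, G.Adj u v → G'.Adj u v) : HP G' n U x y := by
  induction n generalizing U x with
  | zero => exact h
  | succ n ih =>
    obtain ⟨hx, z, hz, h⟩ := h
    have hzU : z ∈ U.erase x := by
      cases n with
      | zero => exact h.1
      | succ n => exact h.1
    exact ⟨hx, z, hG _ hx _ (Finset.mem_of_mem_erase hzU) hz, ih h fun u hu v hv =>
      hG u (Finset.mem_of_mem_erase hu) v (Finset.mem_of_mem_erase hv)⟩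

lemma HP.mem_left {G : SimpleGraph V} {n : ℕ} {U : Finset V} {x y : V}
    (h : HP G n U x y) : x ∈ U := by
  cases n with
  | zero => exact h.1
  | succ n => exact h.1

lemma HP.mem_right {G : SimpleGraph V} {n : ℕ} {U : Finset V} {x y : V}
    (h : HP G n U x y) : y ∈ U := by
  induction n generalizing U x with
  | zero => exact h.2 ▸ h.1
  | succ n ih =>
    obtain ⟨hx, z, hz, h⟩ := h
    exact Finset.mem_of_mem_erase (ih h)

lemma HP.single {G : SimpleGraph V} {U : Finset V} {x : V} (hx : x ∈ U) : HP G 0 U x x :=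
  ⟨hx, rfl⟩

lemma HP.cons {G : SimpleGraph V} {n : ℕ} {U : Finset V} {x z y : V} (hx : x ∈ U)
    (hz : G.Adj x z) (h : HP G n (U.erase x) z y) : HP G (n + 1) U x y :=
  ⟨hx, z, hz, h⟩

lemma HP.edge {G : SimpleGraph V} {U : Finset V} {x y : V} (hx : x ∈ U) (hy : y ∈ U)
    (h : G.Adj x y) : HP G 1 U x y :=
  HP.cons hx h (HP.single (Finset.mem_erase.2 ⟨h.ne', hy⟩))

/-- Concatenation of two paths that meet only in their common end. -/
lemma HP.append {G : SimpleGraph V} {m n l : ℕ} {S T U : Finset V} {x z y : V}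
    (h₁ : HP G m S x z) (h₂ : HP G n T z y) (hST : ∀ v ∈ S, v ∈ T → v = z)
    (hS : S ⊆ U) (hT : T ⊆ U) (hl : l = m + n) : HP G l U x y := by
  subst hl
  induction m generalizing S U x with
  | zero =>
    obtain ⟨-, rfl⟩ := h₁
    simpa using h₂.mono hT
  | succ m ih =>
    obtain ⟨hx, w, hw, h₁⟩ := h₁
    have hz := h₁.mem_right
    have hxT : x ∉ T := fun h => by
      have := hST x hx h
      subst this
      simp at hz
    rw [show m + 1 + n = (m + n) + 1 by omega]
    refine HP.cons (hS hx) hw (ih h₁ (fun v hv => hST v (Finset.mem_of_mem_erase hv))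
      (Finset.erase_subset_erase x hS) ?_)
    intro v hv
    exact Finset.mem_erase.2 ⟨fun h => hxT (h ▸ hv), hT hv⟩

lemma HP.symm {G : SimpleGraph V} {n : ℕ} {U : Finset V} {x y : V}
    (h : HP G n U x y) : HP G n U y x := by
  induction n generalizing U x with
  | zero => obtain ⟨h, rfl⟩ := h; exact ⟨h, rfl⟩
  | succ n ih =>
    obtain ⟨hx, z, hz, h⟩ := h
    have hzU := h.mem_left
    refine HP.append (ih h) (HP.edge (U := {z, x}) (by simp) (by simp) hz.symm) ?_
      (Finset.erase_subset _ _) ?_ rfl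
    · intro v hv hv'
      simp at hv hv'
      tauto
    · intro v hv
      simp at hv hzU
      rcases hv with rfl | rfl
      · exact hzU.2
      · exact hx

lemma HP.card_le {G : SimpleGraph V} {n : ℕ} {U : Finset V} {x y : V}
    (h : HP G n U x y) : n + 1 ≤ U.card := by
  induction n generalizing U x with
  | zero => exact Finset.card_pos.2 ⟨x, h.1⟩
  | succ n ih =>
    obtain ⟨hx, z, hz, h⟩ := h
    have := ih h
    rw [Finset.card_erase_of_mem hx] at this
    omega

/-- A path can be restricted to its exact vertex set. -/
lemma HP.exact {G : SimpleGraph V} {n : ℕ} {U : Finset V} {x y : V}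
    (h : HP G n U x y) : ∃ S ⊆ U, S.card = n + 1 ∧ HP G n S x y := by
  induction n generalizing U x with
  | zero => exact ⟨{x}, by simpa using h.1, by simp, by simp [HP, h.2]⟩
  | succ n ih =>
    obtain ⟨hx, z, hz, h⟩ := h
    obtain ⟨S, hS, hc, hp⟩ := ih h
    have hxS : x ∉ S := fun h => by simpa using hS h
    refine ⟨insert x S, ?_, by simp [hxS, hc], HP.cons (by simp) hz (by simpa [hxS] using hp)⟩
    intro v hv
    rcases Finset.mem_insert.1 hv with rfl | hv
    · exact hx
    · exact Finset.mem_of_mem_erase (hS hv)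

/-- Either a path avoids `t`, or it splits at `t`. -/
lemma HP.split {G : SimpleGraph V} {n : ℕ} {U : Finset V} {x y : V}
    (h : HP G n U x y) (t : V) : HP G n (U.erase t) x y ∨
      ∃ S T i j, S ⊆ U ∧ T ⊆ U ∧ (∀ v ∈ S, v ∈ T → v = t) ∧ HP G i S x t ∧ HP G j T t y := by
  induction n generalizing U x with
  | zero =>
    obtain ⟨hx, rfl⟩ := h
    by_cases hxt : x = t
    · subst hxt
      exact Or.inr ⟨{x}, {x}, 0, 0, by simpa, by simpa, by simp, by simp [HP], by simp [HP]⟩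
    · exact Or.inl ⟨by simp [hxt, hx], rfl⟩
  | succ n ih =>
    obtain ⟨hx, z, hz, h⟩ := h
    by_cases hxt : x = t
    · subst hxt
      exact Or.inr ⟨{x}, U, 0, n + 1, by simpa, subset_rfl, by simp, by simp [HP],
        HP.cons hx hz h⟩
    · rcases ih h with h | ⟨S, T, i, j, hS, hT, hST, h1, h2⟩
      · left
        refine HP.cons (by simp [hxt, hx]) hz ?_
        rwa [Finset.erase_right_comm] at h
      · right
        have hxS : x ∉ S := fun h => by simpa using hS h
        have hxT : x ∉ T := fun h => by simpa using hT h
        refine ⟨insert x S, T, i + 1, j, ?_, hT.trans (Finset.erase_subset _ _), ?_,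
          HP.cons (by simp) hz (by simpa [hxS] using h1), h2⟩
        · intro v hv
          rcases Finset.mem_insert.1 hv with rfl | hv
          · exact hx
          · exact Finset.mem_of_mem_erase (hS hv)
        · intro v hv hv'
          rcases Finset.mem_insert.1 hv with rfl | hv
          · exact absurd hv' hxT
          · exact hST v hv hv'

/-- Either a path avoids `A`, or its part after the last visit to `A` avoids `A` except at its start. -/
lemma HP.last_hit {G : SimpleGraph V} {n : ℕ} {U : Finset V} {x y : V}
    (h : HP G n U x y) (A : Finset V) : HP G n (U \ A) x y ∨
      ∃ a ∈ A, a ∈ U ∧ ∃ m, HP G m (insert a (U \ A)) a y := by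
  induction n generalizing U x with
  | zero =>
    obtain ⟨hx, rfl⟩ := h
    by_cases hxA : x ∈ A
    · exact Or.inr ⟨x, hxA, hx, 0, by simp [HP]⟩
    · exact Or.inl ⟨by simp [hx, hxA], rfl⟩
  | succ n ih =>
    obtain ⟨hx, z, hz, h⟩ := h
    rcases ih h with h | ⟨a, ha, haU, m, h⟩
    · by_cases hxA : x ∈ A
      · refine Or.inr ⟨x, hxA, hx, n + 1, HP.cons (by simp) hz (h.mono ?_)⟩
        intro v; simp; tauto
      · refine Or.inl (HP.cons (by simp [hx, hxA]) hz (h.mono ?_))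
        intro v; simp; tauto
    · refine Or.inr ⟨a, ha, Finset.mem_of_mem_erase haU, m, h.mono ?_⟩
      intro v; simp; tauto

/-- Initial segment of a path before it first enters `F`. -/
lemma HP.first_entry {G : SimpleGraph V} {n : ℕ} {U F : Finset V} {x y : V}
    (h : HP G n U x y) (hx : x ∉ F) (hy : y ∈ F) :
    ∃ i u w, HP G i (U \ F) x u ∧ w ∈ F ∧ w ∈ U ∧ G.Adj u w := by
  induction n generalizing U x with
  | zero => obtain ⟨-, rfl⟩ := h; exact absurd hy hx
  | succ n ih =>
    obtain ⟨hxU, z, hz, h⟩ := h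
    by_cases hzF : z ∈ F
    · exact ⟨0, x, z, ⟨by simp [hx, hxU], rfl⟩, hzF, Finset.mem_of_mem_erase h.mem_left, hz⟩
    · obtain ⟨i, u, w, h1, hw, hwU, huw⟩ := ih h hzF
      refine ⟨i + 1, u, w, HP.cons (by simp [hx, hxU]) hz (h1.mono ?_), hw,
        Finset.mem_of_mem_erase hwU, huw⟩
      intro v; simp; tauto

/-- The end of a path moves along an edge inside `U`; a vertex already visited shortens the path. -/
lemma HP.extend {G : SimpleGraph V} {n : ℕ} {U : Finset V} {x u w : V}
    (h : HP G n U x u) (hw : w ∈ U) (huw : G.Adj u w) : ∃ m, HP G m U x w := by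
  induction n generalizing U x with
  | zero =>
    obtain ⟨hx, rfl⟩ := h
    exact ⟨1, HP.edge hx hw huw⟩
  | succ n ih =>
    obtain ⟨hx, z, hz, h⟩ := h
    by_cases hxw : x = w
    · exact ⟨0, hx, hxw⟩
    · obtain ⟨m, hm⟩ := ih h (Finset.mem_erase.2 ⟨fun h => hxw h.symm, hw⟩)
      exact ⟨m + 1, HP.cons hx hz hm⟩

/-- Existence of a path when no vertex set separates the ends. -/
lemma exists_HP {G : SimpleGraph V} {U : Finset V} {x y : V} (hx : x ∈ U)
    (h : ∀ F ⊆ U, x ∈ F → y ∉ F → ∃ u ∈ F, ∃ w ∈ U, w ∉ F ∧ G.Adj u w) :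
    ∃ n, HP G n U x y := by
  classical
  by_contra hcon
  obtain ⟨u, hu, w, hw, hwF, huw⟩ := h (U.filter fun v => ∃ n, HP G n U x v)
    (Finset.filter_subset _ _) (by simp only [Finset.mem_filter]; exact ⟨hx, 0, hx, rfl⟩)
    (fun h => hcon (Finset.mem_filter.1 h).2)
  obtain ⟨huU, n, hn⟩ := Finset.mem_filter.1 hu
  exact hwF (Finset.mem_filter.2 ⟨hw, hn.extend hw huw⟩)

/-- Rooted 2-connectivity: no single vertex `c` separates a nonempty set of non-roots from all of the
rest of `U`. -/
structure Rt (G : SimpleGraph V) (U : Finset V) (x y : V) : Prop where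
  hx : x ∈ U
  hy : y ∈ U
  ne : x ≠ y
  exp : ∀ F ⊆ U, F.Nonempty → x ∉ F → y ∉ F → ∀ c, ∃ u ∈ F, ∃ w ∈ U, w ∉ F ∧ w ≠ c ∧ G.Adj u w

lemma Rt.symm {G : SimpleGraph V} {U : Finset V} {x y : V} (h : Rt G U x y) : Rt G U y x :=
  ⟨h.hy, h.hx, h.ne.symm, fun F hF hn hx hy => h.exp F hF hn hy hx⟩

/-- Any vertex `v` reaches `y` avoiding `x`. -/
lemma Rt.reach {G : SimpleGraph V} {U : Finset V} {x y v : V} (h : Rt G U x y) (hv : v ∈ U)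
    (hvx : v ≠ x) : ∃ n, HP G n (U.erase x) v y := by
  apply exists_HP (by simp [hvx, hv])
  intro F hF hvF hyF
  have hxF : x ∉ F := fun h => by simpa using hF h
  obtain ⟨u, hu, w, hw, hwF, hwx, huw⟩ :=
    h.exp F (hF.trans (Finset.erase_subset _ _)) ⟨v, hvF⟩ hxF hyF x
  exact ⟨u, hu, w, by simp [hwx, hw], hwF, huw⟩

/-- Some path from `x` to `y` inside `U` passes through `v`, given as two paths that share only `v`. -/
def Through (G : SimpleGraph V) (U : Finset V) (x v y : V) : Prop :=
  ∃ S T n m, S ⊆ U ∧ T ⊆ U ∧ (∀ w ∈ S, w ∈ T → w = v) ∧ HP G n S x v ∧ HP G m T v y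

lemma HP.exact_split {G : SimpleGraph V} {n : ℕ} {S : Finset V} {x y t : V}
    (h : HP G n S x y) (hc : S.card = n + 1) (ht : t ∈ S) :
    ∃ S₁ S₂ i j, S₁ ⊆ S ∧ S₂ ⊆ S ∧ (∀ v ∈ S₁, v ∈ S₂ → v = t) ∧ HP G i S₁ x t ∧ HP G j S₂ t y := by
  rcases h.split t with h | h
  · have := h.card_le
    rw [Finset.card_erase_of_mem ht] at this
    omega
  · exact h

/-- Fan lemma: every vertex other than the roots lies on a path between them. -/
lemma Rt.through {G : SimpleGraph V} {U : Finset V} {x y v : V} (h : Rt G U x y) (hv : v ∈ U)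
    (hvx : v ≠ x) (hvy : v ≠ y) : Through G U x v y := by
  obtain ⟨n, hn⟩ := h.symm.reach hv hvy
  induction n generalizing v with
  | zero => exact absurd hn.2 hvx
  | succ n ih =>
    obtain ⟨-, w, hvw, hn'⟩ := hn
    have hwU : w ∈ U ∧ w ≠ y := by
      have := hn'.mem_left
      simp at this
      tauto
    by_cases hwx : w = x
    · subst hwx
      obtain ⟨m, hm⟩ := h.reach hv hvx
      refine ⟨{w, v}, U.erase w, 1, m, ?_, Finset.erase_subset _ _, ?_,
        HP.edge (by simp) (by simp) hvw.symm, hm⟩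
      · intro u; simp; rintro (rfl | rfl) <;> tauto
      · intro u; simp; tauto
    obtain ⟨S, T, i, j, hS, hT, hST, h1, h2⟩ := ih hwU.1 hwx hwU.2
      (hn'.mono (Finset.erase_subset _ _))
    obtain ⟨S, hS', hSc, h1⟩ := h1.exact
    obtain ⟨T, hT', hTc, h2⟩ := h2.exact
    replace hST : ∀ u ∈ S, u ∈ T → u = w := fun u hu hu' => hST u (hS' hu) (hT' hu')
    replace hS := hS'.trans hS
    replace hT := hT'.trans hT
    clear hS' hT'
    by_cases hvS : v ∈ S
    · obtain ⟨S₁, S₂, a, b, hS₁, hS₂, h12, p1, p2⟩ := h1.exact_split hSc hvS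
      refine ⟨S₁, S₂ ∪ T, a, b + j, hS₁.trans hS,
        Finset.union_subset (hS₂.trans hS) hT, ?_, p1,
        p2.append h2 (fun u hu hu' => hST u (hS₂ hu) hu') Finset.subset_union_left
          Finset.subset_union_right rfl⟩
      intro u hu hu'
      rcases Finset.mem_union.1 hu' with hu' | hu'
      · exact h12 u hu hu'
      · have := hST u (hS₁ hu) hu'
        subst this
        exact h12 u hu p2.mem_right
    by_cases hvT : v ∈ T
    · obtain ⟨S₁, S₂, a, b, hS₁, hS₂, h12, p1, p2⟩ := h2.exact_split hTc hvT
      refine ⟨S ∪ S₁, S₂, i + a, b, 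
        Finset.union_subset hS (hS₁.trans hT), hS₂.trans hT, ?_, 
        h1.append p1 (fun u hu hu' => hST u hu (hS₁ hu')) Finset.subset_union_left
          Finset.subset_union_right rfl, p2⟩
      intro u hu hu'
      rcases Finset.mem_union.1 hu with hu | hu
      · have := hST u hu (hS₂ hu')
        subst this
        exact h12 u p1.mem_left hu'
      · exact h12 u hu hu'
    -- the path from `v` back to the old path, avoiding `w`
    have hxS := h1.mem_left
    have hyT := h2.mem_right
    have hwS := h1.mem_right
    have hwT := h2.mem_left
    obtain ⟨t, ht, htw, m, hm⟩ : ∃ t ∈ S ∪ T, t ≠ w ∧ ∃ m,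
        HP G m (insert t (U \ (S ∪ T))) t v := by
      have : ∃ r ∈ S ∪ T, ∃ m, HP G m (U.erase w) v r := by
        by_contra hcon
        push Not at hcon
        classical
        set F := (U.erase w).filter fun u => ∃ m, HP G m (U.erase w) v u with hF
        have hFU : F ⊆ U := (Finset.filter_subset _ _).trans (Finset.erase_subset _ _)
        have hvF : v ∈ F := by
          simp only [hF, Finset.mem_filter]
          have : v ∈ U.erase w := by simp [hv, hvw.ne]
          exact ⟨this, 0, this, rfl⟩
        obtain ⟨u, hu, r, hr, hrF, hrw, hur⟩ := h.exp F hFU ⟨v, hvF⟩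
          (fun hx => by
            obtain ⟨m, hm⟩ := (Finset.mem_filter.1 hx).2
            exact hcon x (by simp [hxS]) m hm)
          (fun hx => by
            obtain ⟨m, hm⟩ := (Finset.mem_filter.1 hx).2
            exact hcon y (by simp [hyT]) m hm) w
        obtain ⟨-, m, hm⟩ := Finset.mem_filter.1 hu
        have hr' : r ∈ U.erase w := by simp [hrw, hr]
        exact hrF (Finset.mem_filter.2 ⟨hr', hm.extend hr' hur⟩)
      obtain ⟨r, hr, m, hm⟩ := this
      rcases hm.symm.last_hit (S ∪ T) with hm' | ⟨t, ht, htU, m', hm'⟩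
      · exact absurd hr (by have := hm'.mem_left; simp at this; simp [this])
      · refine ⟨t, ht, by simp at htU; exact htU.1, m', hm'.mono ?_⟩
        apply Finset.insert_subset_insert
        exact Finset.sdiff_subset_sdiff (Finset.erase_subset _ _) subset_rfl
    have htU : t ∈ U := by
      rcases Finset.mem_union.1 ht with ht | ht
      · exact hS ht
      · exact hT ht
    have hQU : insert t (U \ (S ∪ T)) ⊆ U := by
      intro u; simp; rintro (rfl | hu) <;> tauto
    by_cases htS : t ∈ S
    · obtain ⟨S₁, S₂, a, b, hS₁, hS₂, h12, p1, p2⟩ := h1.exact_split hSc htS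
      have hwS₁ : w ∉ S₁ := fun hw => htw (h12 w hw p2.mem_right).symm
      refine ⟨S₁ ∪ insert t (U \ (S ∪ T)), insert v T, a + m, j + 1,
        Finset.union_subset (hS₁.trans hS) hQU, Finset.insert_subset hv hT, ?_,
        p1.append hm ?_ Finset.subset_union_left Finset.subset_union_right rfl,
        HP.cons (by simp) hvw (by simpa [hvT] using h2)⟩
      · intro u hu hu'
        simp at hu hu'
        by_contra huv
        have huT : u ∈ T := by tauto
        have htT : t ∉ T := fun h => htw (hST t htS h)
        rcases hu with rfl | hu | hu
        · exact htT huT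
        · have := hST u (hS₁ hu) huT
          subst this
          exact hwS₁ hu
        · tauto
      · intro u hu hu'
        simp at hu'
        have := hS₁ hu
        tauto
    · have htT : t ∈ T := by simp at ht; tauto
      obtain ⟨S₁, S₂, a, b, hS₁, hS₂, h12, p1, p2⟩ := h2.exact_split hTc htT
      have hwS₂ : w ∉ S₂ := fun hw => htw (h12 w p1.mem_left hw).symm
      refine ⟨insert v S, S₂ ∪ insert t (U \ (S ∪ T)), i + 1, m + b,
        Finset.insert_subset hv hS, Finset.union_subset (hS₂.trans hT) hQU, ?_,
        h1.append (HP.edge (U := {w, v}) (by simp) (by simp) hvw.symm) ?_ 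
          (Finset.subset_insert _ _) ?_ rfl,
        hm.symm.append p2 ?_ Finset.subset_union_right Finset.subset_union_left rfl⟩
      · intro u hu hu'
        simp at hu hu'
        by_contra huv
        have huS : u ∈ S := by tauto
        rcases hu' with rfl | hu' | hu'
        · tauto
        · have := hST u huS (hS₂ hu')
          subst this
          exact hwS₂ hu'
        · tauto
      · intro u hu hu'
        simp at hu'
        rcases hu' with rfl | rfl
        · rfl
        · tauto
      · intro u hu
        simp at hu
        rcases hu with rfl | rfl
        · simp [hwS]
        · simp
      · intro u hu hu'
        simp at hu
        have := hS₂ hu'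
        tauto

/-! ### Admissible families, 2-separations and contraction -/

/-- `k` paths from `x` to `y` inside `U` whose lengths form an arithmetic progression with
difference `1` or `2` and first term at least `2`. -/
def Adm (G : SimpleGraph V) (U : Finset V) (x y : V) (k : ℕ) : Prop :=
  ∃ l d, (d = 1 ∨ d = 2) ∧ 2 ≤ l ∧ ∀ i < k, HP G (l + i * d) U x y

lemma Adm.symm {G : SimpleGraph V} {U : Finset V} {x y : V} {k : ℕ} (h : Adm G U x y k) :
    Adm G U y x k := by
  obtain ⟨l, d, hd, hl, h⟩ := h
  exact ⟨l, d, hd, hl, fun i hi => (h i hi).symm⟩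

lemma Adm.mono {G : SimpleGraph V} {U U' : Finset V} {x y : V} {k : ℕ} (h : Adm G U x y k)
    (hU : U ⊆ U') : Adm G U' x y k := by
  obtain ⟨l, d, hd, hl, h⟩ := h
  exact ⟨l, d, hd, hl, fun i hi => (h i hi).mono hU⟩

lemma Adm.monoG {G G' : SimpleGraph V} {U : Finset V} {x y : V} {k : ℕ} (h : Adm G U x y k)
    (hG : ∀ u ∈ U, ∀ v ∈ U, G.Adj u v → G'.Adj u v) : Adm G' U x y k := by
  obtain ⟨l, d, hd, hl, h⟩ := h
  exact ⟨l, d, hd, hl, fun i hi => (h i hi).monoG hG⟩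

lemma Adm.anti {G : SimpleGraph V} {U : Finset V} {x y : V} {k k' : ℕ} (h : Adm G U x y k)
    (hk : k' ≤ k) : Adm G U x y k' := by
  obtain ⟨l, d, hd, hl, h⟩ := h
  exact ⟨l, d, hd, hl, fun i hi => h i (by omega)⟩

/-- Sums of two arithmetic progressions with differences in `{1, 2}` and with `m` and `k` terms
contain such a progression with `m + k - 1` terms. -/
lemma ap_sum {Q : ℕ → Prop} {l₁ l₂ d₁ d₂ m k t : ℕ} (h₁ : d₁ = 1 ∨ d₁ = 2) (h₂ : d₂ = 1 ∨ d₂ = 2)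
    (hm : 1 ≤ m) (hk : 1 ≤ k) (hl : 2 ≤ l₁ + l₂ + t)
    (h : ∀ j < m, ∀ i < k, Q (l₁ + j * d₁ + (l₂ + i * d₂) + t)) :
    ∃ l d, (d = 1 ∨ d = 2) ∧ 2 ≤ l ∧ ∀ i < m + k - 1, Q (l + i * d) := by
  have key : ∀ n, (∃ j < m, ∃ i < k, n = l₁ + j * d₁ + (l₂ + i * d₂) + t) → Q n := by
    rintro n ⟨j, hj, i, hi, rfl⟩
    exact h j hj i hi
  rcases h₁ with rfl | rfl <;> rcases h₂ with rfl | rfl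
  · refine ⟨l₁ + l₂ + t, 1, by simp, hl, fun i hi => key _ ?_⟩
    exact ⟨min i (m - 1), by omega, i - min i (m - 1), by omega, by omega⟩
  · by_cases hm1 : m = 1
    · refine ⟨l₁ + l₂ + t, 2, by simp, hl, fun i hi => key _ ?_⟩
      exact ⟨0, by omega, i, by omega, by omega⟩
    · refine ⟨l₁ + l₂ + t, 1, by simp, hl, fun i hi => key _ ?_⟩
      exact ⟨i - 2 * min (i / 2) (k - 1), by omega, min (i / 2) (k - 1), by omega, by omega⟩
  · by_cases hm1 : k = 1
    · refine ⟨l₁ + l₂ + t, 2, by simp, hl, fun i hi => key _ ?_⟩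
      exact ⟨i, by omega, 0, by omega, by omega⟩
    · refine ⟨l₁ + l₂ + t, 1, by simp, hl, fun i hi => key _ ?_⟩
      exact ⟨min (i / 2) (m - 1), by omega, i - 2 * min (i / 2) (m - 1), by omega, by omega⟩
  · refine ⟨l₁ + l₂ + t, 2, by simp, hl, fun i hi => key _ ?_⟩
    exact ⟨min i (m - 1), by omega, i - min i (m - 1), by omega, by omega⟩

/-- Admissible families in series: `m` and `k` paths combine to `m + k - 1` paths. -/
lemma Adm.conc {G : SimpleGraph V} {S T U : Finset V} {x z y : V} {m k : ℕ}
    (h₁ : Adm G S x z m) (h₂ : Adm G T z y k) (hm : 1 ≤ m) (hk : 1 ≤ k)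
    (hST : ∀ v ∈ S, v ∈ T → v = z) (hS : S ⊆ U) (hT : T ⊆ U) : Adm G U x y (m + k - 1) := by
  obtain ⟨l₁, d₁, hd₁, hl₁, h₁⟩ := h₁
  obtain ⟨l₂, d₂, hd₂, hl₂, h₂⟩ := h₂
  exact ap_sum (Q := fun n => HP G n U x y) (l₁ := l₁) (l₂ := l₂) (t := 0) hd₁ hd₂ hm hk (by omega)
    fun j hj i hi => (h₁ j hj).append (h₂ i hi) hST hS hT rfl

lemma Adm.prepend {G : SimpleGraph V} {S T U : Finset V} {x z y : V} {n k : ℕ}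
    (h₂ : Adm G T z y k) (h₁ : HP G n S x z)
    (hST : ∀ v ∈ S, v ∈ T → v = z) (hS : S ⊆ U) (hT : T ⊆ U) : Adm G U x y k := by
  obtain ⟨l, d, hd, hl, h⟩ := h₂
  exact ⟨n + l, d, hd, by omega, fun i hi => h₁.append (h i hi) hST hS hT (by omega)⟩

lemma Adm.postpend {G : SimpleGraph V} {S T U : Finset V} {x z y : V} {n k : ℕ}
    (h₁ : Adm G S x z k) (h₂ : HP G n T z y)
    (hST : ∀ v ∈ S, v ∈ T → v = z) (hS : S ⊆ U) (hT : T ⊆ U) : Adm G U x y k :=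
  (h₁.symm.prepend h₂.symm (fun v hv hv' => hST v hv' hv) hT hS).symm

lemma Rt.two_le {G : SimpleGraph V} {U : Finset V} {x y v : V} (h : Rt G U x y) (hv : v ∈ U)
    (hx : v ≠ x) (hy : v ≠ y) : 2 ≤ (nb G U v).card := by
  have key : ∀ c, ∃ w, w ≠ c ∧ w ∈ nb G U v := by
    intro c
    obtain ⟨u, hu, w, hw, -, hwc, huw⟩ := h.exp {v} (by simpa using hv) (by simp)
      (by simpa using hx.symm) (by simpa using hy.symm) c
    simp only [Finset.mem_singleton] at hu
    subst hu
    exact ⟨w, hwc, mem_nb.2 ⟨hw, huw⟩⟩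
  obtain ⟨w, -, hw⟩ := key v
  obtain ⟨w', hne, hw'⟩ := key w
  have : ({w, w'} : Finset V) ⊆ nb G U v := by
    intro z hz; simp at hz; rcases hz with rfl | rfl <;> assumption
  calc 2 = ({w, w'} : Finset V).card := (Finset.card_pair hne.symm).symm
    _ ≤ _ := Finset.card_le_card this

/-- Reduction along a separator of size two: if a set `F` avoiding the roots sends edges out
of itself only to `p` and `q`, then paths between `p` and `q` through `F` extend. -/
lemma ML {G : SimpleGraph V} {U F : Finset V} {x y p q : V} {k : ℕ} (h : Rt G U x y)
    (hFU : F ⊆ U) (hF : F.Nonempty) (hx : x ∉ F) (hy : y ∉ F)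
    (hN : ∀ u ∈ F, ∀ w ∈ U, w ∉ F → G.Adj u w → w = p ∨ w = q)
    (ih : p ∈ U → q ∈ U → p ∉ F → q ∉ F →
      Rt G (insert p (insert q F)) p q → Adm G (insert p (insert q F)) p q k) :
    Adm G U x y k := by
  obtain ⟨u₁, hu₁, q', hq', hqF, hqp, huq⟩ := h.exp F hFU hF hx hy p
  obtain ⟨u₂, hu₂, p', hp', hpF, hpq, hup⟩ := h.exp F hFU hF hx hy q
  have e₁ : q' = q := (hN u₁ hu₁ q' hq' hqF huq).resolve_left hqp
  have e₂ : p' = p := (hN u₂ hu₂ p' hp' hpF hup).resolve_right hpq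
  subst e₁ e₂
  have hR : Rt G (insert p' (insert q' F)) p' q' := by
    refine ⟨by simp, by simp, hpq, fun F' hF' hn hp hq c => ?_⟩
    have hF'F : F' ⊆ F := by
      intro v hv
      have := hF' hv
      simp only [Finset.mem_insert] at this
      rcases this with rfl | rfl | h
      · exact absurd hv hp
      · exact absurd hv hq
      · exact h
    obtain ⟨u, hu, w, hw, hwF, hwc, huw⟩ := h.exp F' (hF'F.trans hFU) hn
      (fun h => hx (hF'F h)) (fun h => hy (hF'F h)) c
    refine ⟨u, hu, w, ?_, hwF, hwc, huw⟩
    simp only [Finset.mem_insert]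
    by_cases hwF' : w ∈ F
    · exact Or.inr (Or.inr hwF')
    · rcases hN u (hF'F hu) w hw hwF' huw with rfl | rfl <;> simp
  have hA := ih hp' hq' hpF hqF hR
  obtain ⟨f, hf⟩ := hF
  obtain ⟨S, T, n, m, hS, hT, hST, h1, h2⟩ := h.through (hFU hf) (fun h => hx (h ▸ hf))
    (fun h => hy (h ▸ hf))
  obtain ⟨i, u, w, g1, hw, -, huw⟩ := h1.first_entry hx hf
  obtain ⟨i', u', w', g2, hw', -, huw'⟩ := h2.symm.first_entry hy hf
  have hu := g1.mem_right
  have hu' := g2.mem_right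
  simp only [Finset.mem_sdiff] at hu hu'
  have hd : ∀ v ∈ S \ F, v ∉ T \ F := by
    intro v hv hv'
    simp only [Finset.mem_sdiff] at hv hv'
    have := hST v hv.1 hv'.1
    subst this
    exact hv.2 hf
  have hne : u ≠ u' := fun e => hd u (by simpa using hu) (by simpa [e] using hu')
  have a1 := hN w hw u (hS hu.1) hu.2 huw.symm
  have a2 := hN w' hw' u' (hT hu'.1) hu'.2 huw'.symm
  have hsub : insert p' (insert q' F) ⊆ U :=
    Finset.insert_subset hp' (Finset.insert_subset hq' hFU)
  have hA' : Adm G (insert p' (insert q' F)) u u' k := by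
    rcases a1 with rfl | rfl
    · rcases a2 with rfl | rfl
      · exact absurd rfl hne
      · exact hA
    · rcases a2 with rfl | rfl
      · exact hA.symm
      · exact absurd rfl hne
  have hpq' : ∀ v, v = p' ∨ v = q' → v = u ∨ v = u' := by
    clear hA' hA ih hsub hd hu hu' g1 g2 hN
    grind
  have hB := hA'.prepend (U := (S \ F) ∪ (insert p' (insert q' F))) g1 (by
    intro v hv hv'
    have hv0 := hd v hv
    simp only [Finset.mem_sdiff, Finset.mem_insert] at hv hv' hv0
    rcases hpq' v (by clear hpq'; grind) with rfl | rfl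
    · rfl
    · exact absurd hu' hv0) Finset.subset_union_left Finset.subset_union_right
  refine hB.postpend g2.symm ?_ ?_ ((Finset.sdiff_subset).trans hT)
  · intro v hv hv'
    have hv0 : v ∉ S \ F := fun h => hd v h hv'
    simp only [Finset.mem_sdiff, Finset.mem_insert, Finset.mem_union] at hv hv' hv0
    rcases hpq' v (by clear hpq'; grind) with rfl | rfl
    · exact absurd hu hv0
    · rfl
  · exact Finset.union_subset ((Finset.sdiff_subset).trans hS) hsub

/-- The graph obtained from `G` by giving the vertex `x` the neighbourhood of the set `E`. -/
def contr (G : SimpleGraph V) (x : V) (E : Finset V) : SimpleGraph V where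
  Adj u v := u ≠ v ∧ ((u ≠ x ∧ v ≠ x ∧ G.Adj u v) ∨ (u = x ∧ ∃ e ∈ E, G.Adj e v) ∨
    (v = x ∧ ∃ e ∈ E, G.Adj e u))
  symm := by
    constructor
    rintro u v ⟨h, h'⟩
    refine ⟨h.symm, ?_⟩
    rcases h' with ⟨a, b, c⟩ | h' | h'
    · exact Or.inl ⟨b, a, c.symm⟩
    · exact Or.inr (Or.inr h')
    · exact Or.inr (Or.inl h')
  loopless := ⟨fun v h => h.1 rfl⟩

/-- The data for contracting `S` to the vertex `x`. The vertices of `E` are those through which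
paths leave `S`, and the vertices of `D` are kept. Edges leave `D` only towards `S` and `q`.
Conditions `α` and `β` give rooted 2-connectivity of the contracted graph on `D ∪ {x, q}`: the first
provides an edge that does not go to `S`, the second one that avoids a given vertex `c`. The conditions
`loss₁` and `loss₂` say that contracting lowers degrees in `D` by at most `m - 1`: a vertex
adjacent to `E` keeps the new neighbour `x`. -/
structure CL (G : SimpleGraph V) (U S E D : Finset V) (x q : V) (m : ℕ) : Prop where
  xS : x ∈ S
  SU : S ⊆ U
  ES : E ⊆ S
  xE : x ∉ E
  DU : D ⊆ U
  SD : ∀ v ∈ D, v ∉ S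
  qU : q ∈ U
  qS : q ∉ S
  qD : q ∉ D
  hm : 1 ≤ m
  nbD : ∀ u ∈ D, ∀ w ∈ U, G.Adj u w → w ∈ D ∨ w ∈ S ∨ w = q
  α : ∀ F ⊆ D, F.Nonempty → ∃ u ∈ F, ∃ w ∈ U, w ∉ F ∧ w ∉ S ∧ G.Adj u w
  β : ∀ F ⊆ D, F.Nonempty → ∀ c ∉ S, ∃ u ∈ F, ∃ w ∈ U, w ∉ F ∧ w ≠ c ∧ (w ∈ S → w ∈ E) ∧ G.Adj u w
  loss₁ : ∀ v ∈ D, (nb G S v).card ≤ m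
  loss₂ : ∀ v ∈ D, (∀ e ∈ E, ¬ G.Adj v e) → (nb G S v).card ≤ m - 1

lemma CL.card {G : SimpleGraph V} {U S E D : Finset V} {x q : V} {m : ℕ}
    (h : CL G U S E D x q m) : D.card + S.card + 1 ≤ U.card := by
  have h1 : insert q (D ∪ S) ⊆ U :=
    Finset.insert_subset h.qU (Finset.union_subset h.DU h.SU)
  have h2 : (insert q (D ∪ S)).card = D.card + S.card + 1 := by
    rw [Finset.card_insert_of_notMem (by simp [h.qS, h.qD]), Finset.card_union_of_disjoint]
    rw [Finset.disjoint_left]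
    exact h.SD
  rw [← h2]
  exact Finset.card_le_card h1

/-- After contraction, `x` and `q` are again roots of a rooted 2-connected graph. -/
lemma CL.rt {G : SimpleGraph V} {U S E D : Finset V} {x q : V} {m : ℕ}
    (h : CL G U S E D x q m) : Rt (contr G x E) (insert x (insert q D)) x q := by
  refine ⟨by simp, by simp, fun e => h.qS (e ▸ h.xS), fun F hF hn hx hq c => ?_⟩
  have hFD : F ⊆ D := by
    intro v hv
    have := hF hv
    simp only [Finset.mem_insert] at this
    rcases this with rfl | rfl | h
    · exact absurd hv hx
    · exact absurd hv hq
    · exact h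
  by_cases hc : c ∈ S
  · obtain ⟨u, hu, w, hw, hwF, hwS, huw⟩ := h.α F hFD hn
    refine ⟨u, hu, w, ?_, hwF, fun e => hwS (e ▸ hc), huw.ne, Or.inl ⟨fun e => hx (e ▸ hu),
      fun e => hwS (e ▸ h.xS), huw⟩⟩
    simp only [Finset.mem_insert]
    rcases h.nbD u (hFD hu) w hw huw with h | h | h <;> tauto
  · obtain ⟨u, hu, w, hw, hwF, hwc, hwE, huw⟩ := h.β F hFD hn c hc
    by_cases hwS : w ∈ S
    · exact ⟨u, hu, x, by simp, hx, fun e => hc (e ▸ h.xS), fun e => hx (e ▸ hu),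
        Or.inr (Or.inr ⟨rfl, w, hwE hwS, huw.symm⟩)⟩
    · refine ⟨u, hu, w, ?_, hwF, hwc, huw.ne, Or.inl ⟨fun e => hx (e ▸ hu),
        fun e => hwS (e ▸ h.xS), huw⟩⟩
      simp only [Finset.mem_insert]
      rcases h.nbD u (hFD hu) w hw huw with h | h | h <;> tauto

lemma CL.loss {G : SimpleGraph V} {U S E D : Finset V} {x q : V} {m : ℕ}
    (h : CL G U S E D x q m) {v : V} (hv : v ∈ D) :
    (nb G U v).card ≤ (nb (contr G x E) (insert x (insert q D)) v).card + (m - 1) := by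
  have hvx : v ≠ x := fun e => h.SD v hv (e ▸ h.xS)
  have hsub : nb G (U \ S) v ⊆ (nb (contr G x E) (insert x (insert q D)) v).erase x := by
    intro w hw
    simp only [mem_nb, Finset.mem_sdiff, Finset.mem_erase, Finset.mem_insert] at hw ⊢
    obtain ⟨⟨hwU, hwS⟩, hvw⟩ := hw
    have hwx : w ≠ x := fun e => hwS (e ▸ h.xS)
    refine ⟨hwx, ?_, hvw.ne, Or.inl ⟨hvx, hwx, hvw⟩⟩
    rcases h.nbD v hv w hwU hvw with h | h | h <;> tauto
  have h1 : (nb G U v).card ≤ (nb G S v).card + (nb G (U \ S) v).card := by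
    refine (Finset.card_le_card ?_).trans (Finset.card_union_le _ _)
    intro w hw
    simp only [mem_nb, Finset.mem_union, Finset.mem_sdiff] at hw ⊢
    tauto
  have h2 := Finset.card_le_card hsub
  have hm := h.hm
  by_cases hE : ∃ e ∈ E, G.Adj v e
  · obtain ⟨e, he, hve⟩ := hE
    have hx : x ∈ nb (contr G x E) (insert x (insert q D)) v :=
      mem_nb.2 ⟨by simp, hvx, Or.inr (Or.inr ⟨rfl, e, he, hve.symm⟩)⟩
    have := Finset.card_erase_of_mem hx
    have h4 := Finset.card_pos.2 ⟨x, hx⟩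
    have h3 := h.loss₁ v hv
    omega
  · push Not at hE
    have h3 := h.loss₂ v hv hE
    have h4 := Finset.card_erase_le (s := nb (contr G x E) (insert x (insert q D)) v) (a := x)
    omega

/-- A path in the contracted graph lifts to `G`: its edge at `x` becomes an edge at some `e ∈ E`,
preceded by any of the `m` paths from `x` to `e` inside `S` and followed by the tail from `q` to `y`. -/
lemma CL.lift {G : SimpleGraph V} {U S E D Ub T : Finset V} {x q y : V} {m k l₁ d₁ t : ℕ}
    (h : CL G U S E D x q m) (hd₁ : d₁ = 1 ∨ d₁ = 2)
    (inner : ∀ e ∈ E, ∀ j < m, HP G (l₁ + j * d₁) S x e)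
    (tail : HP G t T q y) (hTS : ∀ v ∈ T, v ∉ S) (hTD : ∀ v ∈ T, v ∉ D)
    (hSb : S ⊆ Ub) (hDb : D ⊆ Ub) (hTb : T ⊆ Ub) (hk : 1 ≤ k)
    (hA : Adm (contr G x E) (insert x (insert q D)) x q k) : Adm G Ub x y (m + k - 1) := by
  obtain ⟨l₂, d₂, hd₂, hl₂, hA⟩ := hA
  refine ap_sum (Q := fun n => HP G n Ub x y) (l₁ := l₁) (l₂ := l₂) (t := t) hd₁ hd₂ h.hm hk (by omega) fun j hj i hi => ?_
  have hp := hA i hi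
  obtain ⟨n, hn⟩ : ∃ n, l₂ + i * d₂ = n + 1 := ⟨l₂ + i * d₂ - 1, by omega⟩
  rw [hn] at hp ⊢
  obtain ⟨-, z, hz, hp⟩ := hp
  have hxq : x ≠ q := fun e => h.qS (e ▸ h.xS)
  have hxD : x ∉ D := fun hx => h.SD x hx h.xS
  rw [Finset.erase_insert (by simp [hxq, hxD])] at hp
  have hp' : HP G n (insert q D) z q := by
    refine hp.monoG fun u hu v hv huv => ?_
    simp only [Finset.mem_insert] at hu hv
    rcases huv with ⟨-, huv | huv | huv⟩
    · exact huv.2.2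
    · obtain ⟨rfl, -⟩ := huv; tauto
    · obtain ⟨rfl, -⟩ := huv; tauto
  obtain ⟨e, he, hez⟩ : ∃ e ∈ E, G.Adj e z := by
    rcases hz with ⟨hne, hz | hz | hz⟩
    · exact absurd rfl hz.1
    · exact hz.2
    · exact absurd hz.1.symm hne
  have heS := h.ES he
  have heq : e ≠ q := fun e' => h.qS (e' ▸ heS)
  have heD : e ∉ D := fun hx => h.SD e hx heS
  have hq1 : HP G (n + 1) (insert e (insert q D)) e q :=
    HP.cons (by simp) hez (by rwa [Finset.erase_insert (by simp [heq, heD])])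
  have hq2 := (inner e he j hj).append (U := S ∪ insert q D) hq1 (by
    intro v hv hv'
    simp only [Finset.mem_insert] at hv'
    rcases hv' with rfl | rfl | hv'
    · rfl
    · exact absurd hv h.qS
    · exact absurd hv (h.SD v hv')) Finset.subset_union_left (by
    intro v hv
    simp only [Finset.mem_insert, Finset.mem_union] at hv ⊢
    rcases hv with rfl | hv
    · exact Or.inl heS
    · exact Or.inr hv) rfl
  refine hq2.append tail ?_ ?_ hTb (by omega)
  · intro v hv hv'
    have := hTS v hv'
    have := hTD v hv'
    simp only [Finset.mem_insert, Finset.mem_union] at hv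
    tauto
  · exact Finset.union_subset hSb (Finset.insert_subset (hTb tail.mem_left) hDb)

/-- The path theorem for the vertex set `U`. -/
def T0At (U : Finset V) : Prop := ∀ (G : SimpleGraph V) (x y : V) (k : ℕ), 1 ≤ k → Rt G U x y →
  (∃ v ∈ U, v ≠ x ∧ v ≠ y) → (∀ v ∈ U, v ≠ x → v ≠ y → k + 1 ≤ (nb G U v).card) → Adm G U x y k

/-- The path theorem for two paths, with an exceptional vertex `e` of arbitrary degree. -/
def T2At (U : Finset V) : Prop := ∀ (G : SimpleGraph V) (x y e : V), Rt G U x y →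
  (∃ v ∈ U, v ≠ x ∧ v ≠ y ∧ v ≠ e) →
  (∀ v ∈ U, v ≠ x → v ≠ y → v ≠ e → 3 ≤ (nb G U v).card) → Adm G U x y 2

/-- The contraction step for the path theorem. -/
lemma CL.use0 {G : SimpleGraph V} {U S E D Ub T : Finset V} {x q y : V} {m k l₁ d₁ t : ℕ}
    (h : CL G U S E D x q m) (hd₁ : d₁ = 1 ∨ d₁ = 2)
    (ih : ∀ U' : Finset V, U'.card ≤ D.card + 2 → T0At U')
    (hD : D.Nonempty) (hdeg : ∀ v ∈ D, k + 1 ≤ (nb G U v).card)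
    (inner : ∀ e ∈ E, ∀ j < m, HP G (l₁ + j * d₁) S x e)
    (tail : HP G t T q y) (hTS : ∀ v ∈ T, v ∉ S) (hTD : ∀ v ∈ T, v ∉ D)
    (hSb : S ⊆ Ub) (hDb : D ⊆ Ub) (hTb : T ⊆ Ub) : Adm G Ub x y k := by
  have hm := h.hm
  have hR := h.rt
  obtain ⟨d, hd⟩ := hD
  have key : ∀ k', 1 ≤ k' → (k' = 1 ∨ k' + m = k + 1) →
      Adm (contr G x E) (insert x (insert q D)) x q k' := by
    intro k' hk' hk''
    refine ih _ ?_ _ _ _ _ hk' hR ⟨d, by simp [hd], fun e => h.SD d hd (e ▸ h.xS),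
      fun e => h.qD (e ▸ hd)⟩ ?_
    · have := Finset.card_insert_le x (insert q D)
      have := Finset.card_insert_le q D
      omega
    · intro v hv hvx hvq
      rcases hk'' with rfl | hk''
      · exact hR.two_le hv hvx hvq
      · have hvD : v ∈ D := by simpa [hvx, hvq] using hv
        have := h.loss hvD
        have := hdeg v hvD
        omega
  by_cases hkm : k + 1 ≤ m
  · exact (h.lift hd₁ inner tail hTS hTD hSb hDb hTb le_rfl (key 1 le_rfl (Or.inl rfl))).anti
      (by omega)
  · exact (h.lift hd₁ inner tail hTS hTD hSb hDb hTb (k := k + 1 - m) (by omega)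
      (key _ (by omega) (Or.inr (by omega)))).anti (by omega)

/-- The contraction step for two paths with an exceptional vertex, where `m = 1`. -/
lemma CL.use2 {G : SimpleGraph V} {U S E D Ub T : Finset V} {x q y e : V} {l₁ t : ℕ}
    (h : CL G U S E D x q 1)
    (ih : ∀ U' : Finset V, U'.card ≤ D.card + 2 → T2At U')
    (hD : ∃ v ∈ D, v ≠ e) (hdeg : ∀ v ∈ D, v ≠ e → 3 ≤ (nb G U v).card)
    (inner : ∀ e ∈ E, HP G l₁ S x e)
    (tail : HP G t T q y) (hTS : ∀ v ∈ T, v ∉ S) (hTD : ∀ v ∈ T, v ∉ D)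
    (hSb : S ⊆ Ub) (hDb : D ⊆ Ub) (hTb : T ⊆ Ub) : Adm G Ub x y 2 := by
  obtain ⟨d, hd, hde⟩ := hD
  refine h.lift (k := 2) (l₁ := l₁) (d₁ := 1) (Or.inl rfl) ?_ tail hTS hTD hSb hDb hTb (by omega) ?_
  · intro e he j hj
    obtain rfl : j = 0 := by omega
    simpa using inner e he
  · refine ih _ ?_ _ _ _ e h.rt ⟨d, by simp [hd], fun e => h.SD d hd (e ▸ h.xS),
      fun e => h.qD (e ▸ hd), hde⟩ ?_
    · have := Finset.card_insert_le x (insert q D)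
      have := Finset.card_insert_le q D
      omega
    · intro v hv hvx hvq hve
      have hvD : v ∈ D := by simpa [hvx, hvq] using hv
      have := h.loss hvD
      have := hdeg v hvD hve
      omega

open Classical in
/-- The vertices other than `q` that reach `q` avoiding `S`. -/
noncomputable def reg (G : SimpleGraph V) (U S : Finset V) (q : V) : Finset V :=
  (U \ S).filter fun v => v ≠ q ∧ ∃ n, HP G n (U \ S) v q

section
variable {G : SimpleGraph V} {U S : Finset V} {q : V}

lemma mem_reg {v : V} : v ∈ reg G U S q ↔ (v ∈ U ∧ v ∉ S) ∧ v ≠ q ∧ ∃ n, HP G n (U \ S) v q := by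
  simp [reg]

lemma reg_nb {u w : V} (hu : u ∈ reg G U S q) (hw : w ∈ U) (huw : G.Adj u w) :
    w ∈ reg G U S q ∨ w ∈ S ∨ w = q := by
  by_cases hwS : w ∈ S
  · exact Or.inr (Or.inl hwS)
  by_cases hwq : w = q
  · exact Or.inr (Or.inr hwq)
  obtain ⟨-, -, n, hn⟩ := mem_reg.1 hu
  obtain ⟨m, hm⟩ := hn.symm.extend (by simp [hw, hwS]) huw
  exact Or.inl (mem_reg.2 ⟨⟨hw, hwS⟩, hwq, m, hm.symm⟩)

lemma reg_adj {w : V} (hq : q ∈ U) (hqS : q ∉ S) (hw : w ∈ U) (hwS : w ∉ S) (h : G.Adj w q) :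
    w ∈ reg G U S q :=
  mem_reg.2 ⟨⟨hw, hwS⟩, h.ne, 1, HP.edge (by simp [hw, hwS]) (by simp [hq, hqS]) h⟩

lemma reg_alpha {F : Finset V} (hF : F ⊆ reg G U S q) (hn : F.Nonempty) :
    ∃ u ∈ F, ∃ w ∈ U, w ∉ F ∧ w ∉ S ∧ G.Adj u w := by
  obtain ⟨f, hf⟩ := hn
  obtain ⟨-, -, n, hn⟩ := mem_reg.1 (hF hf)
  have hqF : q ∉ F := fun h => (mem_reg.1 (hF h)).2.1 rfl
  obtain ⟨i, u, w, hu, hw, -, huw⟩ := hn.symm.first_entry hqF hf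
  have := hu.mem_right
  simp only [Finset.mem_sdiff] at this
  exact ⟨w, hw, u, this.1.1, this.2, this.1.2, huw.symm⟩

/-- If `F` can be left outside `S` only through `c`, then `c` still reaches `q` after removing `F`. -/
lemma reg_tail {F : Finset V} {c : V} (hq : q ∈ U) (hqS : q ∉ S) (hF : F ⊆ reg G U S q)
    (hcF : c ∉ F) (hc : c ∈ reg G U S q ∨ c = q)
    (hN : ∀ u ∈ F, ∀ w ∈ U, w ∉ F → G.Adj u w → w ∈ S ∨ w = c) :
    ∃ n, HP G n ((U \ S) \ F) c q := by
  have hqF : q ∉ F := fun h => (mem_reg.1 (hF h)).2.1 rfl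
  rcases hc with hc | rfl
  · obtain ⟨-, -, n, hn⟩ := mem_reg.1 hc
    rcases hn.last_hit F with h | ⟨a, ha, haU, m, h⟩
    · exact ⟨n, h⟩
    · cases m with
      | zero => obtain ⟨-, rfl⟩ := h; exact absurd ha hqF
      | succ m =>
        obtain ⟨-, z, haz, h⟩ := h
        rw [Finset.erase_insert (by simp [ha])] at h
        have hz := h.mem_left
        simp only [Finset.mem_sdiff] at hz
        rcases hN a ha z hz.1.1 hz.2 haz with h' | rfl
        · exact absurd h' hz.1.2
        · exact ⟨m, h⟩
  · exact ⟨0, HP.single (by simp [hq, hqS, hcF])⟩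
end

/-- Deleting the edge between the two roots preserves rooted 2-connectivity. -/
lemma Rt.del {G : SimpleGraph V} {U : Finset V} {x y : V} (h : Rt G U x y) :
    Rt (G.deleteEdges {s(x, y)}) U x y := by
  refine ⟨h.hx, h.hy, h.ne, fun F hF hn hx hy c => ?_⟩
  obtain ⟨u, hu, w, hw, hwF, hwc, huw⟩ := h.exp F hF hn hx hy c
  refine ⟨u, hu, w, hw, hwF, hwc, ?_⟩
  rw [SimpleGraph.deleteEdges_adj]
  refine ⟨huw, ?_⟩
  simp only [Set.mem_singleton_iff, Sym2.eq_iff]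
  rintro (⟨rfl, rfl⟩ | ⟨rfl, rfl⟩)
  · exact hx hu
  · exact hy hu

lemma nb_del {G : SimpleGraph V} {U : Finset V} {x y v : V} (hx : v ≠ x) (hy : v ≠ y) :
    nb (G.deleteEdges {s(x, y)}) U v = nb G U v := by
  ext w
  simp only [mem_nb, SimpleGraph.deleteEdges_adj, Set.mem_singleton_iff, Sym2.eq_iff]
  tauto

/-! ### The case of two paths -/

lemma adm_two {G : SimpleGraph V} {U : Finset V} {x y : V} {l d : ℕ} (hd : d = 1 ∨ d = 2)
    (hl : 2 ≤ l) (h₁ : HP G l U x y) (h₂ : HP G (l + d) U x y) : Adm G U x y 2 := by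
  refine ⟨l, d, hd, hl, fun i hi => ?_⟩
  have : i = 0 ∨ i = 1 := by omega
  rcases this with rfl | rfl
  · simpa using h₁
  · simpa using h₂

/-- The root `x` has a neighbour that is not a root. The extra vertex `p`, outside `U` or a root, is
avoided as well. -/
lemma Rt.exists_nb {G : SimpleGraph V} {U : Finset V} {x y : V} (h : Rt G U x y)
    (hv : ∃ v ∈ U, v ≠ x ∧ v ≠ y) (p : V) (hp : p ∉ U ∨ p = x ∨ p = y) :
    ∃ u ∈ U, u ≠ p ∧ u ≠ x ∧ u ≠ y ∧ G.Adj x u := by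
  obtain ⟨v, hvU, hvx, hvy⟩ := hv
  obtain ⟨u, hu, w, hw, hwF, hwc, huw⟩ := h.exp ((U.erase x).erase y)
    ((Finset.erase_subset _ _).trans (Finset.erase_subset _ _)) ⟨v, by simp [*]⟩ (by simp)
    (by simp) y
  simp only [Finset.mem_erase] at hu hwF
  obtain rfl : w = x := by tauto
  refine ⟨u, hu.2.2, ?_, hu.2.1, hu.1, huw.symm⟩
  rintro rfl
  tauto

/-- A minimal counterexample to the two-path theorem. -/
structure C2 (G : SimpleGraph V) (U : Finset V) (x y e : V) : Prop where
  R : Rt G U x y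
  nadj : ¬ G.Adj x y
  deg : ∀ v ∈ U, v ≠ x → v ≠ y → v ≠ e → 3 ≤ (nb G U v).card
  ord : ∃ v ∈ U, v ≠ x ∧ v ≠ y ∧ v ≠ e
  ih : ∀ U' : Finset V, U'.card < U.card → T2At U'
  no : ¬ Adm G U x y 2

namespace C2
variable {G : SimpleGraph V} {U : Finset V} {x y e : V}

lemma symm (h : C2 G U x y e) : C2 G U y x e :=
  ⟨h.R.symm, fun a => h.nadj a.symm, fun v hv a b c => h.deg v hv b a c,
    by obtain ⟨v, a, b, c, d⟩ := h.ord; exact ⟨v, a, c, b, d⟩, h.ih, fun a => h.no a.symm⟩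

/-- A minimal counterexample has no 2-separator cutting off an ordinary vertex from both roots. -/
lemma ml (h : C2 G U x y e) {F : Finset V} {p q : V} (hFU : F ⊆ U) (hx : x ∉ F) (hy : y ∉ F)
    (hF : ∃ f ∈ F, f ≠ e)
    (hN : ∀ u ∈ F, ∀ w ∈ U, w ∉ F → G.Adj u w → w = p ∨ w = q)
    (hz : ∃ z ∈ U, z ∉ F ∧ z ≠ p ∧ z ≠ q) : False := by
  obtain ⟨f, hf, hfe⟩ := hF
  refine h.no (ML h.R hFU ⟨f, hf⟩ hx hy hN fun hpU hqU hp hq hR => ?_)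
  have hsub : insert p (insert q F) ⊆ U := Finset.insert_subset hpU (Finset.insert_subset hqU hFU)
  refine h.ih _ ?_ G p q e hR ⟨f, by simp [hf], fun e => hp (e ▸ hf), fun e => hq (e ▸ hf), hfe⟩ ?_
  · obtain ⟨z, hz, hzF, hzp, hzq⟩ := hz
    exact Finset.card_lt_card ((Finset.ssubset_iff_of_subset hsub).2 ⟨z, hz, by simp [*]⟩)
  · intro v hv hvp hvq hve
    have hvF : v ∈ F := by simpa [hvp, hvq] using hv
    refine (h.deg v (hFU hvF) (fun e => hx (e ▸ hvF)) (fun e => hy (e ▸ hvF)) hve).trans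
      (Finset.card_le_card ?_)
    intro w hw
    rw [mem_nb] at hw ⊢
    refine ⟨?_, hw.2⟩
    by_cases hwF : w ∈ F
    · simp [hwF]
    · rcases hN v hvF w hw.1 hwF hw.2 with rfl | rfl <;> simp

/-- The exceptional vertex cannot have only one neighbour apart from `x`. -/
lemma m3 (h : C2 G U x y e) {c : V} (heU : e ∈ U) (hex : e ≠ x) (hey : e ≠ y)
    (hN : ∀ w ∈ U, G.Adj e w → w = x ∨ w = c) : False := by
  have hR : Rt G (U.erase e) x y := by
    refine ⟨by simp [h.R.hx, hex.symm], by simp [h.R.hy, hey.symm], h.R.ne,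
      fun F hF hn hx hy c' => ?_⟩
    by_contra hcon
    push Not at hcon
    have hFU : F ⊆ U := hF.trans (Finset.erase_subset _ _)
    refine h.ml (p := c') (q := e) hFU hx hy ?_ ?_ ?_
    · obtain ⟨f, hf⟩ := hn
      exact ⟨f, hf, fun e' => by simpa [e'] using hF hf⟩
    · intro u hu w hw hwF huw
      by_contra hne
      push Not at hne
      exact hcon u hu w (by simp [hw, hne.2]) hwF hne.1 huw
    · by_cases hcx : c' = x
      · exact ⟨y, h.R.hy, hy, fun e' => h.R.ne (hcx ▸ e'.symm), hey.symm⟩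
      · exact ⟨x, h.R.hx, hx, fun e' => hcx e'.symm, hex.symm⟩
  by_cases ho : ∃ v ∈ U, v ≠ x ∧ v ≠ y ∧ v ≠ e ∧ v ≠ c
  · obtain ⟨v, hv, hvx, hvy, hve, hvc⟩ := ho
    refine h.no (Adm.mono (h.ih (U.erase e) (Finset.card_erase_lt_of_mem heU) G x y c hR
      ⟨v, by simp [*], hvx, hvy, hvc⟩ ?_) (Finset.erase_subset _ _))
    intro v hv hvx hvy hvc
    simp only [Finset.mem_erase] at hv
    refine (h.deg v hv.2 hvx hvy hv.1).trans (Finset.card_le_card ?_)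
    intro w hw
    simp only [mem_nb, Finset.mem_erase] at hw ⊢
    refine ⟨⟨?_, hw.1⟩, hw.2⟩
    rintro rfl
    rcases hN v hv.2 hw.2.symm with rfl | rfl <;> tauto
  · push Not at ho
    obtain ⟨v, hv, hvx, hvy, hve⟩ := h.ord
    obtain rfl : v = c := ho v hv hvx hvy hve
    have hsub : nb G U v ⊆ {x, y, e} := by
      intro w hw
      rw [mem_nb] at hw
      simp only [Finset.mem_insert, Finset.mem_singleton]
      by_contra hne
      push Not at hne
      exact hw.2.ne' (ho w hw.1 hne.1 hne.2.1 hne.2.2)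
    have hcard : ({x, y, e} : Finset V).card ≤ 3 := Finset.card_le_three
    have heq : nb G U v = {x, y, e} :=
      Finset.eq_of_subset_of_card_le hsub (hcard.trans (h.deg v hv hvx hvy hve))
    have hvx' : G.Adj v x := (mem_nb.1 (heq ▸ by simp : x ∈ nb G U v)).2
    have hvy' : G.Adj v y := (mem_nb.1 (heq ▸ by simp : y ∈ nb G U v)).2
    have hve' : G.Adj v e := (mem_nb.1 (heq ▸ by simp : e ∈ nb G U v)).2
    have hxe : G.Adj x e := by
      obtain ⟨u, hu, w, hw, -, hwc, huw⟩ := h.R.exp {e} (by simpa using heU) (by simp)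
        (by simpa using hex.symm) (by simpa using hey.symm) v
      simp only [Finset.mem_singleton] at hu
      subst hu
      rcases hN w hw huw with rfl | rfl
      · exact huw.symm
      · exact absurd rfl hwc
    have hxU := h.R.hx
    have hyU := h.R.hy
    have hxy := h.R.ne
    refine h.no (adm_two (l := 2) (d := 1) (Or.inl rfl) le_rfl ?_ ?_)
    · exact HP.cons hxU hvx'.symm (HP.edge (by simp [*]) (by simp [hyU, hxy.symm]) hvy')
    · exact HP.cons hxU hxe (HP.cons (by simp [*]) hve'.symm
        (HP.edge (by simp [*]) (by simp [hyU, hxy.symm, hey.symm]) hvy'))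

/-- No set of non-roots, exceptional or not, is attached only to `x` and one further vertex. -/
lemma xcut (h : C2 G U x y e) {F : Finset V} {q : V} (hFU : F ⊆ U) (hn : F.Nonempty)
    (hx : x ∉ F) (hy : y ∉ F)
    (hN : ∀ u ∈ F, ∀ w ∈ U, w ∉ F → G.Adj u w → w = x ∨ w = q)
    (hz : ∃ z ∈ U, z ∉ F ∧ z ≠ x ∧ z ≠ q) : False := by
  by_cases ho : ∃ f ∈ F, f ≠ e
  · exact h.ml hFU hx hy ho hN hz
  · push Not at ho
    obtain ⟨f, hf⟩ := hn
    obtain rfl := ho f hf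
    refine h.m3 (c := q) (hFU hf) (fun e => hx (e ▸ hf)) (fun e => hy (e ▸ hf)) ?_
    intro w hw hfw
    exact hN f hf w hw (fun hwF => hfw.ne' (ho w hwF)) hfw

lemma ne_y (h : C2 G U x y e) {u : V} (hxu : G.Adj x u) : u ≠ y :=
  fun e => h.nadj (e ▸ hxu)

/-- No triangle through `x`: its two ways from `x` to the last visited vertex differ by `1`. -/
lemma tri (h : C2 G U x y e) {u w : V} (hu : u ∈ U) (hw : w ∈ U) (hxu : G.Adj x u)
    (hxw : G.Adj x w) (huw : G.Adj u w) : False := by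
  obtain ⟨n, hn⟩ := h.R.reach hu hxu.ne'
  have huy := h.ne_y hxu
  have hwy := h.ne_y hxw
  have hxU := h.R.hx
  have key : ∀ a b, a ∈ U → b ∈ U → G.Adj x a → G.Adj x b → G.Adj a b → a ≠ y →
      ∀ m, HP G m (insert a (U.erase x \ {a, b})) a y → False := by
    intro a b ha hb hxa hxb hab hay m hm
    have hm0 : m ≠ 0 := by rintro rfl; exact hay hm.2
    refine h.no (adm_two (l := m + 1) (d := 1) (Or.inl rfl) (by omega) ?_ ?_)
    · refine HP.cons hxU hxa (hm.mono ?_)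
      have := hxa.ne'
      intro v hv
      simp only [Finset.mem_insert, Finset.mem_sdiff, Finset.mem_erase] at hv ⊢
      grind
    · refine HP.cons hxU hxb (HP.cons (by simp [hxb.ne', hb]) hab.symm (hm.mono ?_))
      have := hxa.ne'
      have := hab.ne
      intro v hv
      simp only [Finset.mem_insert, Finset.mem_sdiff, Finset.mem_erase] at hv ⊢
      grind
  rcases hn.last_hit {u, w} with h' | ⟨a, ha, -, m, hm⟩
  · simpa using h'.mem_left
  · simp only [Finset.mem_insert, Finset.mem_singleton] at ha
    rcases ha with rfl | rfl
    · exact key _ _ hu hw hxu hxw huw huy m hm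
    · rw [Finset.pair_comm] at hm
      exact key _ _ hw hu hxw hxu huw.symm hwy m hm

/-- No 4-cycle through `x` avoids `y`: its two ways from `x` to a neighbour differ in length by `2`. -/
lemma c4 (h : C2 G U x y e) {b b' z : V} (hb : b ∈ U) (hb' : b' ∈ U) (hz : z ∈ U) (hbb : b ≠ b')
    (hxb : G.Adj x b) (hxb' : G.Adj x b') (hzb : G.Adj z b) (hzb' : G.Adj z b') (hzx : z ≠ x)
    (hzy : z ≠ y) : False := by
  have hxU := h.R.hx
  have hyU := h.R.hy
  have hxy := h.R.ne
  obtain ⟨n, hn⟩ : ∃ n, HP G n ((U.erase x).erase z) b y := by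
    refine exists_HP (by simp [hb, hxb.ne', hzb.ne']) fun F hF hbF hyF => ?_
    by_contra hcon
    push Not at hcon
    refine h.xcut (F := F) (q := z)
      (hF.trans ((Finset.erase_subset _ _).trans (Finset.erase_subset _ _))) ⟨b, hbF⟩
      (fun hx => by simpa using hF hx) hyF ?_ ⟨y, hyU, hyF, hxy.symm, hzy.symm⟩
    intro u hu w hw hwF huw
    by_contra hne
    push Not at hne
    exact hcon u hu w (by simp [hw, hne]) hwF huw
  have key : ∀ a b, a ∈ U → b ∈ U → a ≠ b → G.Adj x a → G.Adj x b → G.Adj z a → G.Adj z b →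
      ∀ m, HP G m (insert a ((U.erase x).erase z \ {a, b})) a y → False := by
    intro a b ha hb hab hxa hxb hza hzb m hm
    have hm0 : m ≠ 0 := by rintro rfl; exact h.ne_y hxa hm.2
    have := hxa.ne'
    have := hza.ne'
    refine h.no (adm_two (l := m + 1) (d := 2) (Or.inr rfl) (by omega) ?_ ?_)
    · refine HP.cons hxU hxa (hm.mono ?_)
      intro v hv
      simp only [Finset.mem_insert, Finset.mem_sdiff, Finset.mem_erase] at hv ⊢
      grind
    · refine HP.cons hxU hxb (HP.cons (by simp [hxb.ne', hb]) hzb.symm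
        (HP.cons (by simp [hzx, hz, hzb.ne]) hza (hm.mono ?_)))
      intro v hv
      simp only [Finset.mem_insert, Finset.mem_sdiff, Finset.mem_erase] at hv ⊢
      grind
  rcases hn.last_hit {b, b'} with h' | ⟨a, ha, -, m, hm⟩
  · simpa using h'.mem_left
  · simp only [Finset.mem_insert, Finset.mem_singleton] at ha
    rcases ha with rfl | rfl
    · exact key _ _ hb hb' hbb hxb hxb' hzb hzb' m hm
    · rw [Finset.pair_comm] at hm
      exact key _ _ hb' hb hbb.symm hxb' hxb hzb' hzb m hm

/-- All neighbours of `y` are neighbours of `x`. -/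
lemma nb_sub (h : C2 G U x y e) : ∀ w ∈ U, G.Adj y w → G.Adj x w := by
  have hxU := h.R.hx
  have hyU := h.R.hy
  have hxy := h.R.ne
  set N := nb G U x with hNdef
  set S := insert x N with hS
  have hNS : N ⊆ S := Finset.subset_insert _ _
  have memN : ∀ w, w ∈ N ↔ w ∈ U ∧ G.Adj x w := fun w => mem_nb
  have memS : ∀ w, w ∈ S ↔ w = x ∨ w ∈ N := fun w => Finset.mem_insert
  have hyS : y ∉ S := by
    rw [memS, memN]; rintro (e | e)
    · exact hxy e.symm
    · exact h.nadj e.2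
  have hSU : S ⊆ U := Finset.insert_subset hxU fun w hw => ((memN w).1 hw).1
  set D := reg G U S y with hD
  have hDm : ∀ v ∈ D, v ∈ U ∧ v ∉ S ∧ v ≠ y := fun v hv => by
    have := mem_reg.1 hv; tauto
  have hDx : ∀ v ∈ D, v ≠ x ∧ ¬ G.Adj v x := fun v hv => by
    obtain ⟨a, b, c⟩ := hDm v hv
    rw [memS, memN] at b
    exact ⟨fun e => b (Or.inl e), fun e => b (Or.inr ⟨a, e.symm⟩)⟩
  have huniq : ∀ v ∈ D, ∀ w ∈ S, ∀ w' ∈ S, G.Adj v w → G.Adj v w' → w = w' := by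
    intro v hv w hw w' hw' hvw hvw'
    by_contra hne
    obtain ⟨a, b, c⟩ := hDm v hv
    obtain ⟨d, d'⟩ := hDx v hv
    rw [memS, memN] at hw hw'
    rcases hw with rfl | hw
    · exact d' hvw
    rcases hw' with rfl | hw'
    · exact d' hvw'
    exact h.c4 hw.1 hw'.1 a hne hw.2 hw'.2 hvw hvw' d c
  have hCL : CL G U S N D x y 1 := by
    refine ⟨by simp [hS], hSU, hNS, by simp [memN], fun v hv => (hDm v hv).1,
      fun v hv => (hDm v hv).2.1, hyU, hyS, fun hy => (hDm y hy).2.2 rfl, le_rfl,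
      fun u hu w hw huw => reg_nb hu hw huw, fun F hF hn => reg_alpha hF hn, ?_, ?_, ?_⟩
    · intro F hF hn c hc
      obtain ⟨u, hu, w, hw, hwF, hwc, huw⟩ := h.R.exp F (fun v hv => (hDm v (hF hv)).1) hn
        (fun hx => (hDx x (hF hx)).1 rfl) (fun hy => (hDm y (hF hy)).2.2 rfl) c
      refine ⟨u, hu, w, hw, hwF, hwc, fun hwS => ?_, huw⟩
      rcases (memS w).1 hwS with rfl | h'
      · exact absurd huw (hDx u (hF hu)).2
      · exact h'
    · intro v hv
      refine Finset.card_le_one.2 fun w hw w' hw' => ?_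
      rw [mem_nb] at hw hw'
      exact huniq v hv w hw.1 w' hw'.1 hw.2 hw'.2
    · intro v hv hE
      simp only [Nat.sub_self, Nat.le_zero, Finset.card_eq_zero]
      refine Finset.eq_empty_of_forall_notMem fun w hw => ?_
      rw [mem_nb, memS] at hw
      rcases hw.1 with rfl | h'
      · exact (hDx v hv).2 hw.2
      · exact hE w h' hw.2
  have hcard := hCL.card
  obtain ⟨v0, hv0, hv0x, hv0y, -⟩ := h.ord
  obtain ⟨n0, hn0, -, -, -, hxn0⟩ := h.R.exists_nb ⟨v0, hv0, hv0x, hv0y⟩ x (by simp)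
  have hScard : 2 ≤ S.card := by
    rw [hS, Finset.card_insert_of_notMem (by simp [memN])]
    have := Finset.card_pos.2 ⟨n0, (memN n0).2 ⟨hn0, hxn0⟩⟩
    omega
  by_cases ho : ∃ v ∈ D, v ≠ e
  · refine absurd ?_ h.no
    refine hCL.use2 (T := {y}) (t := 0) (l₁ := 1) (e := e) (fun U' hU' => h.ih U' (by omega)) ho ?_ ?_
      (HP.single (by simp)) (by simpa using hyS) (by simpa using hCL.qD) hSU hCL.DU (by simpa using hyU)
    · intro v hv hve
      exact h.deg v (hDm v hv).1 (hDx v hv).1 (hDm v hv).2.2 hve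
    · intro n hn
      exact HP.edge hCL.xS (hNS hn) ((memN n).1 hn).2
  · push Not at ho
    intro w hw hyw
    by_contra hxw
    have hwD : w ∈ D := reg_adj hyU hyS hw (by
      rw [memS, memN]; rintro (rfl | e)
      · exact h.nadj hyw.symm
      · exact hxw e.2) hyw.symm
    obtain rfl : w = e := ho w hwD
    obtain ⟨c, hc⟩ : ∃ c, ∀ v ∈ S, G.Adj w v → v = c := by
      by_cases hv : ∃ v ∈ S, G.Adj w v
      · obtain ⟨c, hc, hwc⟩ := hv
        exact ⟨c, fun v hv hwv => huniq w hwD v hv c hc hwv hwc⟩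
      · push Not at hv
        exact ⟨w, fun v hv' hwv => absurd hwv (hv v hv')⟩
    refine h.symm.m3 (c := c) hw (hDm w hwD).2.2 (hDx w hwD).1 ?_
    intro v hv hwv
    rcases reg_nb hwD hv hwv with hside | hside | hside
    · exact absurd (ho v hside) hwv.ne'
    · exact Or.inr (hc v hside hwv)
    · exact Or.inl hside

/-- There is no minimal counterexample. The roots are twins by `nb_sub`, so after deleting `x` the set
`{y} ∪ N(y)` without one vertex `u` can be contracted towards `u`, and `u` is joined to `x`. -/
lemma false (h : C2 G U x y e) : False := by
  have hxU := h.R.hx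
  have hyU := h.R.hy
  have hxy := h.R.ne
  have hN : ∀ w ∈ U, (G.Adj x w ↔ G.Adj y w) := fun w hw => ⟨h.symm.nb_sub w hw, h.nb_sub w hw⟩
  have hC2 : ∀ p, ∃ w ∈ U, w ≠ p ∧ G.Adj x w := by
    intro p
    by_contra hcon
    push Not at hcon
    obtain ⟨v, hv, hvx, hvy, hve⟩ := h.ord
    by_cases hvp : ∃ v ∈ U, v ≠ x ∧ v ≠ y ∧ v ≠ p
    · obtain ⟨v, hv, hvx, hvy, hvp⟩ := hvp
      obtain ⟨u, hu, w, hw, hwF, hwc, huw⟩ := h.R.exp (U \ {x, y, p}) Finset.sdiff_subset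
        ⟨v, by simp [*]⟩ (by simp) (by simp) p
      simp only [Finset.mem_sdiff, Finset.mem_insert, Finset.mem_singleton] at hu hwF
      have : w = x ∨ w = y := by tauto
      rcases this with rfl | rfl
      · exact hcon u hu.1 (by tauto) huw.symm
      · exact hcon u hu.1 (by tauto) ((hN u hu.1).2 huw.symm)
    · push Not at hvp
      have hvp' := hvp v hv hvx hvy
      subst hvp'
      have h3 := h.deg v hv hvx hvy hve
      have : nb G U v ⊆ {x, y} := by
        intro w hw
        rw [mem_nb] at hw
        simp only [Finset.mem_insert, Finset.mem_singleton]
        by_contra hne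
        push Not at hne
        exact hw.2.ne' (hvp w hw.1 hne.1 hne.2)
      have := (Finset.card_le_card this).trans Finset.card_le_two
      omega
  have third : ∀ c ∈ U, G.Adj x c → c ≠ e → ∃ w ∈ U, w ≠ x ∧ w ≠ y ∧ ¬ G.Adj x w ∧ G.Adj c w := by
    intro c hc hxc hce
    have h3 := h.deg c hc hxc.ne' (h.ne_y hxc) hce
    obtain ⟨w, hw, hw'⟩ := Finset.exists_mem_notMem_of_card_lt_card
      (s := {x, y}) (t := nb G U c) ((Finset.card_le_two).trans_lt h3)
    rw [mem_nb] at hw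
    simp only [Finset.mem_insert, Finset.mem_singleton, not_or] at hw'
    exact ⟨w, hw.1, hw'.1, hw'.2, fun hxw => h.tri hc hw.1 hxc hxw hw.2, hw.2⟩
  obtain ⟨u, huU, hxu, v, hvU, hvx, hvy, hve, hxv, huv⟩ : ∃ u ∈ U, G.Adj x u ∧ ∃ v ∈ U, v ≠ x ∧
      v ≠ y ∧ v ≠ e ∧ ¬ G.Adj x v ∧ G.Adj u v := by
    obtain ⟨c, hc, hce, hxc⟩ := hC2 e
    obtain ⟨w, hw, hwx, hwy, hxw, hcw⟩ := third c hc hxc hce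
    by_cases hwe : w = e
    · subst hwe
      obtain ⟨c', hc', hcc, hxc'⟩ := hC2 c
      obtain ⟨w', hw', hwx', hwy', hxw', hcw'⟩ := third c' hc' hxc' (fun e' => hxw (e' ▸ hxc'))
      refine ⟨c', hc', hxc', w', hw', hwx', hwy', ?_, hxw', hcw'⟩
      rintro rfl
      exact h.c4 hc hc' hw hcc.symm hxc hxc' hcw.symm hcw'.symm hwx hwy
    · exact ⟨c, hc, hxc, w, hw, hwx, hwy, hwe, hxw, hcw⟩
  set E := (nb G U x).erase u with hE
  set S := insert y E with hS
  set U₀ := U.erase x with hU₀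
  have memE : ∀ w, w ∈ E ↔ w ≠ u ∧ w ∈ U ∧ G.Adj x w := fun w => by simp [hE, mem_nb]
  have memS : ∀ w, w ∈ S ↔ w = y ∨ w ∈ E := fun w => Finset.mem_insert
  have huy := h.ne_y hxu
  have huS : u ∉ S := by simp [memS, memE, huy]
  have hxS : x ∉ S := by simp [memS, memE, hxy]
  have hSU : S ⊆ U₀ := by
    intro w hw
    rw [memS, memE] at hw
    rw [hU₀, Finset.mem_erase]
    rcases hw with rfl | hw
    · exact ⟨hxy.symm, hyU⟩
    · exact ⟨hw.2.2.ne', hw.2.1⟩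
  have huU₀ : u ∈ U₀ := by simp [hU₀, huU, hxu.ne']
  set D := reg G U₀ S u with hD
  have hDm : ∀ v ∈ D, v ∈ U ∧ v ≠ x ∧ v ∉ S ∧ v ≠ u ∧ v ≠ y ∧ ¬ G.Adj x v ∧ ¬ G.Adj y v := by
    intro v hv
    have := mem_reg.1 hv
    simp only [hU₀, Finset.mem_erase] at this
    have h1 := this.1.2
    rw [memS, memE] at h1
    have h2 := hN v this.1.1.2
    tauto
  have hvD : v ∈ D := reg_adj huU₀ huS (by simp [hvU, hvx, hU₀])
    (by rw [memS, memE]; tauto) huv.symm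
  have hCL : CL G U₀ S E D y u 1 := by
    refine ⟨by simp [hS], hSU, Finset.subset_insert _ _, ?_, ?_,
      fun v hv => (hDm v hv).2.2.1, huU₀, huS, fun hy => (hDm u hy).2.2.2.1 rfl, le_rfl,
      fun u hu w hw huw => reg_nb hu hw huw, fun F hF hn => reg_alpha hF hn, ?_, ?_, ?_⟩
    · rw [memE]; exact fun e => h.nadj e.2.2
    · intro v hv
      have := hDm v hv
      simp [hU₀, this]
    · intro F hF hn c hc
      obtain ⟨u', hu', w, hw, hwF, hwc, huw⟩ := h.R.exp F (fun v hv => (hDm v (hF hv)).1) hn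
        (fun hx => (hDm x (hF hx)).2.1 rfl) (fun hy => (hDm y (hF hy)).2.2.2.2.1 rfl) c
      have := hDm u' (hF hu')
      refine ⟨u', hu', w, ?_, hwF, hwc, fun hwS => ?_, huw⟩
      · rw [hU₀, Finset.mem_erase]
        refine ⟨?_, hw⟩
        rintro rfl
        exact this.2.2.2.2.2.1 huw.symm
      · rcases (memS w).1 hwS with rfl | h'
        · exact absurd huw.symm this.2.2.2.2.2.2
        · exact h'
    · intro v hv
      refine Finset.card_le_one.2 fun w hw w' hw' => ?_
      rw [mem_nb, memS, memE] at hw hw'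
      have := hDm v hv
      by_contra hne
      rcases hw with ⟨rfl | hw, hvw⟩
      · exact this.2.2.2.2.2.2 hvw.symm
      rcases hw' with ⟨rfl | hw', hvw'⟩
      · exact this.2.2.2.2.2.2 hvw'.symm
      exact h.c4 hw.2.1 hw'.2.1 this.1 hne hw.2.2 hw'.2.2 hvw hvw' this.2.1 this.2.2.2.2.1
    · intro v hv hE
      simp only [Nat.sub_self, Nat.le_zero, Finset.card_eq_zero]
      refine Finset.eq_empty_of_forall_notMem fun w hw => ?_
      rw [mem_nb, memS] at hw
      have := hDm v hv
      rcases hw.1 with rfl | h'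
      · exact this.2.2.2.2.2.2 hw.2.symm
      · exact hE w h' hw.2
  have hcard := hCL.card
  have hS1 := Finset.card_pos.2 ⟨y, hCL.xS⟩
  have hU1 : U₀.card < U.card := Finset.card_erase_lt_of_mem hxU
  have hU0U : U₀ ⊆ U := Finset.erase_subset _ _
  refine h.no (Adm.symm ?_)
  refine hCL.use2 (T := {u, x}) (t := 1) (l₁ := 1) (e := e) (fun U' hU' => h.ih U' (by omega))
    ⟨v, hvD, hve⟩ ?_ ?_ (HP.edge (by simp) (by simp) hxu.symm) ?_ ?_ (hSU.trans hU0U)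
    (hCL.DU.trans hU0U) ?_
  · intro v hv hve
    obtain ⟨a, b, c, d, e, f, g⟩ := hDm v hv
    refine (h.deg v a b e hve).trans (Finset.card_le_card fun w hw => ?_)
    rw [mem_nb] at hw ⊢
    refine ⟨?_, hw.2⟩
    rw [hU₀, Finset.mem_erase]
    refine ⟨?_, hw.1⟩
    rintro rfl
    exact f hw.2.symm
  · intro n hn
    have := (memE n).1 hn
    exact HP.edge hCL.xS (hCL.ES hn) ((hN n this.2.1).1 this.2.2)
  · intro w hw
    simp only [Finset.mem_insert, Finset.mem_singleton] at hw
    rcases hw with rfl | rfl <;> assumption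
  · intro w hw
    simp only [Finset.mem_insert, Finset.mem_singleton] at hw
    rcases hw with rfl | rfl
    · exact hCL.qD
    · exact fun hx => (hDm w hx).2.1 rfl
  · intro w hw
    simp only [Finset.mem_insert, Finset.mem_singleton] at hw
    rcases hw with rfl | rfl <;> assumption

end C2

theorem t2 (U : Finset V) : T2At U := by
  induction hn : U.card using Nat.strong_induction_on generalizing U with
  | _ n ih =>
    subst hn
    intro G x y e hR hord hdeg
    by_contra hno
    refine C2.false (G := G.deleteEdges {s(x, y)}) (U := U) (x := x) (y := y) (e := e)
      ⟨hR.del, by simp [SimpleGraph.deleteEdges_adj], ?_, hord, fun U' hU' => ih _ hU' U' rfl,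
      fun h => hno (h.monoG fun u _ v _ huv => (SimpleGraph.deleteEdges_adj.1 huv).1)⟩
    intro v hv hx hy he
    rw [nb_del hx hy]
    exact hdeg v hv hx hy he

/-! ### Minimal counterexamples and the contraction step -/

/-- A minimal counterexample to the path theorem, with `k ≥ 3`. -/
structure C0 (G : SimpleGraph V) (U : Finset V) (x y : V) (k : ℕ) : Prop where
  R : Rt G U x y
  nadj : ¬ G.Adj x y
  deg : ∀ v ∈ U, v ≠ x → v ≠ y → k + 1 ≤ (nb G U v).card
  ord : ∃ v ∈ U, v ≠ x ∧ v ≠ y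
  hk : 3 ≤ k
  ih : ∀ U' : Finset V, U'.card < U.card → T0At U'
  no : ¬ Adm G U x y k

/-- A vertex set `S` around the root `x`, prepared for contraction towards `q`, together with a
path from `q` to `y` that leaves the ambient set `U₀` immediately. -/
structure St (G : SimpleGraph V) (U : Finset V) (x y : V) (U₀ S : Finset V) (q : V) : Prop where
  U₀U : U₀ ⊆ U
  xS : x ∈ S
  SU₀ : S ⊆ U₀
  qU₀ : q ∈ U₀
  qS : q ∉ S
  ny : ∀ v ∈ U₀, v ∉ S → v ≠ q → v ≠ y
  cl : ∀ v ∈ U₀, v ∉ S → v ≠ q → ∀ w ∈ U, G.Adj v w → w ∈ U₀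
  S2 : 2 ≤ S.card
  tail : ∃ T t, T ⊆ U ∧ HP G t T q y ∧ ∀ v ∈ T, v ≠ q → v ∉ U₀

namespace C0
variable {G : SimpleGraph V} {U : Finset V} {x y : V} {k : ℕ}

lemma symm (h : C0 G U x y k) : C0 G U y x k :=
  ⟨h.R.symm, fun a => h.nadj a.symm, fun v hv a b => h.deg v hv b a,
    by obtain ⟨v, a, b, c⟩ := h.ord; exact ⟨v, a, c, b⟩, h.hk, h.ih, fun a => h.no a.symm⟩

lemma ne_y (h : C0 G U x y k) {u : V} (hxu : G.Adj x u) : u ≠ y :=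
  fun e => h.nadj (e ▸ hxu)

/-- A minimal counterexample has no 2-separator cutting off a set from both roots. -/
lemma f1 (h : C0 G U x y k) {F : Finset V} {p q : V} (hFU : F ⊆ U) (hF : F.Nonempty)
    (hx : x ∉ F) (hy : y ∉ F)
    (hN : ∀ u ∈ F, ∀ w ∈ U, w ∉ F → G.Adj u w → w = p ∨ w = q)
    (hz : ∃ z ∈ U, z ∉ F ∧ z ≠ p ∧ z ≠ q) : False := by
  have hk := h.hk
  refine h.no (ML h.R hFU hF hx hy hN fun hpU hqU hp hq hR => ?_)
  obtain ⟨f, hf⟩ := hF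
  have hsub : insert p (insert q F) ⊆ U := Finset.insert_subset hpU (Finset.insert_subset hqU hFU)
  refine h.ih _ ?_ G p q k (by omega) hR ⟨f, by simp [hf], fun e => hp (e ▸ hf),
    fun e => hq (e ▸ hf)⟩ ?_
  · obtain ⟨z, hz, hzF, hzp, hzq⟩ := hz
    exact Finset.card_lt_card ((Finset.ssubset_iff_of_subset hsub).2 ⟨z, hz, by simp [*]⟩)
  · intro v hv hvp hvq
    have hvF : v ∈ F := by simpa [hvp, hvq] using hv
    refine (h.deg v (hFU hvF) (fun e => hx (e ▸ hvF)) (fun e => hy (e ▸ hvF))).trans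
      (Finset.card_le_card ?_)
    intro w hw
    rw [mem_nb] at hw ⊢
    refine ⟨?_, hw.2⟩
    by_cases hwF : w ∈ F
    · simp [hwF]
    · rcases hN v hvF w hw.1 hwF hw.2 with rfl | rfl <;> simp

/-- The root `x` has a neighbour different from any prescribed `c`. -/
lemma nb2 (h : C0 G U x y k) {c : V} (hc : c ≠ x) : ∃ w ∈ U, w ≠ c ∧ G.Adj x w := by
  by_contra hcon
  push Not at hcon
  obtain ⟨v, hv, hvx, hvy⟩ := h.ord
  have hd := h.deg v hv hvx hvy
  have hk := h.hk
  obtain ⟨f, hf, hf'⟩ := Finset.exists_mem_notMem_of_card_lt_card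
    (s := {x, y, c}) (t := nb G U v) ((Finset.card_le_three).trans_lt (by omega))
  rw [mem_nb] at hf
  refine h.f1 (F := U \ {x, y, c}) (p := y) (q := c) Finset.sdiff_subset
    ⟨f, by simpa [hf.1] using hf'⟩ (by simp) (by simp) ?_ ⟨x, h.R.hx, by simp, h.R.ne, hc.symm⟩
  intro u hu w hw hwF huw
  simp only [Finset.mem_sdiff, Finset.mem_insert, Finset.mem_singleton] at hu hwF
  by_contra hne
  obtain rfl : w = x := by tauto
  exact hcon u hu.1 (by tauto) huw.symm

/-- A set attached only to `x`, `z` and `c` cannot occur when `z` has two further neighbours outside it. -/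
lemma three_cut (h : C0 G U x y k) {F : Finset V} {z c b₁ b₂ : V} (hFU : F ⊆ U) (hF : F.Nonempty)
    (hx : x ∉ F) (hy : y ∉ F) (hz : z ∉ F) (hc : c ∉ F) (hzU : z ∈ U) (hzx : z ≠ x) (hzy : z ≠ y)
    (hcx : c ≠ x) (hcz : c ≠ z)
    (hN : ∀ u ∈ F, ∀ w ∈ U, w ∉ F → G.Adj u w → w = x ∨ w = z ∨ w = c)
    (hb : b₁ ≠ b₂) (h₁ : b₁ ∈ U ∧ b₁ ∉ F ∧ b₁ ≠ x ∧ b₁ ≠ c ∧ b₁ ≠ y ∧ G.Adj z b₁)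
    (h₂ : b₂ ∈ U ∧ b₂ ∉ F ∧ b₂ ≠ x ∧ b₂ ≠ c ∧ b₂ ≠ y ∧ G.Adj z b₂) : False := by
  classical
  have hk := h.hk
  have hxU := h.R.hx
  have hyU := h.R.hy
  have hxy := h.R.ne
  have hcU : c ∈ U := by
    by_contra hcU
    refine h.f1 (p := x) (q := z) hFU hF hx hy ?_ ⟨y, hyU, hy, hxy.symm, hzy.symm⟩
    intro u hu w hw hwF huw
    rcases hN u hu w hw hwF huw with rfl | rfl | rfl <;> tauto
  have hA₁ : Adm G (insert x (insert z F)) x z (k - 1) := by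
    have hsub : insert x (insert z F) ⊆ U :=
      Finset.insert_subset hxU (Finset.insert_subset hzU hFU)
    obtain ⟨f, hf⟩ := hF
    refine h.ih _ ?_ G x z (k - 1) (by omega) ⟨by simp, by simp, hzx.symm, ?_⟩
      ⟨f, by simp [hf], fun e => hx (e ▸ hf), fun e => hz (e ▸ hf)⟩ ?_
    · exact Finset.card_lt_card ((Finset.ssubset_iff_of_subset hsub).2 ⟨c, hcU, by simp [*]⟩)
    · intro F' hF' hn hx' hz' c'
      have hF'F : F' ⊆ F := by
        intro v hv
        have := hF' hv
        simp only [Finset.mem_insert] at this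
        rcases this with rfl | rfl | h
        · exact absurd hv hx'
        · exact absurd hv hz'
        · exact h
      by_contra hcon
      push Not at hcon
      have hy' : y ∉ F' := fun e => hy (hF'F e)
      refine h.f1 (p := c') (q := c) (hF'F.trans hFU) hn hx' hy' ?_ ?_
      · intro u hu w hw hwF huw
        by_contra hne
        push Not at hne
        refine hcon u hu w ?_ hwF hne.1 huw
        by_cases hwF : w ∈ F
        · simp [hwF]
        · have := hN u (hF'F hu) w hw hwF huw
          simp only [Finset.mem_insert]
          tauto
      · by_cases e : c' = x
        · exact ⟨z, hzU, hz', fun e' => hzx (e'.trans e), hcz.symm⟩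
        · exact ⟨x, hxU, hx', fun e' => e e'.symm, hcx.symm⟩
    · intro v hv hvx hvz
      have hvF : v ∈ F := by simpa [hvx, hvz] using hv
      have hd := h.deg v (hFU hvF) hvx (fun e => hy (e ▸ hvF))
      have : nb G U v ⊆ insert c (nb G (insert x (insert z F)) v) := by
        intro w hw
        simp only [mem_nb, Finset.mem_insert] at hw ⊢
        by_cases hwF : w ∈ F
        · tauto
        · have := hN v hvF w hw.1 hwF hw.2
          tauto
      have := (Finset.card_le_card this).trans (Finset.card_insert_le _ _)
      omega
  set U₄ := (U \ F).erase x with hU₄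
  have mem4 : ∀ v, v ∈ U₄ ↔ v ≠ x ∧ v ∈ U ∧ v ∉ F := fun v => by simp [hU₄]
  let P : Finset V → V → Prop := fun A w => z ∉ A ∧ y ∉ A ∧
    ∀ u ∈ A, ∀ v ∈ U₄, v ∉ A → G.Adj u v → v = w
  have hPc : ∀ A w, A ⊆ U₄ → A.Nonempty → P A w → c ∈ A := by
    rintro A w hA hn ⟨hzA, hyA, hPA⟩
    by_contra hcA
    refine h.f1 (p := w) (q := x) (F := A) (fun v hv => ((mem4 v).1 (hA hv)).2.1) hn
      (fun e => ((mem4 x).1 (hA e)).1 rfl) hyA ?_ ?_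
    · intro u hu v hv hvA huv
      by_cases hvx : v = x
      · exact Or.inr hvx
      · refine Or.inl (hPA u hu v ((mem4 v).2 ⟨hvx, hv, fun hvF => ?_⟩) hvA huv)
        have hu4 := (mem4 u).1 (hA hu)
        rcases hN v hvF u hu4.2.1 hu4.2.2 huv.symm with rfl | rfl | rfl
        · exact hu4.1 rfl
        · exact hzA hu
        · exact hcA hu
    · by_cases e : z = w
      · exact ⟨y, hyU, hyA, fun e' => hzy (e.trans e'.symm), hxy.symm⟩
      · exact ⟨z, hzU, hzA, e, hzx⟩
  have hPz : ∀ A w, A ⊆ U₄ → A.Nonempty → P A w → w ≠ z := by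
    rintro A w hA hn hP rfl
    have hcA := hPc A w hA hn hP
    obtain ⟨hzA, hyA, hPA⟩ := hP
    refine h.f1 (p := x) (q := w) (F := A ∪ F)
      (Finset.union_subset (fun v hv => ((mem4 v).1 (hA hv)).2.1) hFU) ⟨c, by simp [hcA]⟩ ?_ ?_ ?_
      ⟨y, hyU, by simp [hyA, hy], hxy.symm, hzy.symm⟩
    · rw [Finset.mem_union]
      rintro (e | e)
      · exact ((mem4 x).1 (hA e)).1 rfl
      · exact hx e
    · simp [hyA, hy]
    · intro u hu v hv hvA huv
      simp only [Finset.mem_union, not_or] at hu hvA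
      rcases hu with hu | hu
      · by_cases hvx : v = x
        · exact Or.inl hvx
        · exact Or.inr (hPA u hu v ((mem4 v).2 ⟨hvx, hv, hvA.2⟩) hvA.1 huv)
      · rcases hN u hu v hv hvA.2 huv with e | e | rfl
        · exact Or.inl e
        · exact Or.inr e
        · exact absurd hcA hvA.1
  obtain ⟨A, hAf, hAmax⟩ := (U₄.powerset.filter fun A => ∃ w, P A w).exists_max_image Finset.card
    ⟨∅, by simp only [Finset.mem_filter, Finset.mem_powerset]; exact ⟨by simp, x, by simp [P]⟩⟩
  simp only [Finset.mem_filter, Finset.mem_powerset, and_imp, forall_exists_index] at hAf hAmax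
  obtain ⟨hA4, w', hw'⟩ := hAf
  obtain ⟨w, hw, hwe, hwz⟩ : ∃ w, P A w ∧ (A.Nonempty ∨ w = c) ∧ w ≠ z := by
    by_cases hn : A.Nonempty
    · exact ⟨w', hw', Or.inl hn, hPz A w' hA4 hn hw'⟩
    · rw [Finset.not_nonempty_iff_eq_empty] at hn
      subst hn
      exact ⟨c, by simp [P], Or.inr rfl, hcz⟩
  have hcw : c ∈ A ∨ w = c := hwe.imp (fun hn => hPc A w hA4 hn hw) id
  obtain ⟨hzA, hyA, hPA⟩ := hw
  set U₅ := U₄ \ A with hU₅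
  have mem5 : ∀ v, v ∈ U₅ ↔ (v ≠ x ∧ v ∈ U ∧ v ∉ F) ∧ v ∉ A := fun v => by
    simp [hU₅, Finset.mem_sdiff, mem4]
  have hR5 : Rt G U₅ z y := by
    refine ⟨(mem5 z).2 ⟨⟨hzx, hzU, hz⟩, hzA⟩, (mem5 y).2 ⟨⟨hxy.symm, hyU, hy⟩, hyA⟩, hzy, ?_⟩
    intro B hB hn hzB hyB c'
    by_contra hcon
    push Not at hcon
    have hB4 : B ⊆ U₄ := hB.trans Finset.sdiff_subset
    have hBA : ∀ v ∈ B, v ∉ A := fun v hv => ((mem5 v).1 (hB hv)).2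
    by_cases hwB : w ∈ B ∨ A = ∅
    · have := hAmax (A ∪ B) (Finset.union_subset hA4 hB4) c' ⟨by simp [hzA, hzB],
        by simp [hyA, hyB], ?_⟩
      · rw [Finset.card_union_of_disjoint] at this
        · have := Finset.card_pos.2 hn
          omega
        · rw [Finset.disjoint_right]; exact hBA
      · intro u hu v hv hvAB huv
        simp only [Finset.mem_union, not_or] at hu hvAB
        rcases hu with hu | hu
        · have := hPA u hu v hv hvAB.1 huv
          subst this
          rcases hwB with hwB | rfl
          · exact absurd hwB hvAB.2
          · simp at hu
        · by_contra hne
          exact hcon u hu v (Finset.mem_sdiff.2 ⟨hv, hvAB.1⟩) hvAB.2 hne huv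
    · push Not at hwB
      have hcA := hPc A w hA4 hwB.2 ⟨hzA, hyA, hPA⟩
      refine absurd hcA (hBA c (hPc B c' hB4 hn ⟨hzB, hyB, ?_⟩))
      intro u hu v hv hvB huv
      by_contra hne
      refine hcon u hu v (Finset.mem_sdiff.2 ⟨hv, fun hvA => ?_⟩) hvB hne huv
      have := hPA v hvA u (hB4 hu) (hBA u hu) huv.symm
      exact hwB.1 (this ▸ hu)
  have hb5 : ∀ b, (b ∈ U ∧ b ∉ F ∧ b ≠ x ∧ b ≠ c ∧ b ≠ y ∧ G.Adj z b) → b ∈ U₅ := by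
    rintro b ⟨b1, b2, b3, b4, b5, b6⟩
    refine (mem5 b).2 ⟨⟨b3, b1, b2⟩, fun hbA => hwz ?_⟩
    exact (hPA b hbA z ((mem4 z).2 ⟨hzx, hzU, hz⟩) hzA b6.symm).symm
  have hA₂ : Adm G U₅ z y 2 := by
    refine t2 U₅ G z y w hR5 ?_ ?_
    · by_cases e : b₁ = w
      · exact ⟨b₂, hb5 b₂ h₂, h₂.2.2.2.2.2.ne', h₂.2.2.2.2.1, fun e' => hb (e.trans e'.symm)⟩
      · exact ⟨b₁, hb5 b₁ h₁, h₁.2.2.2.2.2.ne', h₁.2.2.2.2.1, e⟩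
    · intro v hv hvz hvy hvw
      obtain ⟨⟨hvx, hvU, hvF⟩, hvA⟩ := (mem5 v).1 hv
      have hd := h.deg v hvU hvx hvy
      have : nb G U v ⊆ insert x (nb G U₅ v) := by
        intro u hu
        simp only [mem_nb, Finset.mem_insert, mem5] at hu ⊢
        by_cases hux : u = x
        · exact Or.inl hux
        · refine Or.inr ⟨⟨⟨hux, hu.1, fun huF => ?_⟩, fun huA => ?_⟩, hu.2⟩
          · rcases hN u huF v hvU hvF hu.2.symm with e | e | e
            · exact hvx e
            · exact hvz e
            · rcases hcw with hcw | hcw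
              · exact hvA (e ▸ hcw)
              · exact hvw (e.trans hcw.symm)
          · exact hvw (hPA u huA v ((mem4 v).2 ⟨hvx, hvU, hvF⟩) hvA hu.2.symm)
      have := (Finset.card_le_card this).trans (Finset.card_insert_le _ _)
      omega
  refine h.no ((hA₁.conc hA₂ (U := U) (by omega) (by omega) ?_ ?_ ?_).anti (by omega))
  · intro v hv hv'
    have := (mem5 v).1 hv'
    simp only [Finset.mem_insert] at hv
    tauto
  · exact Finset.insert_subset hxU (Finset.insert_subset hzU hFU)
  · exact fun v hv => ((mem5 v).1 hv).1.2.1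

end C0

namespace St
variable {G : SimpleGraph V} {U U₀ S : Finset V} {x y q : V} {k : ℕ}

/-- The basic set-up: the target is the other root and the tail is trivial. -/
lemma mk0 (h : C0 G U x y k) (xS : x ∈ S) (SU : S ⊆ U) (yS : y ∉ S) (S2 : 2 ≤ S.card) :
    St G U x y U S y :=
  ⟨subset_rfl, xS, SU, h.R.hy, yS, fun v _ _ h => h, fun v _ _ _ w hw _ => hw, S2,
    {y}, 0, by simpa using h.R.hy, HP.single (by simp), fun v hv hvy => by simp at hv; tauto⟩

/-- The set-up around the root `y` when all neighbours of `x` except `q` lie in `S`. -/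
lemma twin (h : C0 G U x y k) (yS : y ∈ S) (SU : S ⊆ U.erase x) (hq : q ∈ U) (qS : q ∉ S)
    (hxq : G.Adj x q) (hN : ∀ v ∈ U, v ∉ S → v ≠ q → ¬ G.Adj x v) (S2 : 2 ≤ S.card) :
    St G U y x (U.erase x) S q := by
  refine ⟨Finset.erase_subset _ _, yS, SU, by simp [hq, hxq.ne'], qS, ?_, ?_, S2,
    {q, x}, 1, ?_, HP.edge (by simp) (by simp) hxq.symm, ?_⟩
  · intro v hv _ _ e
    simp [e] at hv
  · intro v hv hvS hvq w hw hvw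
    rw [Finset.mem_erase] at hv ⊢
    refine ⟨?_, hw⟩
    rintro rfl
    exact hN v hv.2 hvS hvq hvw.symm
  · intro w hw
    simp only [Finset.mem_insert, Finset.mem_singleton] at hw
    rcases hw with rfl | rfl
    · exact hq
    · exact h.R.hx
  · intro v hv hvq
    simp only [Finset.mem_insert, Finset.mem_singleton] at hv
    rcases hv with rfl | rfl
    · exact absurd rfl hvq
    · simp

lemma mem_D (s : St G U x y U₀ S q) {v : V} (hv : v ∈ reg G U₀ S q) :
    v ∈ U₀ ∧ v ∈ U ∧ v ∉ S ∧ v ≠ q ∧ v ≠ x ∧ v ≠ y := by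
  have := mem_reg.1 hv
  exact ⟨this.1.1, s.U₀U this.1.1, this.1.2, this.2.1, fun e => this.1.2 (e ▸ s.xS),
    s.ny v this.1.1 this.1.2 this.2.1⟩

/-- No part of the region has only `x` and one further vertex as outside neighbours in `U₀`. -/
lemma exp1 (h : C0 G U x y k) (s : St G U x y U₀ S q) {F : Finset V} {c : V}
    (hF : F ⊆ reg G U₀ S q) (hn : F.Nonempty) (hc : c ∉ S)
    (hN : ∀ u ∈ F, ∀ w ∈ U₀, w ∉ F → G.Adj u w → w = x ∨ w = c) : False := by
  obtain ⟨b, hb, hbx⟩ := Finset.exists_mem_ne (s := S) (by have := s.S2; omega) x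
  refine h.f1 (p := x) (q := c) (fun v hv => (s.mem_D (hF hv)).2.1) hn
    (fun e => (s.mem_D (hF e)).2.2.2.2.1 rfl) (fun e => (s.mem_D (hF e)).2.2.2.2.2 rfl) ?_
    ⟨b, s.U₀U (s.SU₀ hb), fun e => (s.mem_D (hF e)).2.2.1 hb, hbx, fun e => hc (e ▸ hb)⟩
  intro u hu w hw hwF huw
  have := s.mem_D (hF hu)
  exact hN u hu w (s.cl u this.1 this.2.2.1 this.2.2.2.1 w hw huw) hwF huw

lemma degD (h : C0 G U x y k) (s : St G U x y U₀ S q) {v : V} (hv : v ∈ reg G U₀ S q) :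
    k + 1 ≤ (nb G U₀ v).card := by
  obtain ⟨a, b, c, d, e, f⟩ := s.mem_D hv
  refine (h.deg v b e f).trans (Finset.card_le_card fun w hw => ?_)
  rw [mem_nb] at hw ⊢
  exact ⟨s.cl v a c d w hw.1 hw.2, hw.2⟩

/-- If `S` has `m` inner paths from `x` to each vertex of `E`, costs at most `m - 1` in degree, and
no set is attached only to `S \ E` and one further vertex, then no vertex outside `S` is adjacent
to `q`, since otherwise the contraction step applies. -/
lemma main (h : C0 G U x y k) (s : St G U x y U₀ S q) {E : Finset V} {m l d : ℕ}
    (hd : d = 1 ∨ d = 2) (ES : E ⊆ S) (xE : x ∉ E) (hm : 1 ≤ m)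
    (loss₁ : ∀ v ∈ U₀, v ∉ S → v ≠ q → (nb G S v).card ≤ m)
    (loss₂ : ∀ v ∈ U₀, v ∉ S → v ≠ q → (∀ e ∈ E, ¬ G.Adj v e) → (nb G S v).card ≤ m - 1)
    (β : ∀ F ⊆ reg G U₀ S q, F.Nonempty → ∀ c, (c ∈ reg G U₀ S q ∨ c = q) → c ∉ F → c ∉ S →
      (∀ u ∈ F, ∀ w ∈ U₀, w ∉ F → G.Adj u w → (w ∈ S ∧ w ∉ E) ∨ w = c) → False)
    (inner : ∀ e ∈ E, ∀ j < m, HP G (l + j * d) S x e) :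
    ∀ v ∈ U₀, v ∉ S → ¬ G.Adj v q := by
  intro v hv hvS hvq
  have hvD := reg_adj s.qU₀ s.qS hv hvS hvq
  have hqD : q ∉ reg G U₀ S q := fun hq => (s.mem_D hq).2.2.2.1 rfl
  have hCL : CL G U₀ S E (reg G U₀ S q) x q m := by
    refine ⟨s.xS, s.SU₀, ES, xE, fun v hv => (s.mem_D hv).1, fun v hv => (s.mem_D hv).2.2.1,
      s.qU₀, s.qS, hqD, hm, fun u hu w hw huw => reg_nb hu hw huw,
      fun F hF hn => reg_alpha hF hn, ?_, fun v hv => ?_, fun v hv => ?_⟩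
    · intro F hF hn c hc
      by_contra hcon
      push Not at hcon
      by_cases hcF : (c ∈ reg G U₀ S q ∨ c = q) ∧ c ∉ F
      · refine β F hF hn c hcF.1 hcF.2 hc ?_
        intro u hu w hw hwF huw
        by_contra hne
        push Not at hne
        exact hcon u hu w hw hwF hne.2 hne.1 huw
      · refine β F hF hn q (Or.inr rfl) (fun e => hqD (hF e)) s.qS ?_
        intro u hu w hw hwF huw
        by_contra hne
        push Not at hne
        refine hcon u hu w hw hwF ?_ hne.1 huw
        rintro rfl
        rcases reg_nb (hF hu) hw huw with h' | h' | h' <;> tauto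
    · have := s.mem_D hv
      exact loss₁ v this.1 this.2.2.1 this.2.2.2.1
    · have := s.mem_D hv
      exact loss₂ v this.1 this.2.2.1 this.2.2.2.1
  obtain ⟨T, t, hTU, hT, hTq⟩ := s.tail
  have hcard := hCL.card
  have hS2 := s.S2
  have hU := Finset.card_le_card s.U₀U
  refine h.no (hCL.use0 hd (fun U' hU' => h.ih U' (by omega)) ⟨v, hvD⟩
    (fun v hv => degD h s hv) inner hT ?_ ?_ (s.SU₀.trans s.U₀U) (hCL.DU.trans s.U₀U) hTU)
  · intro w hw hwS
    exact hTq w hw (fun e => s.qS (e ▸ hwS)) (s.SU₀ hwS)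
  · intro w hw hwS
    exact hTq w hw (fun e => hqD (e ▸ hwS)) (hCL.DU hwS)

/-- The contraction step for a part `F` of the region whose edges leave it only to `x`, to `E` and to a
single vertex `c`, which takes the place of `q`. -/
lemma sub (h : C0 G U x y k) (s : St G U x y U₀ S q) {E F : Finset V} {c : V} {m l d : ℕ}
    (hF : F ⊆ reg G U₀ S q) (hn : F.Nonempty) (hc : c ∈ reg G U₀ S q ∨ c = q) (hcF : c ∉ F)
    (hN : ∀ u ∈ F, ∀ w ∈ U₀, w ∉ F → G.Adj u w → w = x ∨ w ∈ E ∨ w = c)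
    (hd : d = 1 ∨ d = 2) (ES : E ⊆ S) (xE : x ∉ E) (hm : 1 ≤ m)
    (loss₁ : ∀ v ∈ F, (nb G S v).card ≤ m)
    (loss₂ : ∀ v ∈ F, (∀ e ∈ E, ¬ G.Adj v e) → (nb G S v).card ≤ m - 1)
    (inner : ∀ e ∈ E, ∀ j < m, HP G (l + j * d) S x e) : False := by
  have hcU : c ∈ U₀ ∧ c ∉ S := by
    rcases hc with hc | rfl
    · exact ⟨(s.mem_D hc).1, (s.mem_D hc).2.2.1⟩
    · exact ⟨s.qU₀, s.qS⟩
  have hN' : ∀ u ∈ F, ∀ w ∈ U₀, w ∉ F → G.Adj u w → w ∈ S ∨ w = c := by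
    intro u hu w hw hwF huw
    rcases hN u hu w hw hwF huw with rfl | h | h
    · exact Or.inl s.xS
    · exact Or.inl (ES h)
    · exact Or.inr h
  have hCL : CL G U₀ S E F x c m := by
    refine ⟨s.xS, s.SU₀, ES, xE, fun v hv => (s.mem_D (hF hv)).1,
      fun v hv => (s.mem_D (hF hv)).2.2.1,
      hcU.1, hcU.2, hcF, hm, ?_, fun F' hF' hn => reg_alpha (hF'.trans hF) hn, ?_, loss₁, loss₂⟩
    · intro u hu w hw huw
      by_cases hwF : w ∈ F
      · exact Or.inl hwF
      · exact Or.inr (hN' u hu w hw hwF huw)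
    · intro F' hF' hn c' hc'
      by_contra hcon
      push Not at hcon
      refine exp1 h s (hF'.trans hF) hn hc' ?_
      intro u hu w hw hwF huw
      by_contra hne
      push Not at hne
      have := hcon u hu w hw hwF hne.2
      by_cases hwF' : w ∈ F
      · exact this (fun e => absurd e (s.mem_D (hF hwF')).2.2.1) huw
      · rcases hN u (hF' hu) w hw hwF' huw with e | e | rfl
        · exact hne.1 e
        · exact this (fun _ => e) huw
        · exact this (fun e => absurd e hcU.2) huw
  obtain ⟨n, hcq⟩ := reg_tail s.qU₀ s.qS hF hcF hc hN'
  obtain ⟨T, t, hTU, hT, hTq⟩ := s.tail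
  have hT' := hcq.append (U := (U₀ \ S) \ F ∪ T) hT (by
    intro v hv hvT
    by_contra hvq
    simp only [Finset.mem_sdiff] at hv
    exact hTq v hvT hvq hv.1.1) Finset.subset_union_left Finset.subset_union_right rfl
  have hcard := hCL.card
  have hS2 := s.S2
  have hU := Finset.card_le_card s.U₀U
  refine h.no (hCL.use0 hd (fun U' hU' => h.ih U' (by omega)) hn
    (fun v hv => degD h s (hF hv)) inner hT' ?_ ?_ (s.SU₀.trans s.U₀U) (hCL.DU.trans s.U₀U) ?_)
  · intro w hw hwS
    simp only [Finset.mem_union, Finset.mem_sdiff] at hw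
    rcases hw with hw | hw
    · exact hw.1.2 hwS
    · exact hTq w hw (fun e => s.qS (e ▸ hwS)) (s.SU₀ hwS)
  · intro w hw hwF
    simp only [Finset.mem_union, Finset.mem_sdiff] at hw
    rcases hw with hw | hw
    · exact hw.2 hwF
    · exact hTq w hw (s.mem_D (hF hwF)).2.2.2.1 (hCL.DU hwF)
  · exact Finset.union_subset
      ((Finset.sdiff_subset.trans Finset.sdiff_subset).trans s.U₀U) hTU

end St

/-! ### Excluding triangles through a root -/

lemma nb_lt {G : SimpleGraph V} {S : Finset V} {v a : V} (ha : a ∈ S) (h : ¬ G.Adj v a) :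
    (nb G S v).card + 1 ≤ S.card := by
  refine Finset.card_lt_card ((Finset.ssubset_iff_of_subset ?_).2
    ⟨a, ha, fun e => h (mem_nb.1 e).2⟩)
  exact fun w hw => (mem_nb.1 hw).1

lemma nb_le {G : SimpleGraph V} {S T : Finset V} {v : V} (h : ∀ w ∈ S, G.Adj v w → w ∈ T) :
    (nb G S v).card ≤ T.card :=
  Finset.card_le_card fun w hw => h w (mem_nb.1 hw).1 (mem_nb.1 hw).2

/-- A set of pairwise adjacent vertices. -/
def Clq (G : SimpleGraph V) (K : Finset V) : Prop := ∀ a ∈ K, ∀ b ∈ K, a ≠ b → G.Adj a b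

lemma Clq.sub {G : SimpleGraph V} {K L : Finset V} (h : Clq G K) (hL : L ⊆ K) : Clq G L :=
  fun a ha b hb => h a (hL ha) b (hL hb)

lemma Clq.insert {G : SimpleGraph V} {K : Finset V} (h : Clq G K) {v : V}
    (hv : ∀ a ∈ K, G.Adj v a) : Clq G (insert v K) := by
  intro a ha b hb hab
  rw [Finset.mem_insert] at ha hb
  rcases ha with rfl | ha <;> rcases hb with rfl | hb
  · exact absurd rfl hab
  · exact hv b hb
  · exact (hv a ha).symm
  · exact h a ha b hb hab

/-- A clique contains paths of all lengths between any two of its vertices. -/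
lemma Clq.hp {G : SimpleGraph V} {K : Finset V} (hK : Clq G K) {j : ℕ} {x s : V} (hx : x ∈ K)
    (hs : s ∈ K) (hxs : x ≠ s) (hj : 1 ≤ j) (hjK : j + 1 ≤ K.card) : HP G j K x s := by
  induction j, hj using Nat.le_induction generalizing K x with
  | base => exact HP.edge hx hs (hK x hx s hs hxs)
  | succ j hj ih =>
    obtain ⟨z, hz, hz'⟩ := Finset.exists_mem_notMem_of_card_lt_card
      (s := {x, s}) (t := K) ((Finset.card_le_two).trans_lt (by omega))
    simp only [Finset.mem_insert, Finset.mem_singleton, not_or] at hz'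
    refine HP.cons hx (hK x hx z hz (Ne.symm hz'.1)) (ih (hK.sub (Finset.erase_subset _ _))
      (by simp [hz, hz'.1]) (by simp [hs, hxs.symm]) hz'.2 ?_)
    rw [Finset.card_erase_of_mem hx]
    omega

/-- Alternating paths in a complete bipartite graph with parts `P` and `Q`. -/
lemma bip_HP {G : SimpleGraph V} (j : ℕ) : ∀ {P Q : Finset V}, (∀ p ∈ P, ∀ q ∈ Q, G.Adj p q) →
    (∀ {x q}, x ∈ P → q ∈ Q → j + 1 ≤ P.card → j + 1 ≤ Q.card → HP G (2 * j + 1) (P ∪ Q) x q) ∧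
    (∀ {x p}, x ∈ P → p ∈ P → x ≠ p → j + 1 ≤ Q.card → j + 2 ≤ P.card →
      HP G (2 * j + 2) (P ∪ Q) x p) := by
  have disj : ∀ {P Q : Finset V}, (∀ p ∈ P, ∀ q ∈ Q, G.Adj p q) → ∀ p ∈ P, p ∉ Q :=
    fun h p hp hq => (h p hp p hq).ne rfl
  -- the even paths of index `j` come from the odd paths of index `j` with the parts exchanged
  have even : ∀ {P Q : Finset V}, (∀ p ∈ P, ∀ q ∈ Q, G.Adj p q) →
      (∀ {P Q : Finset V}, (∀ p ∈ P, ∀ q ∈ Q, G.Adj p q) → ∀ {x q}, x ∈ P → q ∈ Q →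
        j + 1 ≤ P.card → j + 1 ≤ Q.card → HP G (2 * j + 1) (P ∪ Q) x q) →
      (∀ {x p}, x ∈ P → p ∈ P → x ≠ p → j + 1 ≤ Q.card → j + 2 ≤ P.card →
      HP G (2 * j + 2) (P ∪ Q) x p) := by
    intro P Q h odd x p hx hp hxp hQ hP
    obtain ⟨q, hq⟩ := Finset.card_pos.1 (show 0 < Q.card by omega)
    have hc := Finset.card_erase_of_mem hx
    have := odd (P := Q) (Q := P.erase x)
      (fun a ha b hb => (h b (Finset.mem_of_mem_erase hb) a ha).symm)
      hq (Finset.mem_erase.2 ⟨hxp.symm, hp⟩) hQ (by omega)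
    refine HP.cons (by simp [hx]) (h x hx q hq) (this.mono ?_)
    intro v hv
    simp only [Finset.mem_union, Finset.mem_erase] at hv ⊢
    rcases hv with hv | hv
    · exact ⟨fun e => disj h x hx (e ▸ hv), Or.inr hv⟩
    · exact ⟨hv.1, Or.inl hv.2⟩
  have odd : ∀ {P Q : Finset V}, (∀ p ∈ P, ∀ q ∈ Q, G.Adj p q) → ∀ {x q}, x ∈ P → q ∈ Q →
        j + 1 ≤ P.card → j + 1 ≤ Q.card → HP G (2 * j + 1) (P ∪ Q) x q := by
    clear even
    induction j with
    | zero =>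
      intro P Q h x q hx hq _ _
      exact HP.edge (by simp [hx]) (by simp [hq]) (h x hx q hq)
    | succ j ih =>
      intro P Q h x q hx hq hP hQ
      obtain ⟨q', hq', hne⟩ := Finset.exists_mem_ne (s := Q) (by omega) q
      obtain ⟨p, hp, hpx⟩ := Finset.exists_mem_ne (s := P) (by omega) x
      have hc := Finset.card_erase_of_mem hx
      have hc' := Finset.card_erase_of_mem hq'
      have := ih (P := P.erase x) (Q := Q.erase q')
        (fun a ha b hb => h a (Finset.mem_of_mem_erase ha) b (Finset.mem_of_mem_erase hb))
        (x := p) (q := q) (by simp [hp, hpx]) (by simp [hq, hne.symm]) (by omega) (by omega)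
      have hxQ := disj h x hx
      have hq'P : q' ∉ P := fun e => disj h q' e hq'
      refine HP.cons (n := 2 * j + 1 + 1) (by simp [hx]) (h x hx q' hq')
        (HP.cons ?_ (h p hp q' hq').symm (this.mono ?_))
      · simp only [Finset.mem_union, Finset.mem_erase]
        exact ⟨fun e => hxQ (e ▸ hq'), Or.inr hq'⟩
      · intro v hv
        simp only [Finset.mem_union, Finset.mem_erase] at hv ⊢
        rcases hv with hv | hv
        · exact ⟨fun e => hq'P (e ▸ hv.2), hv.1, Or.inl hv.2⟩
        · exact ⟨hv.1, fun e => hxQ (e ▸ hv.2), Or.inr hv.2⟩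
  intro P Q h
  exact ⟨odd h, even h odd⟩

/-- A maximal set between `A` and `U` with property `P`. -/
lemma exists_maxl {U A : Finset V} {P : Finset V → Prop} (hA : A ⊆ U) (hP : P A) :
    ∃ K, A ⊆ K ∧ K ⊆ U ∧ P K ∧ ∀ v ∈ U, v ∉ K → ¬ P (insert v K) := by
  classical
  obtain ⟨K, hK, hmax⟩ := (U.powerset.filter fun K => A ⊆ K ∧ P K).exists_max_image Finset.card
    ⟨A, by simp [hA, hP]⟩
  simp only [Finset.mem_filter, Finset.mem_powerset, and_imp] at hK hmax
  refine ⟨K, hK.2.1, hK.1, hK.2.2, fun v hv hvK h => ?_⟩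
  have := hmax _ (Finset.insert_subset hv hK.1) (hK.2.1.trans (Finset.subset_insert _ _)) h
  rw [Finset.card_insert_of_notMem hvK] at this
  omega

namespace C0
variable {G : SimpleGraph V} {U : Finset V} {x y : V} {k : ℕ}

/-- If `x` lies in a triangle, a maximal clique around `x` contains all neighbours of `y`. -/
lemma tri_side (h : C0 G U x y k) {u w : V} (hu : u ∈ U) (hw : w ∈ U) (hxu : G.Adj x u)
    (hxw : G.Adj x w) (huw : G.Adj u w) :
    ∃ K ⊆ U, x ∈ K ∧ Clq G K ∧ ∀ v ∈ U, G.Adj y v → v ∈ K := by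
  obtain ⟨K, hAK, hKU, ⟨hxK, hK⟩, hmax⟩ := exists_maxl (U := U) (A := {x, u, w})
    (P := fun K => x ∈ K ∧ Clq G K) (by
      intro v hv
      simp only [Finset.mem_insert, Finset.mem_singleton] at hv
      rcases hv with rfl | rfl | rfl
      exacts [h.R.hx, hu, hw]) ⟨by simp, by
      intro a ha b hb hab
      simp only [Finset.mem_insert, Finset.mem_singleton] at ha hb
      rcases ha with rfl | rfl | rfl <;> rcases hb with rfl | rfl | rfl <;>
        first | exact absurd rfl hab | assumption | (apply SimpleGraph.Adj.symm; assumption)⟩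
  have h3 : 3 ≤ K.card := by
    have : ({x, u, w} : Finset V).card = 3 :=
      Finset.card_eq_three.2 ⟨x, u, w, hxu.ne, hxw.ne, huw.ne, rfl⟩
    rw [← this]
    exact Finset.card_le_card hAK
  have hyK : y ∉ K := fun hy => h.nadj (hK x hxK y hy h.R.ne)
  refine ⟨K, hKU, hxK, hK, fun v hv hyv => ?_⟩
  by_contra hvK
  have s := St.mk0 h hxK hKU hyK (by omega)
  refine St.main h s (E := K.erase x) (m := K.card - 1) (l := 1) (d := 1) (Or.inl rfl)
    (Finset.erase_subset _ _) (by simp) (by omega) ?_ ?_ ?_ ?_ v hv hvK hyv.symm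
  · intro v hv hvK _
    have : ∃ a ∈ K, ¬ G.Adj v a := by
      by_contra hcon
      push Not at hcon
      exact hmax v hv hvK ⟨by simp [hxK], hK.insert hcon⟩
    obtain ⟨a, ha, hva⟩ := this
    have := nb_lt ha hva
    omega
  · intro v hv hvK _ hE
    have := nb_le (G := G) (S := K) (T := {x}) (v := v) (fun w hw hvw => by
      by_contra hne
      exact hE w (by simpa [hw] using hne) hvw)
    rw [Finset.card_singleton] at this
    omega
  · intro F hF hn c _ _ hc hN
    refine s.exp1 h hF hn hc fun u hu w hw hwF huw => ?_
    rcases hN u hu w hw hwF huw with ⟨h1, h2⟩ | h1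
    · left
      simpa [h1] using h2
    · exact Or.inr h1
  · intro e he j hj
    rw [Finset.mem_erase] at he
    exact hK.hp hxK he.2 he.1.symm (by omega) (by omega)

/-- A root lies in no triangle. -/
lemma no_tri (h : C0 G U x y k) {u w : V} (hu : u ∈ U) (hw : w ∈ U) (hxu : G.Adj x u)
    (hxw : G.Adj x w) (huw : G.Adj u w) : False := by
  obtain ⟨K, hKU, hxK, hK, hyK⟩ := h.tri_side hu hw hxu hxw huw
  obtain ⟨a, ha, -, hya⟩ := h.symm.nb2 (c := x) h.R.ne
  obtain ⟨b, hb, hba, hyb⟩ := h.symm.nb2 (c := a) hya.ne'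
  obtain ⟨K', hKU', hyK', hK', hxK'⟩ := h.symm.tri_side ha hb hya hyb
    (hK a (hyK a ha hya) b (hyK b hb hyb) hba.symm)
  have hN : ∀ v ∈ U, (G.Adj x v ↔ G.Adj y v) := by
    intro v hv
    constructor
    · intro hxv
      exact hK' y hyK' v (hxK' v hv hxv) (h.ne_y hxv).symm
    · intro hyv
      exact hK x hxK v (hyK v hv hyv) (h.symm.ne_y hyv).symm
  set C := nb G U x with hC
  have memC : ∀ v, v ∈ C ↔ v ∈ U ∧ G.Adj x v := fun v => mem_nb
  have hCc : Clq G C := hK.sub fun v hv =>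
    hyK v ((memC v).1 hv).1 ((hN v ((memC v).1 hv).1).1 ((memC v).1 hv).2)
  have hr : 2 ≤ C.card := by
    rw [← Finset.card_pair huw.ne]
    refine Finset.card_le_card fun v hv => ?_
    simp only [Finset.mem_insert, Finset.mem_singleton] at hv
    rw [memC]
    rcases hv with rfl | rfl <;> constructor <;> assumption
  have hxC : x ∉ C := by simp [memC]
  have hyC : y ∉ C := by simp [memC, h.nadj]
  by_cases hex : ∃ u ∈ C, ∃ v ∈ U, v ∉ C ∧ v ≠ x ∧ v ≠ y ∧ G.Adj v u
  · obtain ⟨u, huC, v, hv, hvC, hvx, hvy, hvu⟩ := hex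
    have hu' := (memC u).1 huC
    have hcE := Finset.card_erase_of_mem huC
    have hyE : y ∉ C.erase u := fun e => hyC (Finset.mem_of_mem_erase e)
    have hcS : (insert y (C.erase u)).card = C.card := by
      rw [Finset.card_insert_of_notMem hyE]
      omega
    have memS : ∀ w, w ∈ insert y (C.erase u) ↔ w = y ∨ (w ≠ u ∧ w ∈ C) := by simp
    have huy := h.ne_y hu'.2
    have s := St.twin h (S := insert y (C.erase u)) (q := u) (by simp) (by
      intro w hw
      rw [memS] at hw
      rw [Finset.mem_erase]
      rcases hw with rfl | hw
      · exact ⟨h.R.ne.symm, h.R.hy⟩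
      · have := (memC w).1 hw.2
        exact ⟨this.2.ne', this.1⟩) hu'.1 (by simp [huy]) hu'.2 (by
      intro w hw hwS hwu hxw
      exact hwS ((memS w).2 (Or.inr ⟨hwu, (memC w).2 ⟨hw, hxw⟩⟩))) (by omega)
    have hSc : Clq G (insert y (C.erase u)) := (hCc.sub (Finset.erase_subset _ _)).insert
      fun w hw => by
        have := (memC w).1 (Finset.mem_of_mem_erase hw)
        exact (hN w this.1).1 this.2
    have hnE : ∀ w ∈ U.erase x, w ∉ insert y (C.erase u) → w ≠ u → ¬ G.Adj y w := by
      intro w hw hwS hwu hyw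
      have hw' := Finset.mem_of_mem_erase hw
      exact hwS ((memS w).2 (Or.inr ⟨hwu, (memC w).2 ⟨hw', (hN w hw').2 hyw⟩⟩))
    refine St.main h.symm s (E := C.erase u) (m := C.card - 1) (l := 1) (d := 1) (Or.inl rfl)
      (Finset.subset_insert _ _) hyE (by omega) ?_ ?_ ?_ ?_ v (by simp [hv, hvx]) (by
        rw [memS]; tauto) hvu
    · intro w hw hwS hwu
      have := nb_lt (G := G) (Finset.mem_insert_self y (C.erase u))
        (fun e => hnE w hw hwS hwu e.symm)
      omega
    · intro w hw hwS hwu hE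
      have := nb_le (G := G) (S := insert y (C.erase u)) (T := ∅) (v := w) (fun t ht hwt => by
        rcases Finset.mem_insert.1 ht with rfl | ht
        · exact absurd hwt.symm (hnE w hw hwS hwu)
        · exact absurd hwt (hE t ht))
      rw [Finset.card_empty] at this
      omega
    · intro F hF hn c _ _ hc hN
      refine s.exp1 h.symm hF hn hc fun u hu w hw hwF huw => ?_
      rcases hN u hu w hw hwF huw with ⟨h1, h2⟩ | h1
      · exact Or.inl ((Finset.mem_insert.1 h1).resolve_right h2)
      · exact Or.inr h1
    · intro e he j hj
      exact hSc.hp (by simp) (by simp [he]) (fun e' => hyE (e' ▸ he)) (by omega) (by omega)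
  · push Not at hex
    have huC : u ∈ C := (memC u).2 ⟨hu, hxu⟩
    have hk : k ≤ C.card := by
      have h1 := h.deg u hu hxu.ne' (h.ne_y hxu)
      have h2 := nb_le (G := G) (S := U) (T := insert x (insert y (C.erase u))) (v := u)
        (fun w hw huw => by
          simp only [Finset.mem_insert, Finset.mem_erase]
          by_contra hne
          push Not at hne
          exact hex u huC w hw (fun e => huw.ne' (by tauto)) hne.1 hne.2.1 huw.symm)
      have h3 := Finset.card_insert_le x (insert y (C.erase u))
      have h4 := Finset.card_insert_le y (C.erase u)
      have h5 := Finset.card_erase_of_mem huC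
      omega
    refine h.no ⟨2, 1, Or.inl rfl, le_rfl, fun i hi => ?_⟩
    have hxCc : Clq G (insert x C) := hCc.insert fun v hv => ((memC v).1 hv).2
    have p1 : HP G (i + 1) (insert x C) x u := hxCc.hp (by simp) (by simp [huC]) hxu.ne (by omega)
      (by rw [Finset.card_insert_of_notMem hxC]; omega)
    have p2 : HP G 1 {u, y} u y := HP.edge (by simp) (by simp) ((hN u hu).1 hxu).symm
    refine p1.append p2 ?_ ?_ ?_ (by omega)
    · intro v hv hv'
      simp only [Finset.mem_insert, Finset.mem_singleton] at hv hv'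
      rcases hv' with rfl | rfl
      · rfl
      · rcases hv with e | e
        · exact absurd e h.R.ne.symm
        · exact absurd e hyC
    · exact Finset.insert_subset h.R.hx fun v hv => ((memC v).1 hv).1
    · intro v hv
      simp only [Finset.mem_insert, Finset.mem_singleton] at hv
      rcases hv with rfl | rfl
      exacts [hu, h.R.hy]

end C0

/-! ### Excluding triangles at a neighbour of a root -/

namespace C0
variable {G : SimpleGraph V} {U : Finset V} {x y : V} {k : ℕ}

/-- A maximal clique joined to two neighbours `b` and `t` of `x` forces all neighbours of `y` to
be `b` or `t`. -/
lemma tri_nb_pair (h : C0 G U x y k) {b t : V} {L : Finset V} (hbt : b ≠ t) (hb : b ∈ U)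
    (ht : t ∈ U) (hxb : G.Adj x b) (hxt : G.Adj x t) (LU : L ⊆ U) (hL : Clq G L)
    (L2 : 2 ≤ L.card) (hbL : ∀ l ∈ L, G.Adj b l) (htL : ∀ l ∈ L, G.Adj t l)
    (hmax : ∀ v ∈ U, v ∉ L → ¬ (G.Adj b v ∧ G.Adj t v ∧ ∀ l ∈ L, G.Adj v l)) :
    ∀ v ∈ U, G.Adj y v → v = b ∨ v = t := by
  have hxL : x ∉ L := fun hx => by
    obtain ⟨l, hl, hlx⟩ := Finset.exists_mem_ne (s := L) (by omega) x
    exact h.no_tri hb (LU hl) hxb (hL x hx l hl hlx.symm) (hbL l hl)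
  have hyL : y ∉ L := fun hy => by
    obtain ⟨l, hl, hly⟩ := Finset.exists_mem_ne (s := L) (by omega) y
    exact h.symm.no_tri hb (LU hl) (hbL y hy).symm (hL y hy l hl hly.symm) (hbL l hl)
  have hbL' : b ∉ L := fun hb' => (hbL b hb').ne rfl
  have htL' : t ∉ L := fun ht' => (htL t ht').ne rfl
  have hby := h.ne_y hxb
  have hty := h.ne_y hxt
  set S := insert x (insert b (insert t L)) with hS
  have memS : ∀ v, v ∈ S ↔ v = x ∨ v = b ∨ v = t ∨ v ∈ L := fun v => by simp [hS]
  have hyS : y ∉ S := by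
    rw [memS]
    have := h.R.ne
    tauto
  have hSU : S ⊆ U := Finset.insert_subset h.R.hx (Finset.insert_subset hb
    (Finset.insert_subset ht LU))
  have hc2 : (insert b (insert t L)).card = L.card + 2 := by
    rw [Finset.card_insert_of_notMem (by simp [hbt, hbL']), Finset.card_insert_of_notMem htL']
  have hS2 : 2 ≤ S.card := L2.trans (Finset.card_le_card fun v hv => by rw [memS]; tauto)
  have s := St.mk0 h (S := S) (by simp [hS]) hSU hyS hS2
  have hx1 : ∀ v ∈ U, v ≠ b → v ≠ t → G.Adj v x → ¬ G.Adj v b ∧ ¬ G.Adj v t := by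
    intro v hv hvb hvt hvx
    exact ⟨fun e => h.no_tri hv hb hvx.symm hxb e, fun e => h.no_tri hv ht hvx.symm hxt e⟩
  -- a vertex outside `S` with no neighbour in `L` has at most two neighbours in `S`
  have hloss2 : ∀ v ∈ U, v ∉ S → (∀ e ∈ L, ¬ G.Adj v e) → (nb G S v).card ≤ 2 := by
    intro v hv hvS hE
    rw [memS] at hvS
    by_cases hvx : G.Adj v x
    · have := hx1 v hv (by tauto) (by tauto) hvx
      refine (nb_le (T := {x}) fun w hw hvw => ?_).trans (by simp)
      rcases (memS w).1 hw with rfl | rfl | rfl | hw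
      · simp
      · tauto
      · tauto
      · exact absurd hvw (hE w hw)
    · refine (nb_le (T := {b, t}) fun w hw hvw => ?_).trans Finset.card_le_two
      rcases (memS w).1 hw with rfl | rfl | rfl | hw
      · exact absurd hvw hvx
      · simp
      · simp
      · exact absurd hvw (hE w hw)
  have key := St.main h s (E := L) (m := L.card + 1) (l := 2) (d := 1) (Or.inl rfl)
    (fun v hv => by rw [memS]; tauto) hxL (by omega) ?_ ?_ ?_ ?_
  · have hmem : ∀ v ∈ U, G.Adj y v → v = b ∨ v = t ∨ v ∈ L := by
      intro v hv hyv
      have hvS : v ∈ S := by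
        by_contra hvS
        exact key v hv hvS hyv.symm
      exact ((memS v).1 hvS).resolve_left (h.symm.ne_y hyv)
    intro v hv hyv
    rcases hmem v hv hyv with e | e | hvL
    · exact Or.inl e
    · exact Or.inr e
    · exfalso
      obtain ⟨w, hw, hwv, hyw⟩ := h.symm.nb2 (c := v) hyv.ne'
      refine h.symm.no_tri hv hw hyv hyw ?_
      rcases hmem w hw hyw with rfl | rfl | hwL
      · exact (hbL v hvL).symm
      · exact (htL v hvL).symm
      · exact hL v hvL w hwL hwv.symm
  · intro v hv hvS _
    have hvS' := hvS
    rw [memS] at hvS'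
    by_cases hvx : G.Adj v x
    · have := hx1 v hv (by tauto) (by tauto) hvx
      refine (nb_le (T := insert x L) fun w hw hvw => ?_).trans (Finset.card_insert_le _ _)
      rcases (memS w).1 hw with rfl | rfl | rfl | hw
      · simp
      · tauto
      · tauto
      · simp [hw]
    · have : ∃ a ∈ insert b (insert t L), ¬ G.Adj v a := by
        by_contra hcon
        push Not at hcon
        exact hmax v hv (by tauto) ⟨(hcon b (by simp)).symm, (hcon t (by simp)).symm,
          fun l hl => hcon l (by simp [hl])⟩
      obtain ⟨a, ha, hva⟩ := this
      refine (nb_le (T := (insert b (insert t L)).erase a) fun w hw hvw => ?_).trans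
        (by rw [Finset.card_erase_of_mem ha]; omega)
      rw [Finset.mem_erase]
      refine ⟨fun e => hva (e ▸ hvw), ?_⟩
      rcases (memS w).1 hw with rfl | h'
      · exact absurd hvw hvx
      · simpa using h'
  · intro v hv hvS _ hE
    have := hloss2 v hv hvS hE
    omega
  · intro F hF hn c hc hcF hcS hN
    have hFN : ∀ v ∈ F, ∀ e ∈ L, ¬ G.Adj v e := by
      intro v hv e he hve
      have heS : e ∈ S := by rw [memS]; tauto
      rcases hN v hv e (LU he) (fun e' => (s.mem_D (hF e')).2.2.1 heS) hve with h' | rfl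
      · exact h'.2 he
      · exact hcS heS
    refine St.sub h s (E := {b, t}) (F := F) (c := c) (m := 2) (l := 1) (d := 2) hF hn hc hcF ?_
      (Or.inr rfl) ?_ ?_ (by omega) ?_ ?_ ?_
    · intro u hu w hw hwF huw
      rcases hN u hu w hw hwF huw with h' | h'
      · rw [memS] at h'
        simp only [Finset.mem_insert, Finset.mem_singleton]
        tauto
      · tauto
    · intro v hv
      simp only [Finset.mem_insert, Finset.mem_singleton] at hv
      rw [memS]
      tauto
    · simp [hxb.ne, hxt.ne]
    · intro v hv
      have := s.mem_D (hF hv)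
      exact hloss2 v this.1 this.2.2.1 (hFN v hv)
    · intro v hv hE
      refine (nb_le (T := {x}) fun w hw hvw => ?_).trans (by simp)
      rcases (memS w).1 hw with rfl | rfl | rfl | hw
      · simp
      · exact absurd hvw (hE w (by simp))
      · exact absurd hvw (hE w (by simp))
      · exact absurd hvw (hFN v hv w hw)
    · intro e he j hj
      obtain ⟨l, hl⟩ := Finset.card_pos.1 (show 0 < L.card by omega)
      have hlx : l ≠ x := fun e => hxL (e ▸ hl)
      have hlb := hbL l hl
      have hlt := htL l hl
      simp only [Finset.mem_insert, Finset.mem_singleton] at he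
      obtain rfl | rfl : j = 0 ∨ j = 1 := by omega
      · rcases he with rfl | rfl
        · exact HP.edge (by simp [hS]) (by simp [hS]) hxb
        · exact HP.edge (by simp [hS]) (by simp [hS]) hxt
      · rcases he with rfl | rfl
        · exact HP.cons (n := 2) (by simp [hS]) hxt (HP.cons (n := 1)
            (by simp [hS, hxt.ne']) hlt (HP.edge (by simp [memS, hl, hlx, hlt.ne'])
              (by simp [memS, hbt, hxb.ne']) hlb.symm))
        · exact HP.cons (n := 2) (by simp [hS]) hxb (HP.cons (n := 1)
            (by simp [hS, hxb.ne']) hlb (HP.edge (by simp [memS, hl, hlx, hlb.ne'])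
              (by simp [memS, hbt.symm, hxt.ne']) hlt.symm))
  · intro e he j hj
    have hbe : b ≠ e := fun e' => hbL' (e' ▸ he)
    have hte : t ≠ e := fun e' => htL' (e' ▸ he)
    by_cases hj' : j + 1 ≤ L.card
    · have p := (hL.insert hbL).hp (j := 1 + j) (x := b) (s := e) (by simp) (by simp [he]) hbe
        (by omega) (by rw [Finset.card_insert_of_notMem hbL']; omega)
      rw [show 2 + j * 1 = (1 + j) + 1 by ring]
      refine HP.cons (by simp [hS]) hxb (p.mono ?_)
      intro v hv
      rw [Finset.mem_insert] at hv
      rw [Finset.mem_erase, memS]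
      rcases hv with rfl | hv
      · exact ⟨hxb.ne', by tauto⟩
      · exact ⟨fun e => hxL (e ▸ hv), by tauto⟩
    · obtain ⟨l, hl, hle⟩ := Finset.exists_mem_ne (s := L) (by omega) e
      have hlx : l ≠ x := fun e => hxL (e ▸ hl)
      have hlb := hbL l hl
      have hlt := htL l hl
      have htE : t ∉ L.erase l := fun e => htL' (Finset.mem_of_mem_erase e)
      have hcl : (insert t (L.erase l)).card = L.card := by
        rw [Finset.card_insert_of_notMem htE, Finset.card_erase_of_mem hl]
        omega
      have p := ((hL.sub (Finset.erase_subset l L)).insert (v := t)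
        (fun v hv => htL v (Finset.mem_of_mem_erase hv))).hp (j := L.card - 1) (x := t) (s := e)
        (by simp) (by simp [he, hle.symm]) hte (by omega) (by omega)
      rw [show 2 + j * 1 = L.card - 1 + 1 + 1 + 1 by omega]
      refine HP.cons (by simp [hS]) hxb (HP.cons (by simp [hS, hxb.ne']) hlb
        (HP.cons (by simp [memS, hl, hlx, hlb.ne']) hlt.symm (p.mono ?_)))
      intro v hv
      rw [Finset.mem_insert, Finset.mem_erase] at hv
      simp only [Finset.mem_erase, memS]
      rcases hv with rfl | hv
      · exact ⟨hlt.ne, hbt.symm, hxt.ne', by tauto⟩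
      · exact ⟨hv.1, fun e => hbL' (e ▸ hv.2), fun e => hxL (e ▸ hv.2), by tauto⟩

/-- By symmetry of the roots the situation of `tri_nb_pair` cannot occur. -/
lemma tri_nb_pair_false (h : C0 G U x y k) {b t : V} {L : Finset V} (hbt : b ≠ t) (hb : b ∈ U)
    (ht : t ∈ U) (hxb : G.Adj x b) (hxt : G.Adj x t) (LU : L ⊆ U) (hL : Clq G L)
    (L2 : 2 ≤ L.card) (hbL : ∀ l ∈ L, G.Adj b l) (htL : ∀ l ∈ L, G.Adj t l)
    (hmax : ∀ v ∈ U, v ∉ L → ¬ (G.Adj b v ∧ G.Adj t v ∧ ∀ l ∈ L, G.Adj v l)) : False := by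
  have hy := h.tri_nb_pair hbt hb ht hxb hxt LU hL L2 hbL htL hmax
  have hby := h.ne_y hxb
  have hty := h.ne_y hxt
  have hyb : G.Adj y b := by
    obtain ⟨w, hw, hwt, hyw⟩ := h.symm.nb2 (c := t) hty
    rcases hy w hw hyw with rfl | rfl
    · exact hyw
    · exact absurd rfl hwt
  have hyt : G.Adj y t := by
    obtain ⟨w, hw, hwb, hyw⟩ := h.symm.nb2 (c := b) hby
    rcases hy w hw hyw with rfl | rfl
    · exact absurd rfl hwb
    · exact hyw
  have hx := h.symm.tri_nb_pair hbt hb ht hyb hyt LU hL L2 hbL htL hmax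
  obtain ⟨l, hl, hlx⟩ := Finset.exists_mem_ne (s := L) (by omega) x
  have hbl := hbL l hl
  have htl := htL l hl
  have hly : l ≠ y := by
    rintro rfl
    obtain ⟨l', hl', hne⟩ := Finset.exists_mem_ne (s := L) (by omega) l
    exact h.symm.no_tri hb (LU hl') hyb (hL l hl l' hl' hne.symm) (hbL l' hl')
  refine h.f1 (F := U \ {x, y, b, t}) (p := b) (q := t) Finset.sdiff_subset
    ⟨l, by simp [LU hl, hlx, hly, hbl.ne', htl.ne']⟩ (by simp) (by simp) ?_
    ⟨x, h.R.hx, by simp, hxb.ne, hxt.ne⟩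
  intro u hu w hw hwF huw
  simp only [Finset.mem_sdiff, Finset.mem_insert, Finset.mem_singleton, not_or] at hu hwF
  have h1 := hx u hu.1
  have h2 := hy u hu.1
  by_contra hne
  obtain rfl | rfl : w = x ∨ w = y := by tauto
  · have := h1 huw.symm
    tauto
  · have := h2 huw.symm
    tauto

/-- No neighbour of a root lies in a triangle. -/
lemma no_tri_nb (h : C0 G U x y k) {b l₁ l₂ : V} (hb : b ∈ U) (hxb : G.Adj x b) (hl₁ : l₁ ∈ U)
    (hl₂ : l₂ ∈ U) (hbl₁ : G.Adj b l₁) (hbl₂ : G.Adj b l₂) (hl : G.Adj l₁ l₂) : False := by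
  obtain ⟨L, hAL, LU, ⟨hL, hbL⟩, hmax⟩ := exists_maxl (U := U) (A := {l₁, l₂})
    (P := fun K => Clq G K ∧ ∀ l ∈ K, G.Adj b l) (by
      intro v hv
      simp only [Finset.mem_insert, Finset.mem_singleton] at hv
      rcases hv with rfl | rfl <;> assumption) ⟨by
      intro a ha b hb hab
      simp only [Finset.mem_insert, Finset.mem_singleton] at ha hb
      rcases ha with rfl | rfl <;> rcases hb with rfl | rfl
      exacts [absurd rfl hab, hl, hl.symm, absurd rfl hab], by
      intro v hv
      simp only [Finset.mem_insert, Finset.mem_singleton] at hv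
      rcases hv with rfl | rfl <;> assumption⟩
  have L2 : 2 ≤ L.card := by
    rw [← Finset.card_pair hl.ne]
    exact Finset.card_le_card hAL
  have hl₁L : l₁ ∈ L := hAL (by simp)
  have hl₂L : l₂ ∈ L := hAL (by simp)
  have hxL : x ∉ L := fun hx => by
    obtain ⟨l, hl, hlx⟩ := Finset.exists_mem_ne (s := L) (by omega) x
    exact h.no_tri hb (LU hl) hxb (hL x hx l hl hlx.symm) (hbL l hl)
  have hyL : y ∉ L := fun hy => by
    obtain ⟨l, hl, hly⟩ := Finset.exists_mem_ne (s := L) (by omega) y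
    exact h.symm.no_tri hb (LU hl) (hbL y hy).symm (hL y hy l hl hly.symm) (hbL l hl)
  have hbL' : b ∉ L := fun hb' => (hbL b hb').ne rfl
  have hby := h.ne_y hxb
  by_cases hex : ∃ t ∈ U, t ≠ b ∧ G.Adj x t ∧ ∀ l ∈ L, G.Adj t l
  · obtain ⟨t, ht, htb, hxt, htL⟩ := hex
    obtain ⟨K, hLK, KU, ⟨hK, hbK, htK⟩, hmax⟩ := exists_maxl (U := U) (A := L)
      (P := fun K => Clq G K ∧ (∀ l ∈ K, G.Adj b l) ∧ ∀ l ∈ K, G.Adj t l) LU ⟨hL, hbL, htL⟩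
    refine h.tri_nb_pair_false htb.symm hb ht hxb hxt KU hK
      (L2.trans (Finset.card_le_card hLK)) hbK htK ?_
    rintro v hv hvK ⟨h1, h2, h3⟩
    refine hmax v hv hvK ⟨hK.insert h3, ?_, ?_⟩ <;>
    · intro l hl
      rcases Finset.mem_insert.1 hl with rfl | hl
      · assumption
      · first | exact hbK l hl | exact htK l hl
  push Not at hex
  set S := insert x (insert b L) with hS
  have memS : ∀ v, v ∈ S ↔ v = x ∨ v = b ∨ v ∈ L := fun v => by simp [hS]
  have hyS : y ∉ S := by
    rw [memS]
    have := h.R.ne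
    tauto
  have hSU : S ⊆ U := Finset.insert_subset h.R.hx (Finset.insert_subset hb LU)
  have hc2 : (insert b L).card = L.card + 1 := Finset.card_insert_of_notMem hbL'
  have hS2 : 2 ≤ S.card := L2.trans (Finset.card_le_card fun v hv => by rw [memS]; tauto)
  have s := St.mk0 h (S := S) (by simp [hS]) hSU hyS hS2
  have hx1 : ∀ v ∈ U, v ≠ b → G.Adj v x → ¬ G.Adj v b := by
    intro v hv hvb hvx e
    exact h.no_tri hv hb hvx.symm hxb e
  have key := St.main h s (E := L) (m := L.card) (l := 2) (d := 1) (Or.inl rfl)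
    (fun v hv => by rw [memS]; tauto) hxL (by omega) ?_ ?_ ?_ ?_
  · have hmem : ∀ v ∈ U, G.Adj y v → v ∈ insert b L := by
      intro v hv hyv
      have hvS : v ∈ S := by
        by_contra hvS
        exact key v hv hvS hyv.symm
      have := ((memS v).1 hvS).resolve_left (h.symm.ne_y hyv)
      simpa using this
    obtain ⟨v, hv, -, hyv⟩ := h.symm.nb2 (c := x) h.R.ne
    obtain ⟨w, hw, hwv, hyw⟩ := h.symm.nb2 (c := v) hyv.ne'
    exact h.symm.no_tri hv hw hyv hyw
      ((hL.insert hbL) v (hmem v hv hyv) w (hmem w hw hyw) hwv.symm)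
  · intro v hv hvS _
    have hvS' := hvS
    rw [memS] at hvS'
    by_cases hvx : G.Adj v x
    · have h1 := hx1 v hv (by tauto) hvx
      obtain ⟨a, ha, hva⟩ := hex v hv (by tauto) hvx.symm
      refine (nb_le (T := insert x (L.erase a)) fun w hw hvw => ?_).trans
        ((Finset.card_insert_le _ _).trans (by rw [Finset.card_erase_of_mem ha]; omega))
      rcases (memS w).1 hw with rfl | rfl | hw
      · simp
      · tauto
      · simp only [Finset.mem_insert, Finset.mem_erase]
        exact Or.inr ⟨fun e => hva (e ▸ hvw), hw⟩
    · have : ∃ a ∈ insert b L, ¬ G.Adj v a := by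
        by_contra hcon
        push Not at hcon
        refine hmax v hv (by tauto) ⟨hL.insert fun l hl => hcon l (by simp [hl]), ?_⟩
        intro l hl
        rcases Finset.mem_insert.1 hl with rfl | hl
        · exact (hcon b (by simp)).symm
        · exact hbL l hl
      obtain ⟨a, ha, hva⟩ := this
      refine (nb_le (T := (insert b L).erase a) fun w hw hvw => ?_).trans
        (by rw [Finset.card_erase_of_mem ha]; omega)
      rw [Finset.mem_erase]
      refine ⟨fun e => hva (e ▸ hvw), ?_⟩
      rcases (memS w).1 hw with rfl | h'
      · exact absurd hvw hvx
      · simpa using h'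
  · intro v hv hvS _ hE
    rw [memS] at hvS
    by_cases hvx : G.Adj v x
    · have := hx1 v hv (by tauto) hvx
      refine (nb_le (T := {x}) fun w hw hvw => ?_).trans (by simp; omega)
      rcases (memS w).1 hw with rfl | rfl | hw
      · simp
      · tauto
      · exact absurd hvw (hE w hw)
    · refine (nb_le (T := {b}) fun w hw hvw => ?_).trans (by simp; omega)
      rcases (memS w).1 hw with rfl | rfl | hw
      · exact absurd hvw hvx
      · simp
      · exact absurd hvw (hE w hw)
  · intro F hF hn c hc hcF hcS hN
    have hFS : ∀ v ∈ S, v ∉ F := fun v hv hvF => (s.mem_D (hF hvF)).2.2.1 hv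
    have hbl : ∀ l ∈ L, l ∈ U ∧ l ∉ F ∧ l ≠ x ∧ l ≠ c ∧ l ≠ y ∧ G.Adj b l := by
      intro l hl
      have hlS : l ∈ S := by rw [memS]; tauto
      exact ⟨LU hl, hFS l hlS, fun e => hxL (e ▸ hl), fun e => hcS (e ▸ hlS),
        fun e => hyL (e ▸ hl), hbL l hl⟩
    refine h.three_cut (F := F) (z := b) (c := c) (fun v hv => (s.mem_D (hF hv)).1) hn
      (hFS x (by simp [hS])) (fun hy => (s.mem_D (hF hy)).2.2.2.2.2 rfl) (hFS b (by simp [hS])) hcF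
      hb hxb.ne' hby (fun e => hcS (by simp [hS, e])) (fun e => hcS (by simp [hS, e])) ?_ hl.ne
      (hbl l₁ hl₁L) (hbl l₂ hl₂L)
    intro u hu w hw hwF huw
    rcases hN u hu w hw hwF huw with h' | h'
    · rw [memS] at h'
      tauto
    · tauto
  · intro e he j hj
    have hbe : b ≠ e := fun e' => hbL' (e' ▸ he)
    have p := (hL.insert hbL).hp (j := 1 + j) (x := b) (s := e) (by simp) (by simp [he]) hbe
      (by omega) (by omega)
    rw [show 2 + j * 1 = (1 + j) + 1 by ring]
    refine HP.cons (by simp [hS]) hxb (p.mono ?_)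
    intro v hv
    rw [Finset.mem_insert] at hv
    rw [Finset.mem_erase, memS]
    rcases hv with rfl | hv
    · exact ⟨hxb.ne', by tauto⟩
    · exact ⟨fun e => hxL (e ▸ hv), by tauto⟩

end C0

/-! ### The dense bipartite piece and the path theorem -/

open Classical in
/-- The common neighbours in `U` of the vertices of `A`. -/
noncomputable def cn (G : SimpleGraph V) (U A : Finset V) : Finset V :=
  U.filter fun v => ∀ a ∈ A, G.Adj a v

lemma mem_cn {G : SimpleGraph V} {U A : Finset V} {v : V} :
    v ∈ cn G U A ↔ v ∈ U ∧ ∀ a ∈ A, G.Adj a v := by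
  simp [cn]

namespace C0
variable {G : SimpleGraph V} {U : Finset V} {x y : V} {k : ℕ}

/-- Around `x` there is a maximal set `A` with at least `|A|` common neighbours, and the neighbours
of `y` all lie on one side of the resulting complete bipartite graph. -/
lemma big (h : C0 G U x y k) : ∃ A ⊆ U, x ∈ A ∧ y ∉ A ∧ A.card ≤ (cn G U A).card ∧
    (∀ v ∈ U, v ≠ y → v ∉ A → (nb G (cn G U A) v).card ≤ A.card) ∧
    ((∀ v ∈ U, G.Adj y v → v ∈ cn G U A) ∨ (∀ v ∈ U, G.Adj y v → v ∈ A)) := by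
  have hxy := h.R.ne
  obtain ⟨A, hxA, hAU, hA, hmax⟩ := exists_maxl (U := U.erase y) (A := {x})
    (P := fun K => K.card ≤ (cn G U K).card) (by simp [h.R.hx, h.R.ne]) (by
      obtain ⟨w, hw, -, hxw⟩ := h.nb2 h.R.ne.symm
      rw [Finset.card_singleton]
      exact Finset.card_pos.2 ⟨w, by simp [mem_cn, hw, hxw]⟩)
  rw [Finset.singleton_subset_iff] at hxA
  have hyA : y ∉ A := fun hy => by simpa using hAU hy
  replace hAU : A ⊆ U := hAU.trans (Finset.erase_subset _ _)
  set B := cn G U A with hB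
  have hAB : ∀ a ∈ A, ∀ b ∈ B, G.Adj a b := fun a ha b hb => (mem_cn.1 hb).2 a ha
  have hBU : B ⊆ U := fun b hb => (mem_cn.1 hb).1
  have hxB : ∀ b ∈ B, G.Adj x b := hAB x hxA
  have hdis : ∀ a ∈ A, a ∉ B := fun a ha hb => (hAB a ha a hb).ne rfl
  have hyB : y ∉ B := fun hy => h.nadj (hxB y hy)
  have hmaxl : ∀ v ∈ U, v ≠ y → v ∉ A → (nb G B v).card ≤ A.card := by
    intro v hv hvy hvA
    by_contra hcon
    refine hmax v (by simp [hv, hvy]) hvA ?_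
    rw [Finset.card_insert_of_notMem hvA]
    refine (show A.card + 1 ≤ (nb G B v).card by omega).trans (Finset.card_le_card fun w hw => ?_)
    rw [mem_nb] at hw
    rw [mem_cn]
    refine ⟨hBU hw.1, fun a ha => ?_⟩
    rcases Finset.mem_insert.1 ha with rfl | ha
    · exact hw.2
    · exact hAB a ha w hw.1
  have hA1 := Finset.card_pos.2 ⟨x, hxA⟩
  have tri : ∀ b ∈ B, ∀ a ∈ A, ∀ v ∈ U, G.Adj v b → ¬ G.Adj v a := fun b hb a ha v hv hvb hva =>
    h.no_tri_nb (hBU hb) (hxB b hb) hv (hAU ha) hvb.symm (hAB a ha b hb).symm hva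
  refine ⟨A, hAU, hxA, hyA, hA, hmaxl, ?_⟩
  obtain ⟨b₀, hb₀⟩ := Finset.card_pos.1 (show 0 < B.card by omega)
  set S := A ∪ B with hS
  have memS : ∀ v, v ∈ S ↔ v ∈ A ∨ v ∈ B := fun v => by simp [hS]
  have hS2 : 2 ≤ S.card := by
    rw [← Finset.card_pair (hxB b₀ hb₀).ne]
    refine Finset.card_le_card fun v hv => ?_
    simp only [Finset.mem_insert, Finset.mem_singleton] at hv
    rcases hv with rfl | rfl <;> rw [memS] <;> tauto
  have s := St.mk0 h (S := S) (by simp [hS, hxA]) (Finset.union_subset hAU hBU)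
    (by rw [memS]; tauto) hS2
  have hlossA : ∀ v ∈ U, v ∉ S → (∀ e ∈ B, ¬ G.Adj v e) → (nb G S v).card ≤ A.card - 1 := by
    intro v hv hvS hE
    rw [memS] at hvS
    have : ∃ a ∈ A, ¬ G.Adj v a := by
      by_contra hcon
      push Not at hcon
      exact hvS (Or.inr (mem_cn.2 ⟨hv, fun a ha => (hcon a ha).symm⟩))
    obtain ⟨a, ha, hva⟩ := this
    refine (nb_le (T := A.erase a) fun w hw hvw => ?_).trans
      (by rw [Finset.card_erase_of_mem ha])
    rw [Finset.mem_erase]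
    refine ⟨fun e => hva (e ▸ hvw), ?_⟩
    rcases (memS w).1 hw with hw | hw
    · exact hw
    · exact absurd hvw (hE w hw)
  have key := St.main h s (E := B) (m := A.card) (l := 1) (d := 2) (Or.inr rfl)
    Finset.subset_union_right (hdis x hxA) hA1 ?_ ?_ ?_ ?_
  · by_cases hex : ∃ v ∈ U, G.Adj y v ∧ v ∈ B
    · obtain ⟨b, hb, hyb, hbB⟩ := hex
      left
      intro v hv hyv
      have hvS : v ∈ S := by
        by_contra hvS
        exact key v hv hvS hyv.symm
      rcases (memS v).1 hvS with hvA | hvB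
      · exact absurd (hAB v hvA b hbB) fun e => h.symm.no_tri hv hb hyv hyb e
      · exact hvB
    · push Not at hex
      right
      intro v hv hyv
      have hvS : v ∈ S := by
        by_contra hvS
        exact key v hv hvS hyv.symm
      exact ((memS v).1 hvS).resolve_right (hex v hv hyv)
  · intro v hv hvS hvy
    rw [memS] at hvS
    by_cases hE : ∃ b ∈ B, G.Adj v b
    · obtain ⟨b, hb, hvb⟩ := hE
      refine (Finset.card_le_card fun w hw => ?_).trans (hmaxl v hv hvy (by tauto))
      rw [mem_nb, memS] at hw
      rcases hw.1 with hwA | hwB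
      · exact absurd hw.2 (tri b hb w hwA v hv hvb)
      · exact mem_nb.2 ⟨hwB, hw.2⟩
    · push Not at hE
      refine nb_le fun w hw hvw => ?_
      rcases (memS w).1 hw with hw | hw
      · exact hw
      · exact absurd hvw (hE w hw)
  · intro v hv hvS _ hE
    exact hlossA v hv hvS hE
  · intro F hF hn c hc hcF hcS hN
    have hFS : ∀ v ∈ S, v ∉ F := fun v hv hvF => (s.mem_D (hF hvF)).2.2.1 hv
    have hFN : ∀ v ∈ F, ∀ e ∈ B, ¬ G.Adj v e := by
      intro v hv e he hve
      have heS : e ∈ S := by rw [memS]; tauto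
      rcases hN v hv e (hBU he) (hFS e heS) hve with h' | rfl
      · exact h'.2 he
      · exact hcS heS
    have hN' : ∀ u ∈ F, ∀ w ∈ U, w ∉ F → G.Adj u w → w ∈ A ∨ w = c := by
      intro u hu w hw hwF huw
      rcases hN u hu w hw hwF huw with h' | h'
      · rw [memS] at h'
        tauto
      · exact Or.inr h'
    by_cases h1 : A.card = 1
    · obtain ⟨a, ha⟩ := Finset.card_eq_one.1 h1
      obtain rfl : x = a := by simpa [ha] using hxA
      refine s.exp1 h hF hn hcS fun u hu w hw hwF huw => ?_
      have := hN' u hu w hw hwF huw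
      simpa [ha] using this
    obtain ⟨z, hzA, hzx⟩ := Finset.exists_mem_ne (s := A) (by omega) x
    by_cases h2 : A.card = 2
    · obtain ⟨b₁, hb₁, hne⟩ := Finset.exists_mem_ne (s := B) (by omega) b₀
      have hA2 : ∀ w ∈ A, w = x ∨ w = z := by
        intro w hw
        have : ({x, z} : Finset V) = A := by
          refine Finset.eq_of_subset_of_card_le ?_ (by rw [Finset.card_pair hzx.symm, h2])
          intro v hv
          simp only [Finset.mem_insert, Finset.mem_singleton] at hv
          rcases hv with rfl | rfl <;> assumption
        rw [← this] at hw
        simpa using hw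
      have hbl : ∀ l ∈ B, l ∈ U ∧ l ∉ F ∧ l ≠ x ∧ l ≠ c ∧ l ≠ y ∧ G.Adj z l := by
        intro l hl
        have hlS : l ∈ S := by rw [memS]; tauto
        exact ⟨hBU hl, hFS l hlS, (hxB l hl).ne', fun e => hcS (e ▸ hlS),
          fun e => hyB (e ▸ hl), hAB z hzA l hl⟩
      have hzS : z ∈ S := by rw [memS]; tauto
      have hxS : x ∈ S := by rw [memS]; tauto
      refine h.three_cut (F := F) (z := z) (c := c) (fun v hv => (s.mem_D (hF hv)).1) hn
        (hFS x hxS) (fun hy => (s.mem_D (hF hy)).2.2.2.2.2 rfl) (hFS z hzS) hcF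
        (hAU hzA) hzx (fun e => hyA (e ▸ hzA)) (fun e => hcS (e ▸ hxS)) (fun e => hcS (e ▸ hzS))
        ?_ hne (hbl b₁ hb₁) (hbl b₀ hb₀)
      intro u hu w hw hwF huw
      rcases hN' u hu w hw hwF huw with h' | h'
      · have := hA2 w h'
        tauto
      · tauto
    refine St.sub h s (E := A.erase x) (F := F) (c := c) (m := A.card - 1) (l := 2) (d := 2)
      hF hn hc hcF ?_ (Or.inr rfl) ?_ (by simp) (by omega) ?_ ?_ ?_
    · intro u hu w hw hwF huw
      rw [Finset.mem_erase]
      have := hN' u hu w hw hwF huw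
      tauto
    · exact (Finset.erase_subset _ _).trans Finset.subset_union_left
    · intro v hv
      have := s.mem_D (hF hv)
      exact hlossA v this.1 this.2.2.1 (hFN v hv)
    · intro v hv hE
      refine (nb_le (T := {x}) fun w hw hvw => ?_).trans (by simp; omega)
      rcases (memS w).1 hw with hw | hw
      · by_contra hne
        exact hE w (by simpa [hw] using hne) hvw
      · exact absurd hvw (hFN v hv w hw)
    · intro e he j hj
      rw [Finset.mem_erase] at he
      rw [show 2 + j * 2 = 2 * j + 2 by ring]
      exact (bip_HP j hAB).2 hxA he.2 he.1.symm (by omega) (by omega)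
  · intro e he j hj
    rw [show 1 + j * 2 = 2 * j + 1 by ring]
    exact (bip_HP j hAB).1 hxA he (by omega) (by omega)

/-- The roots have the same neighbours, by comparing the sides found in `big` for `x` and for `y`. -/
lemma twins (h : C0 G U x y k) : ∃ A ⊆ U, x ∈ A ∧ y ∉ A ∧ A.card ≤ (cn G U A).card ∧
    (∀ v ∈ U, v ≠ y → v ∉ A → (nb G (cn G U A) v).card ≤ A.card) ∧
    (∀ v ∈ U, G.Adj x v ↔ G.Adj y v) ∧ ∀ v ∈ U, G.Adj x v → v ∈ cn G U A := by
  obtain ⟨A, hAU, hxA, hyA, hA, hmax, hyN⟩ := h.big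
  obtain ⟨A', hAU', hyA', hxA', hA', -, hxN⟩ := h.symm.big
  refine ⟨A, hAU, hxA, hyA, hA, hmax, ?_⟩
  have h1 : cn G U A ⊆ nb G U x := fun v hv =>
    mem_nb.2 ⟨(mem_cn.1 hv).1, (mem_cn.1 hv).2 x hxA⟩
  have h2 : cn G U A' ⊆ nb G U y := fun v hv =>
    mem_nb.2 ⟨(mem_cn.1 hv).1, (mem_cn.1 hv).2 y hyA'⟩
  have c1 := Finset.card_le_card h1
  have c2 := Finset.card_le_card h2
  have a1 := Finset.card_erase_of_mem hxA
  have a2 := Finset.card_erase_of_mem hyA'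
  have p1 := Finset.card_pos.2 ⟨x, hxA⟩
  have p2 := Finset.card_pos.2 ⟨y, hyA'⟩
  have d1 : (∀ v ∈ U, G.Adj y v → v ∈ A) → (nb G U y).card ≤ (A.erase x).card := by
    intro hyN
    refine nb_le fun w hw hyw => ?_
    exact Finset.mem_erase.2 ⟨fun e => h.nadj (e ▸ hyw).symm, hyN w hw hyw⟩
  have d2 : (∀ v ∈ U, G.Adj x v → v ∈ A') → (nb G U x).card ≤ (A'.erase y).card := by
    intro hxN
    refine nb_le fun w hw hxw => ?_
    exact Finset.mem_erase.2 ⟨h.ne_y hxw, hxN w hw hxw⟩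
  have e1 : (∀ v ∈ U, G.Adj y v → v ∈ cn G U A) → (nb G U y).card ≤ (cn G U A).card := nb_le
  have e2 : (∀ v ∈ U, G.Adj x v → v ∈ cn G U A') → (nb G U x).card ≤ (cn G U A').card := nb_le
  rcases hyN with hyN | hyN
  · rcases hxN with hxN | hxN
    · have f1 : ∀ v ∈ U, G.Adj x v → G.Adj y v := fun v hv hxv => (mem_nb.1 (h2 (hxN v hv hxv))).2
      exact ⟨fun v hv => ⟨f1 v hv, fun hyv => (mem_nb.1 (h1 (hyN v hv hyv))).2⟩,
        fun v hv hxv => hyN v hv (f1 v hv hxv)⟩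
    · have := e1 hyN
      have := d2 hxN
      omega
  · have := d1 hyN
    rcases hxN with hxN | hxN
    · have := e2 hxN
      omega
    · have := d2 hxN
      omega

/-- If the roots are twins with neighbourhood `C` and `A` is completely joined to `C`, then contracting
`{y} ∪ A ∪ (C \ {u})` towards `u` shows that `u` has no neighbour outside these sets. -/
lemma twin_core (h : C0 G U x y k) {A C : Finset V} {u : V} (hAU : A ⊆ U)
    (hxA : x ∉ A) (hyA : y ∉ A) (hC : ∀ v, v ∈ C ↔ v ∈ U ∧ G.Adj x v)
    (hN : ∀ v ∈ U, G.Adj x v ↔ G.Adj y v) (hAC : ∀ a ∈ A, ∀ c ∈ C, G.Adj a c) (hu : u ∈ C)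
    (hm : A.card + 1 ≤ (C.erase u).card)
    (hloss : ∀ v ∈ U, v ≠ x → v ≠ y → v ∉ A → (nb G (C.erase u) v).card ≤ A.card + 1) :
    ∀ v ∈ U, v ≠ x → v ≠ y → v ∉ A → v ∉ C → ¬ G.Adj v u := by
  have hu' := (hC u).1 hu
  have huy := h.ne_y hu'.2
  set P := insert y A with hP
  set Q := C.erase u with hQ
  have hPc : P.card = A.card + 1 := Finset.card_insert_of_notMem hyA
  have hPQ : ∀ p ∈ P, ∀ q ∈ Q, G.Adj p q := by
    intro p hp q hq
    have hq := Finset.mem_of_mem_erase hq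
    rcases Finset.mem_insert.1 hp with rfl | hp
    · exact (hN q ((hC q).1 hq).1).1 ((hC q).1 hq).2
    · exact hAC p hp q hq
  have hdis : ∀ p ∈ P, p ∉ Q := fun p hp hq => (hPQ p hp p hq).ne rfl
  set S := P ∪ Q with hS
  have memS : ∀ w, w ∈ S ↔ (w = y ∨ w ∈ A) ∨ (w ≠ u ∧ w ∈ C) := by intro w; simp [hS, hP, hQ]; tauto
  have huA : u ∉ A := fun e => (hAC u e u hu).ne rfl
  have hxC : x ∉ C := fun e => ((hC x).1 e).2.ne rfl
  have hyC : y ∉ C := fun e => h.nadj ((hC y).1 e).2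
  have hPU : P ⊆ U := Finset.insert_subset h.R.hy hAU
  have hyP : y ∈ P := by simp [hP]
  obtain ⟨q₀, hq₀⟩ := Finset.card_pos.1 (show 0 < Q.card by omega)
  have s := St.twin h (S := S) (q := u) (by simp [hS, hP]) (by
    intro w hw
    rw [memS] at hw
    rw [Finset.mem_erase]
    rcases hw with (rfl | hw) | hw
    · exact ⟨h.R.ne.symm, h.R.hy⟩
    · exact ⟨fun e => hxA (e ▸ hw), hAU hw⟩
    · have := (hC w).1 hw.2
      exact ⟨this.2.ne', this.1⟩) hu'.1 (by rw [memS]; tauto) hu'.2 (by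
    intro w hw hwS hwu hxw
    exact hwS ((memS w).2 (Or.inr ⟨hwu, (hC w).2 ⟨hw, hxw⟩⟩))) (by
    rw [← Finset.card_pair (hPQ y hyP q₀ hq₀).ne]
    refine Finset.card_le_card fun v hv => ?_
    simp only [Finset.mem_insert, Finset.mem_singleton] at hv
    rw [hS, Finset.mem_union]
    rcases hv with rfl | rfl <;> tauto)
  have hout : ∀ v ∈ U.erase x, v ∉ S → v ≠ u → v ∈ U ∧ v ≠ x ∧ v ≠ y ∧ v ∉ A ∧ v ∉ C ∧
      ¬ G.Adj v y := by
    intro v hv hvS hvu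
    rw [Finset.mem_erase] at hv
    rw [memS] at hvS
    have h1 := hN v hv.2
    have h2 := hC v
    rw [G.adj_comm v y]
    tauto
  have tri : ∀ q ∈ Q, ∀ p ∈ P, ∀ v ∈ U, G.Adj v q → ¬ G.Adj v p := fun q hq p hp v hv hvq hvp => by
    have hq' := (hC q).1 (Finset.mem_of_mem_erase hq)
    exact h.no_tri_nb hq'.1 hq'.2 hv (hPU hp) hvq.symm (hPQ p hp q hq).symm hvp
  have key := St.main h.symm s (E := Q) (m := P.card) (l := 1) (d := 2) (Or.inr rfl)
    Finset.subset_union_right (hdis y hyP) (by omega) ?_ ?_ ?_ ?_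
  · intro v hv hvx hvy hvA hvC
    exact key v (by simp [hv, hvx]) (by rw [memS]; tauto)
  · intro v hv hvS hvu
    obtain ⟨hvU, hvx, hvy, hvA, hvC, -⟩ := hout v hv hvS hvu
    by_cases hE : ∃ q ∈ Q, G.Adj v q
    · obtain ⟨q, hq, hvq⟩ := hE
      refine (Finset.card_le_card fun w hw => ?_).trans
        ((hloss v hvU hvx hvy hvA).trans_eq hPc.symm)
      rw [mem_nb, hS, Finset.mem_union] at hw
      rcases hw.1 with hwA | hwB
      · exact absurd hw.2 (tri q hq w hwA v hvU hvq)
      · exact mem_nb.2 ⟨hwB, hw.2⟩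
    · push Not at hE
      refine nb_le fun w hw hvw => ?_
      rcases Finset.mem_union.1 hw with hw | hw
      · exact hw
      · exact absurd hvw (hE w hw)
  · intro v hv hvS hvu hE
    obtain ⟨hvU, hvx, hvy, hvA, hvC, hvy'⟩ := hout v hv hvS hvu
    rw [hPc]
    refine nb_le fun w hw hvw => ?_
    rcases Finset.mem_union.1 hw with hw | hw
    · rcases Finset.mem_insert.1 hw with rfl | hw
      · exact absurd hvw hvy'
      · exact hw
    · exact absurd hvw (hE w hw)
  · intro F hF hn c hc hcF hcS hNF
    have hFS : ∀ v ∈ S, v ∉ F := fun v hv hvF => (s.mem_D (hF hvF)).2.2.1 hv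
    have hFN : ∀ v ∈ F, ∀ e ∈ Q, ¬ G.Adj v e := by
      intro v hv e he hve
      have heS : e ∈ S := by rw [hS, Finset.mem_union]; tauto
      rcases hNF v hv e (s.SU₀ heS) (hFS e heS) hve with h' | rfl
      · exact h'.2 he
      · exact hcS heS
    have hN' : ∀ u ∈ F, ∀ w ∈ U.erase x, w ∉ F → G.Adj u w → w = y ∨ w ∈ A ∨ w = c := by
      intro u hu w hw hwF huw
      rcases hNF u hu w hw hwF huw with h' | h'
      · rw [hS, Finset.mem_union, hP, Finset.mem_insert] at h'
        tauto
      · exact Or.inr (Or.inr h')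
    by_cases h0 : A.card = 0
    · rw [Finset.card_eq_zero] at h0
      refine s.exp1 h.symm hF hn hcS fun u hu w hw hwF huw => ?_
      have := hN' u hu w hw hwF huw
      simpa [h0] using this
    have hFA : ∀ v ∈ F, ∀ w ∈ S, G.Adj v w → w ∈ A := by
      intro v hv w hw hvw
      have hm := s.mem_D (hF hv)
      have := hout v hm.1 hm.2.2.1 hm.2.2.2.1
      rcases Finset.mem_union.1 hw with hw | hw
      · rcases Finset.mem_insert.1 hw with rfl | hw
        · exact absurd hvw this.2.2.2.2.2
        · exact hw
      · exact absurd hvw (hFN v hv w hw)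
    refine St.sub h.symm s (E := A) (F := F) (c := c) (m := A.card) (l := 2) (d := 2)
      hF hn hc hcF hN' (Or.inr rfl) ?_ hyA (by omega) ?_ ?_ ?_
    · exact (Finset.subset_insert _ _).trans Finset.subset_union_left
    · intro v hv
      exact nb_le (hFA v hv)
    · intro v hv hE
      refine (nb_le (T := ∅) fun w hw hvw => ?_).trans (by simp)
      exact absurd hvw (hE w (hFA v hv w hw hvw))
    · intro e he j hj
      rw [show 2 + j * 2 = 2 * j + 2 by ring]
      exact (bip_HP j hPQ).2 hyP (by simp [hP, he]) (fun e' => hyA (e' ▸ he)) (by omega) (by omega)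
  · intro e he j hj
    rw [show 1 + j * 2 = 2 * j + 1 by ring]
    exact (bip_HP j hPQ).1 hyP he (by omega) (by omega)

/-- There is no minimal counterexample. If `|A| < |C|` then the neighbours of a vertex `u ∈ C` all lie in
`A ∪ {y}`, so `|A| ≥ k` and the complete bipartite graph between `A ∪ {y}` and `C` suffices.
If `|A| = |C|`, dropping a vertex `z` of `A` contradicts `twin_core` for `z`. -/
lemma false (h : C0 G U x y k) : False := by
  obtain ⟨A, hAU, hxA, hyA, hA, hmax, hN, hNC⟩ := h.twins
  set C := cn G U A with hCdef
  have hC : ∀ v, v ∈ C ↔ v ∈ U ∧ G.Adj x v := fun v =>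
    ⟨fun hv => ⟨(mem_cn.1 hv).1, (mem_cn.1 hv).2 x hxA⟩, fun hv => hNC v hv.1 hv.2⟩
  have hAC : ∀ a ∈ A, ∀ c ∈ C, G.Adj a c := fun a ha c hc => (mem_cn.1 hc).2 a ha
  have hdis : ∀ a ∈ A, a ∉ C := fun a ha hc => (hAC a ha a hc).ne rfl
  have hxC : x ∉ C := hdis x hxA
  have hyC : y ∉ C := fun e => h.nadj ((hC y).1 e).2
  have hxc := Finset.card_erase_of_mem hxA
  have hA1 := Finset.card_pos.2 ⟨x, hxA⟩
  obtain ⟨u, huU, -, hxu⟩ := h.nb2 h.R.ne.symm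
  obtain ⟨u', huU', huu, hxu'⟩ := h.nb2 hxu.ne'
  have hu : u ∈ C := (hC u).2 ⟨huU, hxu⟩
  have hu' : u' ∈ C := (hC u').2 ⟨huU', hxu'⟩
  have hcu := Finset.card_erase_of_mem hu
  have hC2 : 2 ≤ C.card := by
    rw [← Finset.card_pair huu]
    refine Finset.card_le_card fun v hv => ?_
    simp only [Finset.mem_insert, Finset.mem_singleton] at hv
    rcases hv with rfl | rfl <;> assumption
  by_cases hlt : A.card + 1 ≤ C.card
  · have key := h.twin_core (A := A.erase x) (C := C) (u := u)
      ((Finset.erase_subset _ _).trans hAU) (by simp)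
      (fun e => hyA (Finset.mem_of_mem_erase e)) hC hN
      (fun a ha => hAC a (Finset.mem_of_mem_erase ha)) hu (by omega) (by
        intro v hv hvx hvy hvA
        rw [Finset.mem_erase] at hvA
        refine (Finset.card_le_card fun w hw => ?_).trans
          ((hmax v hv hvy (by tauto)).trans (by omega))
        rw [mem_nb] at hw ⊢
        exact ⟨Finset.mem_of_mem_erase hw.1, hw.2⟩)
    have hk : k ≤ A.card := by
      have h1 := h.deg u huU hxu.ne' (h.ne_y hxu)
      have h2 := nb_le (G := G) (S := U) (T := insert y A) (v := u) (fun w hw huw => by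
        by_contra hne
        rw [Finset.mem_insert] at hne
        refine key w hw (fun e => hne (Or.inr (e ▸ hxA))) (by tauto) (by simp; tauto) ?_ huw.symm
        intro hwC
        exact h.no_tri huU hw hxu ((hC w).1 hwC).2 huw)
      rw [Finset.card_insert_of_notMem hyA] at h2
      omega
    have hP : ∀ p ∈ insert y A, ∀ q ∈ C, G.Adj p q := by
      intro p hp q hq
      rcases Finset.mem_insert.1 hp with rfl | hp
      · exact (hN q ((hC q).1 hq).1).1 ((hC q).1 hq).2
      · exact hAC p hp q hq
    refine h.no ⟨2, 2, Or.inr rfl, le_rfl, fun i hi => ?_⟩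
    rw [show 2 + i * 2 = 2 * i + 2 by ring]
    refine ((bip_HP i hP).2 (x := x) (p := y) (by simp [hxA]) (by simp) h.R.ne (by omega) (by
      rw [Finset.card_insert_of_notMem hyA]; omega)).mono ?_
    exact Finset.union_subset (Finset.insert_subset h.R.hy hAU) fun v hv => ((hC v).1 hv).1
  · obtain ⟨z, hz, hzx⟩ := Finset.exists_mem_ne (s := A) (by omega) x
    have hzE : z ∈ A.erase x := by simp [hz, hzx]
    have hzc := Finset.card_erase_of_mem hzE
    have hsub : (A.erase x).erase z ⊆ A := (Finset.erase_subset _ _).trans (Finset.erase_subset _ _)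
    refine h.twin_core (A := (A.erase x).erase z) (C := C) (u := u) (hsub.trans hAU) (by simp)
      (fun e => hyA (hsub e)) hC hN (fun a ha => hAC a (hsub ha)) hu (by omega) (by
        intro v _ _ _ _
        refine (Finset.card_le_card fun w hw => (mem_nb.1 hw).1).trans (by omega))
      z (hAU hz) hzx (fun e => hyA (e ▸ hz)) (by simp) (hdis z hz) (hAC z hz u hu)

end C0

/-- The path theorem. The edge between the roots is deleted first, so that minimal counterexamples
have nonadjacent roots. -/
theorem t0 (U : Finset V) : T0At U := by
  induction hn : U.card using Nat.strong_induction_on generalizing U with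
  | _ n ih =>
    subst hn
    intro G x y k hk hR hord hdeg
    by_cases h1 : k = 1
    · subst h1
      obtain ⟨u, hu, -, hux, huy, hxu⟩ := hR.exists_nb hord x (Or.inr (Or.inl rfl))
      obtain ⟨n, hn⟩ := hR.reach hu hux
      refine ⟨n + 1, 1, Or.inl rfl, ?_, fun i hi => ?_⟩
      · cases n with
        | zero => exact absurd hn.2 huy
        | succ n => omega
      · obtain rfl : i = 0 := by omega
        exact HP.cons hR.hx hxu hn
    by_cases h2 : k = 2
    · subst h2
      refine t2 U G x y x hR ?_ fun v hv hx hy _ => hdeg v hv hx hy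
      obtain ⟨v, a, b, c⟩ := hord
      exact ⟨v, a, b, c, b⟩
    by_contra hno
    refine C0.false (G := G.deleteEdges {s(x, y)}) (U := U) (x := x) (y := y) (k := k)
      ⟨hR.del, by simp [SimpleGraph.deleteEdges_adj], ?_, hord, by omega,
      fun U' hU' => ih _ hU' U' rfl,
      fun h => hno (h.monoG fun u _ v _ huv => (SimpleGraph.deleteEdges_adj.1 huv).1)⟩
    intro v hv hx hy
    rw [nb_del hx hy]
    exact hdeg v hv hx hy

/-! ### Closing the paths up to cycles -/

lemma HP.walk {G : SimpleGraph V} {n : ℕ} {U : Finset V} {x y : V} (h : HP G n U x y) :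
    ∃ p : G.Walk x y, p.IsPath ∧ p.length = n ∧ ∀ v ∈ p.support, v ∈ U := by
  induction n generalizing U x with
  | zero =>
    obtain ⟨hx, rfl⟩ := h
    exact ⟨.nil, by simp, rfl, by simpa⟩
  | succ n ih =>
    obtain ⟨hx, z, hz, h⟩ := h
    obtain ⟨p, hp, hl, hs⟩ := ih h
    refine ⟨.cons hz p, ?_, by simp [hl], ?_⟩
    · rw [SimpleGraph.Walk.cons_isPath_iff]
      exact ⟨hp, fun hxp => by simpa using hs x hxp⟩
    · intro v hv
      rw [SimpleGraph.Walk.support_cons, List.mem_cons] at hv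
      rcases hv with rfl | hv
      · exact hx
      · exact Finset.mem_of_mem_erase (hs v hv)

/-- A path between the ends of an edge, not using that edge, closes up to a cycle. -/
lemma HP.cycle {G : SimpleGraph V} {n : ℕ} {U : Finset V} {x y : V} (hxy : G.Adj x y)
    (h : HP (G.deleteEdges {s(x, y)}) n U x y) :
    ∃ c : G.Walk y y, c.IsCycle ∧ c.length = n + 1 := by
  obtain ⟨p, hp, hl, -⟩ := h.walk
  have hle : G.deleteEdges {s(x, y)} ≤ G := SimpleGraph.deleteEdges_le _
  refine ⟨.cons hxy.symm (p.mapLe hle), ?_, by simp [hl]⟩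
  rw [SimpleGraph.Walk.cons_isCycle_iff]
  refine ⟨hp.mapLe hle, fun he => ?_⟩
  have he' : s(y, x) ∈ p.edges := by simpa using he
  have := p.edges_subset_edgeSet he'
  simp [Sym2.eq_swap] at this

lemma exists_boundary {G : SimpleGraph V} {s : Set V} (h : (G.induce sᶜ).Connected)
    {F : Finset V} {a b : V} (ha : a ∈ F) (hb : b ∉ F) (has : a ∉ s) (hbs : b ∉ s) :
    ∃ u ∈ F, ∃ w, w ∉ F ∧ w ∉ s ∧ G.Adj u w := by
  obtain ⟨p⟩ := h.preconnected ⟨a, has⟩ ⟨b, hbs⟩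
  obtain ⟨d, -, h1, h2⟩ := p.exists_boundary_dart {v | v.1 ∈ F} ha hb
  exact ⟨d.fst.1, h1, d.snd.1, h2, d.snd.2, d.adj⟩

lemma ThreeConnected.rt [Fintype V] {G : SimpleGraph V} (h : ThreeConnected G) {x y : V}
    (hxy : x ≠ y) : Rt G Finset.univ x y := by
  refine ⟨Finset.mem_univ x, Finset.mem_univ y, hxy, fun F _ hn hx hy c => ?_⟩
  obtain ⟨a, ha⟩ := hn
  by_cases hc : c ∈ F
  · obtain ⟨u, hu, w, hw, -, huw⟩ := exists_boundary (h.2 ∅ (by simp)) ha hx (by simp) (by simp)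
    exact ⟨u, hu, w, Finset.mem_univ w, hw, fun e => hw (e ▸ hc), huw⟩
  · have hac : a ∉ ({c} : Set V) := fun e => hc (Set.mem_singleton_iff.1 e ▸ ha)
    obtain ⟨b, hb, hbc⟩ : ∃ b, b ∉ F ∧ b ∉ ({c} : Set V) := by
      by_cases e : x = c
      · exact ⟨y, hy, fun e' => hxy (e.trans (Set.mem_singleton_iff.1 e').symm)⟩
      · exact ⟨x, hx, e⟩
    obtain ⟨u, hu, w, hw, hwc, huw⟩ := exists_boundary (h.2 {c} (by simp)) ha hb hac hbc
    exact ⟨u, hu, w, Finset.mem_univ w, hw, hwc, huw⟩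

end CyclePf

/-- If `G` is a 3-connected non-bipartite graph with minimum degree at least `k + 1`,
then `G` contains `k` cycles which have consecutive lengths or satisfy the length
condition. -/
theorem k_cycles_of_threeConnected_nonbipartite {V : Type*} [Fintype V]
    (k : ℕ) (hk : 0 < k) (G : SimpleGraph V) [DecidableRel G.Adj]
    (h3 : ThreeConnected G) (hnb : NonBipartite G)
    (hdeg : ∀ v : V, k + 1 ≤ G.degree v) :
    ∃ (v : ℕ → V) (c : ∀ i : ℕ, G.Walk (v i) (v i)),
      (∀ i, 1 ≤ i → i ≤ k → (c i).IsCycle) ∧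
      (ConsecSeq k (fun i => (c i).length) ∨
       LengthSeq k (fun i => (c i).length)) := by
  classical
  have hc4 := h3.1
  obtain ⟨x⟩ : Nonempty V := Fintype.card_pos_iff.1 (by omega)
  obtain ⟨y, hxy⟩ : ∃ y, G.Adj x y := by
    have hx := hdeg x
    exact (G.degree_pos_iff_exists_adj x).1 (by omega)
  have hdeg' : ∀ v, k + 1 ≤ (CyclePf.nb G Finset.univ v).card := by
    intro v
    have e : CyclePf.nb G Finset.univ v = G.neighborFinset v := by
      ext w; simp [CyclePf.mem_nb]
    rw [e]
    exact hdeg v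
  obtain ⟨z, hz⟩ : ∃ z, z ∉ ({x, y} : Finset V) := by
    by_contra! hall
    have := Finset.card_le_card (fun v _ => hall v : (Finset.univ : Finset V) ⊆ {x, y})
    have := Finset.card_le_two (a := x) (b := y)
    simp only [Finset.card_univ] at *
    omega
  simp only [Finset.mem_insert, Finset.mem_singleton, not_or] at hz
  obtain ⟨l, d, hd, hl, hP⟩ := CyclePf.t0 Finset.univ (G.deleteEdges {s(x, y)}) x y k hk
    (CyclePf.ThreeConnected.rt h3 hxy.ne).del ⟨z, Finset.mem_univ z, hz.1, hz.2⟩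
    fun v _ hx hy => by rw [CyclePf.nb_del hx hy]; exact hdeg' v
  choose! C hC hlen using fun i hi => (hP i hi).cycle hxy
  refine ⟨fun _ => y, fun i => C (i - 1), fun i h1 h2 => hC _ (by omega), ?_⟩
  have hlen' : ∀ i, 1 ≤ i → i ≤ k → (C (i - 1)).length = l + (i - 1) * d + 1 :=
    fun i h1 h2 => hlen _ (by omega)
  have first : 2 ≤ (C (1 - 1)).length := by rw [hlen' 1 le_rfl hk]; omega
  have step : ∀ i, 1 ≤ i → i ≤ k - 1 → (C (i + 1 - 1)).length = (C (i - 1)).length + d := by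
    intro i h1 h2
    rw [hlen' i h1 (by omega), hlen' (i + 1) (by omega) (by omega)]
    obtain ⟨j, rfl⟩ : ∃ j, i = j + 1 := ⟨i - 1, by omega⟩
    simp only [Nat.add_sub_cancel]
    ring
  rcases hd with rfl | rfl
  · exact Or.inl ⟨first, step⟩
  · exact Or.inr ⟨first, step⟩
end

section
/- Let k be a positive integer, let (G, x, y) be a 2-connected rooted graph, let H = G[S, T] be an l-core of G with respect to (x, y), and let C be the component of G − V(H) containing y. If l ≥ k, then G contains k paths from x to y satisfying the length condition. -/
/-!
Since `G + xy` is 2-connected, `G - x` is connected, so some path joins `y` to the core while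
avoiding `x`. Cut at its first vertex `a` in `S ∪ T`, it becomes a tail from `a` to `y` meeting the
core only in `a`, and `a ≠ x`. Inside the complete bipartite graph `G[S, T]`, where
`|T| ≥ |S| = l + 1`, paths from `x` to `a` can zigzag as long as unused vertices remain: they have
all lengths `1, 3, …, 2l + 1` if `a ∈ T` (`exists_path_bipartite_odd`), and all lengths
`2, 4, …, 2l` if `a ∈ S` (`exists_path_bipartite_even`). In either case there are at least `l ≥ k`
of them, and appending the tail, of length at least `1`, gives the required paths.
-/

open SimpleGraph

/-- A finite simple graph is 2-connected if it is connected, has at least 3 vertices,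
and remains connected after deleting any single vertex. -/
def TwoConnected {V : Type*} [Fintype V] (G : SimpleGraph V) : Prop :=
  G.Connected ∧ 3 ≤ Fintype.card V ∧
    ∀ v : V, (G.induce ({v}ᶜ : Set V)).Connected

/-- The rooted graph `(G, x, y)` is 2-connected if `x ≠ y` and the graph obtained
from `G` by adding the edge `xy` (when absent) is 2-connected. -/
def RootedTwoConnected {V : Type*} [Fintype V] (G : SimpleGraph V) (x y : V) : Prop :=
  x ≠ y ∧ TwoConnected (G ⊔ SimpleGraph.fromEdgeSet {s(x, y)})

/-- `G[S, T]` is an `l`-core of `G` with respect to `(x, y)`: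
(C1) `G[S, T]` is complete bipartite (with `S`, `T` disjoint) and `|T| ≥ |S| = l + 1 ≥ 2`;
(C2) `x ∈ S` and `y ∉ S ∪ T`;
(C3) `e_G(v, S) ≤ l` for every vertex `v ∉ S ∪ T ∪ {y}`;
(C4) `e_G(v, T \ {v}) ≤ l + 1` for every vertex `v ∉ S ∪ {y}`. -/
def IsCore {V : Type*} [Fintype V] (G : SimpleGraph V) (x y : V) (l : ℕ)
    (S T : Set V) : Prop :=
  Disjoint S T ∧
  (∀ a ∈ S, ∀ b ∈ T, G.Adj a b) ∧
  S.ncard ≤ T.ncard ∧ S.ncard = l + 1 ∧ 2 ≤ S.ncard ∧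
  x ∈ S ∧ y ∉ S ∪ T ∧
  (∀ v : V, v ∉ S ∪ T ∪ {y} → {u ∈ S | G.Adj v u}.ncard ≤ l) ∧
  (∀ v : V, v ∉ S ∪ {y} → {u ∈ T \ {v} | G.Adj v u}.ncard ≤ l + 1)

/-- A walk ending in `A` contains a path from its first vertex in `A` back to its start,
which meets `A` in that vertex only. -/
theorem exists_path_first_hit {V : Type*} {G : SimpleGraph V} (A : Set V) {y t : V}
    (w : G.Walk y t) (ht : t ∈ A) :
    ∃ a ∈ A, ∃ q : G.Walk a y, q.IsPath ∧ (∀ v ∈ q.support, v ∈ w.support) ∧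
      ∀ v ∈ q.support, v ∈ A → v = a := by
  classical
  suffices h : ∃ a ∈ A, ∃ q : G.Walk y a, (∀ v ∈ q.support, v ∈ w.support) ∧
      ∀ v ∈ q.support, v ∈ A → v = a by
    obtain ⟨a, ha, q, h1, h2⟩ := h
    have hsub : ∀ v ∈ q.bypass.reverse.support, v ∈ q.support := fun v hv =>
      q.support_bypass_subset_support (by simpa using hv)
    exact ⟨a, ha, q.bypass.reverse, q.bypass_isPath.reverse, fun v hv => h1 v (hsub v hv),
      fun v hv => h2 v (hsub v hv)⟩
  induction w with
  | nil => exact ⟨_, ht, Walk.nil, by simp, by simp⟩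
  | @cons u v w' h p ih =>
    by_cases hu : u ∈ A
    · exact ⟨u, hu, Walk.nil, by simp, by simp⟩
    · obtain ⟨a, ha, q, h1, h2⟩ := ih ht
      refine ⟨a, ha, Walk.cons h q, ?_, ?_⟩
      · intro z hz
        rw [Walk.support_cons, List.mem_cons] at hz ⊢
        exact hz.imp_right (h1 z)
      · intro z hz hzA
        rw [Walk.support_cons, List.mem_cons] at hz
        rcases hz with rfl | hz
        · exact absurd hzA hu
        · exact h2 z hz hzA

/-- Between opposite sides of a complete bipartite graph there are paths of all odd lengths that
the sizes of the two sides allow. -/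
theorem exists_path_bipartite_odd {V : Type*} [Finite V] {G : SimpleGraph V} (i : ℕ) :
    ∀ (S T : Set V) (x t : V), Disjoint S T → (∀ a ∈ S, ∀ b ∈ T, G.Adj a b) →
      x ∈ S → t ∈ T → i + 1 ≤ S.ncard → i + 1 ≤ T.ncard →
      ∃ p : G.Walk x t, p.IsPath ∧ p.length = 2 * i + 1 ∧ ∀ v ∈ p.support, v ∈ S ∪ T := by
  induction i with
  | zero =>
    intro S T x t _ hadj hx ht _ _
    have hxt := hadj x hx t ht
    refine ⟨Walk.cons hxt Walk.nil, by simp [hxt.ne], by simp, ?_⟩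
    intro v hv
    have hv' : v = x ∨ v = t := by simpa using hv
    rcases hv' with rfl | rfl
    · exact Or.inl hx
    · exact Or.inr ht
  | succ i ih =>
    intro S T x t hd hadj hx ht hS hT
    obtain ⟨s', hs', hsx⟩ := Set.exists_ne_of_one_lt_ncard (s := S) (by omega) x
    obtain ⟨t', ht', htt⟩ := Set.exists_ne_of_one_lt_ncard (s := T) (by omega) t
    have hS' := Set.ncard_sdiff_singleton_add_one hx
    have hT' := Set.ncard_sdiff_singleton_add_one ht'
    -- the detour `x, t', s'` uses up one vertex of each side
    obtain ⟨p, hp, hlen, hsupp⟩ := ih (S \ {x}) (T \ {t'}) s' t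
      (hd.mono Set.sdiff_subset Set.sdiff_subset)
      (fun a ha b hb => hadj a ha.1 b hb.1) ⟨hs', hsx⟩ ⟨ht, htt.symm⟩ (by omega) (by omega)
    have hxT : x ∉ T := Set.disjoint_left.mp hd hx
    have htS : t' ∉ S := Set.disjoint_right.mp hd ht'
    have hxp : x ∉ p.support := fun h => by
      rcases hsupp x h with h | h
      · exact h.2 rfl
      · exact hxT h.1
    have htp : t' ∉ p.support := fun h => by
      rcases hsupp t' h with h | h
      · exact htS h.1
      · exact h.2 rfl
    have hxt' := hadj x hx t' ht'
    refine ⟨Walk.cons hxt' (Walk.cons (hadj s' hs' t' ht').symm p), ?_, ?_, ?_⟩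
    · rw [Walk.cons_isPath_iff, Walk.cons_isPath_iff]
      exact ⟨⟨hp, htp⟩, by simp [hxp, hxt'.ne]⟩
    · simp only [Walk.length_cons]; omega
    · intro v hv
      simp only [Walk.support_cons, List.mem_cons] at hv
      rcases hv with rfl | rfl | hv
      · exact Or.inl hx
      · exact Or.inr ht'
      · exact (hsupp v hv).imp (fun h => h.1) (fun h => h.1)

/-- Between distinct vertices on the same side of a complete bipartite graph there are paths of all
positive even lengths that the sizes of the two sides allow. -/
theorem exists_path_bipartite_even {V : Type*} [Finite V] {G : SimpleGraph V} (i : ℕ)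
    (S T : Set V) (x s : V) (hd : Disjoint S T) (hadj : ∀ a ∈ S, ∀ b ∈ T, G.Adj a b)
    (hx : x ∈ S) (hs : s ∈ S) (hsx : s ≠ x) (hS : i + 2 ≤ S.ncard) (hT : i + 1 ≤ T.ncard) :
    ∃ p : G.Walk x s, p.IsPath ∧ p.length = 2 * i + 2 ∧ ∀ v ∈ p.support, v ∈ S ∪ T := by
  obtain ⟨t, ht⟩ := Set.nonempty_of_ncard_ne_zero (s := T) (by omega)
  have hS' := Set.ncard_sdiff_singleton_add_one hx
  obtain ⟨p, hp, hlen, hsupp⟩ := exists_path_bipartite_odd i T (S \ {x}) t s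
    (hd.symm.mono le_rfl Set.sdiff_subset) (fun a ha b hb => (hadj b hb.1 a ha).symm) ht
    ⟨hs, hsx⟩ hT (by omega)
  have hxp : x ∉ p.support := fun h => by
    rcases hsupp x h with h | h
    · exact Set.disjoint_left.mp hd hx h
    · exact h.2 rfl
  refine ⟨Walk.cons (hadj x hx t ht) p, (Walk.cons_isPath_iff _ _).mpr ⟨hp, hxp⟩, ?_, ?_⟩
  · simp only [Walk.length_cons]; omega
  · intro v hv
    rw [Walk.support_cons, List.mem_cons] at hv
    rcases hv with rfl | hv
    · exact Or.inl hx
    · exact (hsupp v hv).elim Or.inr (fun h => Or.inl h.1)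

theorem isPath_append {V : Type*} {G : SimpleGraph V} {x a y : V} {p : G.Walk x a}
    {q : G.Walk a y} (hp : p.IsPath) (hq : q.IsPath)
    (h : ∀ v ∈ p.support, v ∈ q.support → v = a) : (p.append q).IsPath := by
  rw [Walk.isPath_def, Walk.support_append, List.nodup_append']
  refine ⟨hp.support_nodup, hq.support_nodup.tail, fun v hv hv' => ?_⟩
  obtain rfl := h v hv (List.mem_of_mem_tail hv')
  have := hq.support_nodup
  rw [← Walk.cons_tail_support, List.nodup_cons] at this
  exact this.1 hv'

/-- Deleting a root of a 2-connected rooted graph leaves all other vertices joined by walks: the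
added edge `xy` is lost together with `x`. -/
theorem exists_walk_avoiding_root {V : Type*} [Fintype V] {G : SimpleGraph V} {x y : V}
    (hroot : RootedTwoConnected G x y) (u v : V) (hu : u ≠ x) (hv : v ≠ x) :
    ∃ w : G.Walk u v, x ∉ w.support := by
  obtain ⟨w⟩ := (hroot.2.2.2 x).preconnected ⟨u, hu⟩ ⟨v, hv⟩
  let f : (G ⊔ fromEdgeSet {s(x, y)}).induce ({x}ᶜ : Set V) →g G :=
    { toFun := Subtype.val
      map_rel' := by
        rintro ⟨a, ha⟩ ⟨b, hb⟩ hab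
        have ha' : a ≠ x := ha
        have hb' : b ≠ x := hb
        have : G.Adj a b ∨ (s(a, b) = s(x, y) ∧ a ≠ b) := by simpa using hab
        rcases this with h | ⟨h, _⟩
        · exact h
        · rcases Sym2.eq_iff.mp h with h | h
          · exact absurd h.1 ha'
          · exact absurd h.2 hb' }
  refine ⟨w.map f, fun h => ?_⟩
  rw [Walk.support_map, List.mem_map] at h
  obtain ⟨a, _, ha⟩ := h
  exact a.2 ha

/-- Let `(G, x, y)` be a 2-connected rooted graph and `G[S, T]` an `l`-core of `G`
with respect to `(x, y)`. If `l ≥ k`, then `G` contains `k` paths from `x` to `y`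
satisfying the length condition. -/
theorem k_paths_of_core_large_l {V : Type*} [Fintype V] (k l : ℕ) (hk : 0 < k)
    (G : SimpleGraph V) (x y : V) (S T : Set V)
    (hroot : RootedTwoConnected G x y)
    (hcore : IsCore G x y l S T)
    (hl : k ≤ l) :
    ∃ p : ℕ → G.Walk x y,
      (∀ i, 1 ≤ i → i ≤ k → (p i).IsPath) ∧
      2 ≤ (p 1).length ∧
      (∀ i, 1 ≤ i → i ≤ k - 1 → (p (i + 1)).length = (p i).length + 2) := by
  obtain ⟨hd, hadj, hST, hS, -, hx, hy, -, -⟩ := hcore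
  obtain ⟨t, ht⟩ := Set.nonempty_of_ncard_ne_zero (s := T) (by omega)
  have hxT : x ∉ T := Set.disjoint_left.mp hd hx
  obtain ⟨w, hw⟩ := exists_walk_avoiding_root hroot y t hroot.1.symm (fun h => hxT (h ▸ ht))
  obtain ⟨a, ha, q, hq, hqw, hqA⟩ := exists_path_first_hit (S ∪ T) w (Or.inr ht)
  have hax : a ≠ x := fun h => hw (h ▸ hqw a q.start_mem_support)
  have hq1 : 1 ≤ q.length := by
    rw [Nat.one_le_iff_ne_zero]
    intro h
    exact hy (Walk.eq_of_length_eq_zero h ▸ ha)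
  have key : ∃ c, 1 ≤ c ∧ ∀ i, i < k → ∃ p : G.Walk x a, p.IsPath ∧ p.length = 2 * i + c ∧
      ∀ v ∈ p.support, v ∈ S ∪ T := by
    rcases ha with ha | ha
    · exact ⟨2, by omega, fun i hi => exists_path_bipartite_even i S T x a hd hadj hx ha hax
        (by omega) (by omega)⟩
    · exact ⟨1, le_rfl, fun i hi => exists_path_bipartite_odd i S T x a hd hadj hx ha
        (by omega) (by omega)⟩
  obtain ⟨c, hc, key⟩ := key
  choose P hP hlen hsupp using key
  -- the index is clamped to `[1, k]`, since walks are needed for all natural numbers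
  have hlt (i : ℕ) : min (i - 1) (k - 1) < k := by omega
  refine ⟨fun i => (P _ (hlt i)).append q, fun i _ _ => ?_, ?_, fun i h1 h2 => ?_⟩
  · exact isPath_append (hP _ _) hq (fun v hv hv' => hqA v hv' (hsupp _ _ v hv))
  · simp only [Walk.length_append, hlen]; omega
  · simp only [Walk.length_append, hlen]; omega
end

section
/- Let k be a positive integer, let (G, x, y) be a 2-connected rooted graph, let H = G[S, T] be an l-core of G with respect to (x, y), and let C be the component of G − V(H) containing y. If l = k − 1 and there is at least one edge of G between T and C, then G contains k paths from x to y satisfying the length condition. -/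
/-! Fix an edge `tv` with `t ∈ T` and `v` in the component `C` of `y`. Following it by a path from
`v` to `y` inside `C` gives a path `q` from `t` to `y` that meets `S ∪ T` only in `t`. In the
complete bipartite graph on `S` and `T`, where `|T| ≥ |S| = k`, there is for each `j < k` a path
from `x` to `t` of length `2 * j + 1`, using `j + 1` vertices on each side. Continuing these `k`
paths along `q` gives the required paths; their lengths are `2 * j + 1 + |q|` with `|q| ≥ 1`. -/

open SimpleGraph

/-- `v` lies in the component of `G − W` containing `y`, i.e. `y` and `v` both lie
outside `W` and are joined by a path in the subgraph of `G` induced on `Wᶜ`. -/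
def InCompOf {V : Type*} (G : SimpleGraph V) (W : Set V) (y v : V) : Prop :=
  ∃ (hy : y ∈ Wᶜ) (hv : v ∈ Wᶜ), (G.induce Wᶜ).Reachable ⟨y, hy⟩ ⟨v, hv⟩

/-- A path `q` starting at `t ∈ T` and otherwise avoiding `S ∪ T` can be preceded by a zigzag of
length `2 * j + 1` from `x ∈ S` to `t`, as long as both sides have more than `j` vertices. The
bound on the support lets the induction prepend two new vertices of `S ∪ T` at each step. -/
lemma exists_path_zigzag {V : Type*} [Finite V] (G : SimpleGraph V) {t y : V}
    (q : G.Walk t y) (hq : q.IsPath) (j : ℕ) :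
    ∀ (S T : Set V) (x : V), Disjoint S T → (∀ a ∈ S, ∀ b ∈ T, G.Adj a b) → x ∈ S → t ∈ T →
      j < S.ncard → j < T.ncard → (∀ u ∈ q.support, u ∉ S) →
      (∀ u ∈ q.support, u ∈ T → u = t) →
      ∃ p : G.Walk x y, p.IsPath ∧ p.length = 2 * j + 1 + q.length ∧
        ∀ u ∈ p.support, u ∈ S ∨ u ∈ T ∨ u ∈ q.support := by
  induction j with
  | zero =>
    intro S T x _ hadj hx ht _ _ hqS _
    refine ⟨.cons (hadj x hx t ht) q, ?_, ?_, ?_⟩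
    · exact (Walk.cons_isPath_iff _ _).2 ⟨hq, fun h => hqS x h hx⟩
    · rw [Walk.length_cons]; omega
    · intro u hu
      rw [Walk.support_cons, List.mem_cons] at hu
      rcases hu with rfl | hu
      · exact .inl hx
      · exact .inr (.inr hu)
  | succ j ih =>
    intro S T x hST hadj hx ht hS hT hqS hqT
    obtain ⟨x', hx', hne⟩ := Set.exists_ne_of_one_lt_ncard (by omega : 1 < S.ncard) x
    obtain ⟨t', ht', hte⟩ := Set.exists_ne_of_one_lt_ncard (by omega : 1 < T.ncard) t
    have hS1 := Set.ncard_sdiff_singleton_add_one hx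
    have hT1 := Set.ncard_sdiff_singleton_add_one ht'
    obtain ⟨p, hp, hlen, hsup⟩ := ih (S \ {x}) (T \ {t'}) x'
      (hST.mono Set.sdiff_subset Set.sdiff_subset)
      (fun a ha b hb => hadj a ha.1 b hb.1) ⟨hx', hne⟩ ⟨ht, fun h => hte h.symm⟩
      (by omega) (by omega) (fun u hu h => hqS u hu h.1) (fun u hu h => hqT u hu h.1)
    have hxp : x ∉ p.support := fun h => by
      rcases hsup x h with h | h | h
      · exact h.2 rfl
      · exact Set.disjoint_left.1 hST hx h.1
      · exact hqS x h hx
    have htp : t' ∉ p.support := fun h => by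
      rcases hsup t' h with h | h | h
      · exact Set.disjoint_left.1 hST h.1 ht'
      · exact h.2 rfl
      · exact hte (hqT t' h ht')
    refine ⟨.cons (hadj x hx t' ht') (.cons (hadj x' hx' t' ht').symm p), ?_, ?_, ?_⟩
    · rw [Walk.cons_isPath_iff, Walk.cons_isPath_iff, Walk.support_cons, List.mem_cons, not_or]
      exact ⟨⟨hp, htp⟩, (hadj x hx t' ht').ne, hxp⟩
    · rw [Walk.length_cons, Walk.length_cons]; omega
    · intro u hu
      rw [Walk.support_cons, Walk.support_cons, List.mem_cons, List.mem_cons] at hu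
      rcases hu with rfl | rfl | hu
      · exact .inl hx
      · exact .inr (.inl ht')
      · rcases hsup u hu with h | h | h
        · exact .inl h.1
        · exact .inr (.inl h.1)
        · exact .inr (.inr h)

/-- Let `(G, x, y)` be a 2-connected rooted graph, `G[S, T]` an `l`-core of `G` with
respect to `(x, y)`, and `C` the component of `G − V(H)` containing `y`.
If `l = k − 1` and there is an edge of `G` between `T` and `C`, then `G` contains
`k` paths from `x` to `y` satisfying the length condition. -/
theorem k_paths_of_core_edge_T_C {V : Type*} [Fintype V] (k l : ℕ) (hk : 0 < k)
    (G : SimpleGraph V) (x y : V) (S T : Set V)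
    (hroot : RootedTwoConnected G x y)
    (hcore : IsCore G x y l S T)
    (hl : l = k - 1)
    (hTC : ∃ t ∈ T, ∃ v : V, InCompOf G (S ∪ T) y v ∧ G.Adj t v) :
    ∃ p : ℕ → G.Walk x y,
      (∀ i, 1 ≤ i → i ≤ k → (p i).IsPath) ∧
      2 ≤ (p 1).length ∧
      (∀ i, 1 ≤ i → i ≤ k - 1 → (p (i + 1)).length = (p i).length + 2) := by
  obtain ⟨hST, hadj, hle, hSc, hS2, hxS, -, -, -⟩ := hcore
  obtain ⟨t, ht, v, ⟨hyW, hvW, hreach⟩, htv⟩ := hTC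
  -- `r` runs from `v` to `y` inside the component `C`, and `q` is the edge `tv` followed by `r`.
  obtain ⟨r₀, hr₀⟩ := hreach.symm.exists_isPath
  obtain ⟨r, hr, hrW⟩ : ∃ r : G.Walk v y, r.IsPath ∧ ∀ u ∈ r.support, u ∉ S ∪ T := by
    refine ⟨r₀.map (Embedding.induce (G := G) (S ∪ T)ᶜ).toHom,
      hr₀.map Subtype.val_injective, ?_⟩
    intro u hu
    obtain ⟨w, -, rfl⟩ := List.mem_map.1 ((Walk.support_map _ r₀) ▸ hu :
      u ∈ r₀.support.map (Embedding.induce (G := G) (S ∪ T)ᶜ).toHom)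
    exact w.2
  have hq : (Walk.cons htv r).IsPath :=
    (Walk.cons_isPath_iff _ _).2 ⟨hr, fun h => hrW t h (.inr ht)⟩
  have key : ∀ i, ∃ p : G.Walk x y, 1 ≤ i → i ≤ k →
      p.IsPath ∧ p.length = 2 * (i - 1) + 1 + (r.length + 1) := by
    intro i
    -- Indices outside `1, …, k` are irrelevant and get the first path.
    have hj : ∃ j < k, 1 ≤ i → i ≤ k → j = i - 1 := by
      by_cases h : i - 1 < k
      · exact ⟨i - 1, h, fun _ _ => rfl⟩
      · exact ⟨0, hk, fun _ _ => by omega⟩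
    obtain ⟨j, hjk, hji⟩ := hj
    obtain ⟨p, hp, hlen, -⟩ := exists_path_zigzag G (Walk.cons htv r) hq j S T x hST hadj hxS ht
      (by omega) (by omega)
      (fun u hu h => by
        rw [Walk.support_cons, List.mem_cons] at hu
        rcases hu with rfl | hu
        · exact Set.disjoint_left.1 hST h ht
        · exact hrW u hu (.inl h))
      (fun u hu h => by
        rw [Walk.support_cons, List.mem_cons] at hu
        rcases hu with rfl | hu
        · rfl
        · exact (hrW u hu (.inr h)).elim)
    refine ⟨p, fun h1 h2 => ⟨hp, ?_⟩⟩
    rw [hlen, hji h1 h2, Walk.length_cons]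
  choose p hp using key
  refine ⟨p, fun i h1 h2 => (hp i h1 h2).1, ?_, fun i h1 h2 => ?_⟩
  · rw [(hp 1 le_rfl hk).2]; omega
  · rw [(hp i h1 (by omega)).2, (hp (i + 1) (by omega) (by omega)).2]; omega
end
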